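/- Under the hypotheses of the product-type dimension-reduction theorem (ω ⊂ ℝ² bounded, connected, open with Lipschitz boundary; Ω = ω × (−1/2,1/2); W: ℝ^{3×3} → [0,∞) uniformly continuous with C₁|ξ| − 1/C₁ ≤ W(ξ) ≤ C₂(|ξ|+1), C₁ > 0, C₂ ≥ 1; a ∈ L^∞(Ω) with inf_Ω a > 0 and a(x_α,εx₃) → a₀(x_α) in L^∞(Ω); p ∈ 𝒫_b(Ω), p_ε(x) = p(x_α,εx₃), p_ε → p₀ in L^∞(Ω) with p₀ ∈ 𝒫_b^{log}(ω)), for every sequence εₖ → 0⁺ one has Γ(L¹)-limsup_{k→∞} J_{εₖ} ≤ J; that is, for every u ∈ L¹(Ω;ℝ³) there exists a sequence u_k → u in L¹(Ω;ℝ³) with limsup_{k→∞} J_{εₖ}(u_k) ≤ J(u), where J(u) := ∫_ω a₀(x_α) Q(W₀^{p₀(x_α)})(∇_α u(x_α)) dx_α if u ∈ W^{1,p₀(·)}_0(ω;ℝ³) and +∞ otherwise, with W₀(ξ_α) := inf_{ξ₃∈ℝ³} W(ξ_α,ξ₃) and Q the quasiconvex envelope. -/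

import Mathlib

/-!
The relaxed density is reached through a cell formula. For `q ≥ 1` let `cellZ W q ξ` be the infimum
of `∫_Q W(ξ + ∇φ, β)^q` over smooth periodic planar oscillations `φ` and smooth periodic transverse
columns `β`. Constant columns give `cellZ W q ≤ W₀^q`, and `cellZ W q` is quasiconvex
(`quasiconvexFn_cellZ`), so it lies below `Q(W₀^q)` (`cellZ_le_qcEnvelope`). It is therefore enough
to recover the energy with density `a₀ cellZ W p₀`. That `cellZ W q` is quasiconvex and that it is
recovered both come from the same construction, the insertion of oscillations.

*Insertion of oscillations* (`core_pointwise`, `core`). By the Lindelöf property one sequence of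
pairs `(φₙ, βₙ)` is nearly optimal for all `(q, ξ)` at once. Given a smooth `v`, a nearly optimal
index is selected measurably in `x`; smooth cutoffs `θₙ` replace the indicators of the selection
sets up to a set of small measure. The maps `v + h ∑ θₙ φₙ(x/h + y)` and `∑ θₙ βₙ(x/h + y)` have
energy whose average over the translation `y` is the integral of the cell averages, up to an error
of order `h` in the gradient, so some translation does at least as well (`exists_translate`). No
continuity of the exponent or of the coefficient is used. When `v` has compact support in the cube,
the maps obtained extend periodically and are admissible in the cell formula, which gives its
quasiconvexity.

*Smooth approximation* (`approx_energy`). For log-Hölder exponents mollification converges in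
modular (`tendsto_moll_modular`): Jensen's inequality with the exponent at the centre of the
averaging ball costs a factor which the log-Hölder condition keeps bounded (`moll_modular`). Hence
smooth compactly supported maps are dense in `W^{1,p₀(·)}_0(ω)`. Since `cellZ` is upper
semicontinuous, being an infimum of continuous functions, and has growth of order `p₀`, the reverse
Fatou lemma bounds the limsup of the energies of the approximations.

*Lifting.* For smooth compactly supported `u, b` the map `u(x_α) + ε x₃ b(x_α)` is admissible
(`sobAdm_lift`) and its scaled gradient `(∇_α u + ε x₃ ∇_α b, b)` is bounded and converges to
`(∇_α u, b)`; uniform convergence of `a_ε` and `p_ε` gives convergence of the energies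
(`tendsto_energy_lift`). Chaining the three steps gives recovery up to any `δ > 0`
(`approx_recovery`), and a diagonal selection (`exists_diagonal`) concludes.
-/

open MeasureTheory Filter Topology Set
open scoped ENNReal NNReal

noncomputable section

/-- `ℝ^n` as a Euclidean space. -/
abbrev Euc (n : ℕ) := EuclideanSpace ℝ (Fin n)

/-- `d × n` real matrices (gradients of maps `ℝ^n → ℝ^d`). -/
abbrev Mat (d n : ℕ) := Fin d → Fin n → ℝ

/-- Euclidean (Frobenius) norm of a matrix. -/
def mnorm {d n : ℕ} (ξ : Mat d n) : ℝ := Real.sqrt (∑ i, ∑ j, (ξ i j)^2)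

/-- `G` is a weak (distributional) gradient of `v` on the open set `Ω`. -/
def IsWeakGrad {n d : ℕ} (Ω : Set (Euc n)) (v : Euc n → Euc d) (G : Euc n → Mat d n) : Prop :=
  ∀ φ : Euc n → ℝ, ContDiff ℝ (⊤ : ℕ∞) φ → HasCompactSupport φ → tsupport φ ⊆ Ω →
    ∀ i : Fin d, ∀ j : Fin n,
      ∫ x in Ω, φ x * G x i j = - ∫ x in Ω, (fderiv ℝ φ x (EuclideanSpace.single j 1)) * v x i

/-- Membership in `W^{1,1}(Ω;ℝ^d)` with weak gradient `G`. -/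
def MemW11 {n d : ℕ} (Ω : Set (Euc n)) (v : Euc n → Euc d) (G : Euc n → Mat d n) : Prop :=
  IntegrableOn v Ω ∧ (∀ i j, IntegrableOn (fun x => G x i j) Ω) ∧ IsWeakGrad Ω v G

/-- The open unit cube `(-1/2,1/2)^n`. -/
def unitCube (n : ℕ) : Set (Euc n) := {x | ∀ j, |x j| < 1/2}

/-- Matrix of partial derivatives of a map `ℝ^n → ℝ^d`. -/
def gradMat {n d : ℕ} (φ : Euc n → Euc d) (x : Euc n) : Mat d n :=
  fun i j => fderiv ℝ φ x (EuclideanSpace.single j 1) i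

/-- Quasiconvexity of `g : ℝ^{d×n} → ℝ`. -/
def QuasiconvexFn {d n : ℕ} (g : Mat d n → ℝ) : Prop :=
  ∀ ξ : Mat d n, ∀ φ : Euc n → Euc d, ContDiff ℝ (⊤ : ℕ∞) φ → tsupport φ ⊆ unitCube n →
    g ξ ≤ ∫ x in unitCube n, g (fun i j => ξ i j + gradMat φ x i j)

/-- The quasiconvex envelope: the greatest quasiconvex function below `g`. -/
def qcEnvelope {d n : ℕ} (g : Mat d n → ℝ) (ξ : Mat d n) : ℝ :=
  sSup {t : ℝ | ∃ h : Mat d n → ℝ, QuasiconvexFn h ∧ (∀ η, h η ≤ g η) ∧ t = h ξ}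

/-- The modular `∫_Ω f(x)^{p(x)} dx`, valued in `ℝ≥0∞`. -/
def emod {n : ℕ} (Ω : Set (Euc n)) (p : Euc n → ℝ) (f : Euc n → ℝ) : ℝ≥0∞ :=
  ∫⁻ x in Ω, ENNReal.ofReal (f x ^ p x)

/-- Convergence `p_k → p₀` in `L^∞(Ω)`. -/
def TendstoLinf {n : ℕ} (Ω : Set (Euc n)) (p : ℕ → Euc n → ℝ) (p₀ : Euc n → ℝ) : Prop :=
  Tendsto (fun k => eLpNorm (fun x => p k x - p₀ x) ⊤ (volume.restrict Ω)) atTop (nhds 0)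

/-- Convergence `p_k → p₀` in `L¹(Ω)`. -/
def TendstoL1 {n : ℕ} (Ω : Set (Euc n)) (p : ℕ → Euc n → ℝ) (p₀ : Euc n → ℝ) : Prop :=
  Tendsto (fun k => ∫⁻ x in Ω, ENNReal.ofReal |p k x - p₀ x|) atTop (nhds 0)

/-- Strong `L¹(Ω;ℝ^d)` convergence of vector valued maps. -/
def TendstoL1V {n d : ℕ} (Ω : Set (Euc n)) (v : ℕ → Euc n → Euc d) (v₀ : Euc n → Euc d) : Prop :=
  Tendsto (fun k => ∫⁻ x in Ω, ENNReal.ofReal ‖v k x - v₀ x‖) atTop (nhds 0)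

/-- Weak `L¹(Ω;ℝ^d)` convergence (testing against bounded measurable functions). -/
def WeakL1Tendsto {n d : ℕ} (Ω : Set (Euc n)) (v : ℕ → Euc n → Euc d) (v₀ : Euc n → Euc d) : Prop :=
  ∀ g : Euc n → ℝ, Measurable g → (∃ M, ∀ x, |g x| ≤ M) →
    ∀ i : Fin d, Tendsto (fun k => ∫ x in Ω, g x * v k x i) atTop (nhds (∫ x in Ω, g x * v₀ x i))

/-- Weak `L^r(A)` convergence of scalar functions (testing against `L^{r'}` functions). -/
def WeakLrTendsto {n : ℕ} (A : Set (Euc n)) (r : ℝ) (F : ℕ → Euc n → ℝ) (F₀ : Euc n → ℝ) : Prop :=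
  ∀ g : Euc n → ℝ, Measurable g → (∫⁻ x in A, ENNReal.ofReal (|g x| ^ (r / (r - 1)))) < ⊤ →
    Tendsto (fun k => ∫ x in A, g x * F k x) atTop (nhds (∫ x in A, g x * F₀ x))

/-- The class `𝒫_b(Ω)`: measurable exponents with `1 < p⁻ ≤ p⁺ < ∞`. -/
def IsPb {n : ℕ} (Ω : Set (Euc n)) (p : Euc n → ℝ) : Prop :=
  Measurable p ∧ ∃ pm pM : ℝ, 1 < pm ∧ ∀ᵐ x ∂(volume.restrict Ω), pm ≤ p x ∧ p x ≤ pM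

/-- log-Hölder continuity on `A`. -/
def LogHolder {n : ℕ} (A : Set (Euc n)) (p : Euc n → ℝ) : Prop :=
  ∃ γ > 0, ∀ x ∈ A, ∀ y ∈ A, 0 < dist x y → dist x y < 1/2 →
    |p x - p y| ≤ γ / |Real.log (dist x y)|

/-- The class `𝒫_b^{log}(A)`. -/
def IsPbLog {n : ℕ} (A : Set (Euc n)) (p : Euc n → ℝ) : Prop := IsPb A p ∧ LogHolder A p

/-- `p₀ ∈ L^∞(Ω)`. -/
def MemLinf {n : ℕ} (Ω : Set (Euc n)) (p : Euc n → ℝ) : Prop :=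
  Measurable p ∧ ∃ M : ℝ, ∀ᵐ x ∂(volume.restrict Ω), |p x| ≤ M

/-- Update the `i`-th coordinate of a point of `ℝ^n`. -/
def updCoord {n : ℕ} (y : Euc n) (i : Fin n) (t : ℝ) : Euc n :=
  (WithLp.equiv 2 _).symm (Function.update ((WithLp.equiv 2 _) y) i t)

/-- `s` has Lipschitz boundary: near every boundary point, in suitable orthonormal
coordinates, `s` is the open region above the graph of a Lipschitz function. -/
def HasLipschitzBoundary {n : ℕ} (s : Set (Euc n)) : Prop :=
  ∀ x ∈ frontier s, ∃ U : Set (Euc n), IsOpen U ∧ x ∈ U ∧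
    ∃ (e : Euc n ≃ₗᵢ[ℝ] Euc n) (i₀ : Fin n) (f : Euc n → ℝ) (K : NNReal),
      LipschitzWith K f ∧ (∀ y t, f (updCoord y i₀ t) = f y) ∧
      s ∩ U = {y ∈ U | f (e y) < e y i₀}

/-- `A` compactly contained in `Ω`. -/
def CompactlyIn {n : ℕ} (A Ω : Set (Euc n)) : Prop :=
  IsOpen A ∧ IsCompact (closure A) ∧ closure A ⊆ Ω

/-- Weak `L¹(Ω)` convergence of scalar functions. -/
def WeakL1TendstoS {n : ℕ} (Ω : Set (Euc n)) (F : ℕ → Euc n → ℝ) (F₀ : Euc n → ℝ) : Prop :=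
  ∀ g : Euc n → ℝ, Measurable g → (∃ M, ∀ x, |g x| ≤ M) →
    Tendsto (fun k => ∫ x in Ω, g x * F k x) atTop (nhds (∫ x in Ω, g x * F₀ x))

/-- Strong (modular) convergence in the variable exponent space `L^{q(·)}(Ω;ℝ^d)`. -/
def TendstoModular {n d : ℕ} (Ω : Set (Euc n)) (q : Euc n → ℝ)
    (us : ℕ → Euc n → Euc d) (u : Euc n → Euc d) : Prop :=
  Tendsto (fun k => ∫⁻ x in Ω, ENNReal.ofReal (‖us k x - u x‖ ^ q x)) atTop (nhds 0)
/-- Planar projection `x ↦ x_α = (x₁,x₂)`. -/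
def projα (x : Euc 3) : Euc 2 := (WithLp.equiv 2 _).symm ![x 0, x 1]

/-- Embed `(x_α, y) ∈ ℝ² × ℝ` into `ℝ³`. -/
def embed3 (xα : Euc 2) (y : ℝ) : Euc 3 := (WithLp.equiv 2 _).symm ![xα 0, xα 1, y]

/-- The rescaled thin domain `Ω = ω × (-1/2,1/2)`. -/
def thinDomain (ω : Set (Euc 2)) : Set (Euc 3) :=
  {x | projα x ∈ ω ∧ x 2 ∈ Set.Ioo (-(1/2) : ℝ) (1/2)}

/-- The lateral boundary `∂_L Ω = ∂ω × (-1/2,1/2)`. -/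
def latBoundary (ω : Set (Euc 2)) : Set (Euc 3) :=
  {x | projα x ∈ frontier ω ∧ x 2 ∈ Set.Ioo (-(1/2) : ℝ) (1/2)}

/-- The rescaling `x ↦ (x_α, ε x₃)`. -/
def scaleX (ε : ℝ) (x : Euc 3) : Euc 3 := updCoord x 2 (ε * x 2)

/-- Divide the third column of a `3×3` matrix by `ε` (the scaled gradient `(∇_α u, ε⁻¹∇₃u)`). -/
def scaleCol (ε : ℝ) (ξ : Mat 3 3) : Mat 3 3 := fun i j => if j = 2 then ξ i j / ε else ξ i j

/-- Assemble `ξ = (ξ_α, ξ₃) ∈ ℝ^{3×3}` from `ξ_α ∈ ℝ^{3×2}` and `ξ₃ ∈ ℝ³`. -/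
def joinCols (ξα : Mat 3 2) (ξ₃ : Fin 3 → ℝ) : Mat 3 3 :=
  fun i j => if h : (j : ℕ) < 2 then ξα i ⟨j, h⟩ else ξ₃ i

/-- `f₀(x_α,y,q,ξ_α) = inf_{ξ₃ ∈ ℝ³} f(x_α,y,q,(ξ_α,ξ₃))`. -/
def finf (f : Euc 2 → ℝ → ℝ → Mat 3 3 → ℝ) (xα : Euc 2) (y q : ℝ) (ξα : Mat 3 2) : ℝ :=
  ⨅ ξ₃ : Fin 3 → ℝ, f xα y q (joinCols ξα ξ₃)

/-- `p⁻ = ess inf_Ω p`. -/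
def pminus (ω : Set (Euc 2)) (p : Euc 3 → ℝ) : ℝ := essInf p (volume.restrict (thinDomain ω))

/-- Membership in `W^{1,r}_{0,∂_LΩ}(Ω;ℝ³)`: closure in `W^{1,r}(Ω)` of
`W^{1,r}_loc(ℝ³;ℝ³)` maps vanishing in a neighbourhood of the lateral boundary. -/
def MemLatZero (ω : Set (Euc 2)) (r : ℝ) (u : Euc 3 → Euc 3) (G : Euc 3 → Mat 3 3) : Prop :=
  ∃ (w : ℕ → Euc 3 → Euc 3) (Gw : ℕ → Euc 3 → Mat 3 3),
    (∀ j, IsWeakGrad Set.univ (w j) (Gw j)) ∧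
    (∀ j, LocallyIntegrable (w j) volume) ∧
    (∀ j, ∀ i l, LocallyIntegrable (fun x => Gw j x i l) volume) ∧
    (∀ j, ∃ V : Set (Euc 3), IsOpen V ∧ latBoundary ω ⊆ V ∧ ∀ x ∈ V, w j x = 0) ∧
    Tendsto (fun j => (∫⁻ x in thinDomain ω, (ENNReal.ofReal (‖w j x - u x‖ ^ r)
        + ENNReal.ofReal (mnorm (fun i l => Gw j x i l - G x i l) ^ r)))) atTop (nhds 0)

/-- `u` belongs to `W^{1,p_ε(·)}_L(Ω;ℝ³) = W^{1,p⁻}_{0,∂_LΩ}(Ω;ℝ³) ∩ W^{1,p_ε(·)}(Ω;ℝ³)`,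
with weak gradient `G`. -/
def SobAdm (ω : Set (Euc 2)) (p : Euc 3 → ℝ) (ε : ℝ) (u : Euc 3 → Euc 3)
    (G : Euc 3 → Mat 3 3) : Prop :=
  AEStronglyMeasurable u (volume.restrict (thinDomain ω)) ∧
  (∀ i j, AEMeasurable (fun x => G x i j) (volume.restrict (thinDomain ω))) ∧
  IsWeakGrad (thinDomain ω) u G ∧
  MemLatZero ω (pminus ω p) u G ∧
  emod (thinDomain ω) (fun x => p (scaleX ε x)) (fun x => ‖u x‖) < ⊤ ∧
  emod (thinDomain ω) (fun x => p (scaleX ε x)) (fun x => mnorm (G x)) < ⊤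

/-- The clamped thin-film functional
`F_ε(u) = ∫_Ω f(x_α, εx₃, p_ε(x), ∇_α u, ε⁻¹ ∇₃ u) dx` on `W^{1,p_ε(·)}_L(Ω;ℝ³)`,
`+∞` otherwise; encoded through the (a.e. unique) weak gradient. -/
def Feps (ω : Set (Euc 2)) (p : Euc 3 → ℝ)
    (f : Euc 2 → ℝ → ℝ → Mat 3 3 → ℝ) (ε : ℝ) (u : Euc 3 → Euc 3) : ℝ≥0∞ :=
  ⨅ (G : Euc 3 → Mat 3 3) (_ : SobAdm ω p ε u G),
    ∫⁻ x in thinDomain ω, ENNReal.ofReal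
      (f (projα x) (ε * x 2) (p (scaleX ε x)) (scaleCol ε (G x)))

/-- Membership in `W^{1,q(·)}(ω;ℝ³)` for the planar domain, with weak gradient `Gv`. -/
def MemW1pPlanar (ω : Set (Euc 2)) (q : Euc 2 → ℝ) (v : Euc 2 → Euc 3)
    (Gv : Euc 2 → Mat 3 2) : Prop :=
  AEStronglyMeasurable v (volume.restrict ω) ∧
  (∀ i j, AEMeasurable (fun x => Gv x i j) (volume.restrict ω)) ∧
  IsWeakGrad ω v Gv ∧
  emod ω q (fun x => ‖v x‖) < ⊤ ∧ emod ω q (fun x => mnorm (Gv x)) < ⊤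

/-- Membership in `W^{1,q(·)}_0(ω;ℝ³)`: closure in `W^{1,q(·)}(ω)` of compactly
supported Sobolev functions. -/
def MemW1p0Planar (ω : Set (Euc 2)) (q : Euc 2 → ℝ) (v : Euc 2 → Euc 3)
    (Gv : Euc 2 → Mat 3 2) : Prop :=
  MemW1pPlanar ω q v Gv ∧
  ∃ (w : ℕ → Euc 2 → Euc 3) (Gw : ℕ → Euc 2 → Mat 3 2),
    (∀ j, MemW1pPlanar ω q (w j) (Gw j) ∧ HasCompactSupport (w j) ∧ tsupport (w j) ⊆ ω) ∧
    Tendsto (fun j => ∫⁻ x in ω, (ENNReal.ofReal (‖w j x - v x‖ ^ q x)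
        + ENNReal.ofReal (mnorm (fun i l => Gw j x i l - Gv x i l) ^ q x))) atTop (nhds 0)

/-- The limiting planar functional with density `g`, on `W^{1,q(·)}_0(ω;ℝ³)`
(identified with `x₃`-independent maps on `Ω`), `+∞` otherwise in `L¹(Ω;ℝ³)`. -/
def limFun (ω : Set (Euc 2)) (q : Euc 2 → ℝ) (g : Euc 2 → Mat 3 2 → ℝ)
    (u : Euc 3 → Euc 3) : ℝ≥0∞ :=
  ⨅ (v : Euc 2 → Euc 3) (Gv : Euc 2 → Mat 3 2)
    (_ : MemW1p0Planar ω q v Gv ∧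
         ∀ᵐ x ∂(volume.restrict (thinDomain ω)), u x = v (projα x)),
    ∫⁻ xα in ω, ENNReal.ofReal (g xα (Gv xα))

/-- `p_ε → p₀` (as functions on `Ω`, `p₀` planar) in `L¹(Ω)` as `ε → 0⁺`. -/
def ScaledTendstoL1 (ω : Set (Euc 2)) (p : Euc 3 → ℝ) (p₀ : Euc 2 → ℝ) : Prop :=
  Tendsto (fun ε : ℝ => ∫⁻ x in thinDomain ω, ENNReal.ofReal |p (scaleX ε x) - p₀ (projα x)|)
    (nhdsWithin 0 (Set.Ioi 0)) (nhds 0)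

/-- `p_ε → p₀` in `L^∞(Ω)` as `ε → 0⁺`. -/
def ScaledTendstoLinf (ω : Set (Euc 2)) (p : Euc 3 → ℝ) (p₀ : Euc 2 → ℝ) : Prop :=
  Tendsto (fun ε : ℝ =>
      eLpNorm (fun x => p (scaleX ε x) - p₀ (projα x)) ⊤ (volume.restrict (thinDomain ω)))
    (nhdsWithin 0 (Set.Ioi 0)) (nhds 0)

/-! ### Matrix norms and periodic functions -/

theorem abs_entry_le_mnorm {d n : ℕ} (ξ : Mat d n) (i : Fin d) (j : Fin n) :
    |ξ i j| ≤ mnorm ξ := by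
  rw [← Real.sqrt_sq_eq_abs]
  apply Real.sqrt_le_sqrt
  calc (ξ i j)^2 ≤ ∑ l, (ξ i l)^2 :=
        Finset.single_le_sum (f := fun l => (ξ i l)^2) (fun l _ => sq_nonneg _) (Finset.mem_univ j)
    _ ≤ ∑ i, ∑ l, (ξ i l)^2 :=
        Finset.single_le_sum (f := fun i => ∑ l, (ξ i l)^2)
          (fun l _ => Finset.sum_nonneg fun _ _ => sq_nonneg _) (Finset.mem_univ i)

theorem mnorm_nonneg {d n : ℕ} (ξ : Mat d n) : 0 ≤ mnorm ξ := Real.sqrt_nonneg _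

theorem norm_le_mnorm {d n : ℕ} (ξ : Mat d n) : ‖ξ‖ ≤ mnorm ξ :=
  (pi_norm_le_iff_of_nonneg (mnorm_nonneg _)).2 fun i =>
    (pi_norm_le_iff_of_nonneg (mnorm_nonneg _)).2 fun j => abs_entry_le_mnorm ξ i j

theorem mnorm_le_sum {d n : ℕ} (ξ : Mat d n) : mnorm ξ ≤ ∑ i, ∑ j, |ξ i j| := by
  apply Real.sqrt_le_iff.2 ⟨Finset.sum_nonneg fun _ _ => Finset.sum_nonneg fun _ _ => abs_nonneg _, ?_⟩
  have h1 : ∀ i, ∑ j, (ξ i j)^2 ≤ (∑ j, |ξ i j|)^2 := fun i => by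
    simpa using Finset.sum_sq_le_sq_sum_of_nonneg (s := Finset.univ) (f := fun j => |ξ i j|)
      (fun _ _ => abs_nonneg _)
  refine (Finset.sum_le_sum fun i _ => h1 i).trans ?_
  exact Finset.sum_sq_le_sq_sum_of_nonneg
    (fun _ _ => Finset.sum_nonneg fun _ _ => abs_nonneg _)

theorem continuous_mnorm {d n : ℕ} : Continuous (mnorm : Mat d n → ℝ) := by
  unfold mnorm; fun_prop

/-- `f` is `ℤⁿ`-periodic. -/
def IsPer {n : ℕ} {E : Type*} (f : Euc n → E) : Prop :=
  ∀ j x, f (x + EuclideanSpace.single j 1) = f x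

/-- Coordinate hyperplanes are null sets. -/
theorem volume_hyperplane (n : ℕ) (j : Fin n) (c : ℝ) :
    volume {x : Euc n | x j = c} = 0 := by
  have h := (PiLp.volume_preserving_ofLp (Fin n)).measure_preimage
    (s := {x : Fin n → ℝ | x j = c})
    (measurableSet_eq_fun (measurable_pi_apply j) measurable_const).nullMeasurableSet
  have h2 : volume {x : Fin n → ℝ | x j = c} = 0 := by
    have := Measure.pi_hyperplane (fun _ : Fin n => (volume : Measure ℝ)) j c
    simpa [volume_pi] using this
  rw [h2] at h
  exact h

theorem isOpen_unitCube (n : ℕ) : IsOpen (unitCube n) := by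
  have : unitCube n = ⋂ j, {x : Euc n | |x j| < 1/2} := by ext x; simp [unitCube]
  rw [this]
  exact isOpen_iInter_of_finite fun j => isOpen_lt (by fun_prop) continuous_const

/-- The closed unit cube, which differs from the open one by a null set. -/
def closedCube (n : ℕ) : Set (Euc n) := {x | ∀ j, |x j| ≤ 1/2}

theorem isCompact_closedCube (n : ℕ) : IsCompact (closedCube n) := by
  apply Metric.isCompact_of_isClosed_isBounded
  · have : closedCube n = ⋂ j, {x : Euc n | |x j| ≤ 1/2} := by ext x; simp [closedCube]
    rw [this]
    exact isClosed_iInter fun j => isClosed_le (by fun_prop) continuous_const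
  · refine (Metric.isBounded_closedBall (x := (0 : Euc n)) (r := √(∑ _j : Fin n, (1/2)^2))).subset ?_
    intro x hx
    rw [mem_closedBall_zero_iff, EuclideanSpace.norm_eq]
    refine Real.sqrt_le_sqrt (Finset.sum_le_sum fun j _ => ?_)
    exact pow_le_pow_left₀ (norm_nonneg _) (hx j) 2

theorem unitCube_subset_closedCube (n : ℕ) : unitCube n ⊆ closedCube n := fun _ hx j => (hx j).le

theorem ae_coord_ne (n : ℕ) : ∀ᵐ x : Euc n, ∀ j, x j ≠ 1/2 ∧ x j ≠ -(1/2) := by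
  rw [ae_all_iff]; intro j
  have h1 := volume_hyperplane n j (1/2)
  have h2 := volume_hyperplane n j (-(1/2))
  rw [measure_eq_zero_iff_ae_notMem] at h1 h2
  filter_upwards [h1, h2] with x a b using ⟨a, b⟩

theorem unitCube_ae_eq_closedCube (n : ℕ) : (unitCube n : Set (Euc n)) =ᵐ[volume] closedCube n := by
  filter_upwards [ae_coord_ne n] with x hx
  apply propext
  constructor
  · exact fun h => unitCube_subset_closedCube n h
  · intro h j
    refine lt_of_le_of_ne (h j) fun h' => ?_
    rcases eq_or_eq_neg_of_abs_eq h' with h'' | h''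
    · exact (hx j).1 h''
    · exact (hx j).2 h''

theorem IsPer.span {n : ℕ} {E : Type*} {f : Euc n → E} (hf : IsPer f) {z : Euc n}
    (hz : z ∈ Submodule.span ℤ (range (EuclideanSpace.basisFun (Fin n) ℝ).toBasis)) (x : Euc n) :
    f (x + z) = f x := by
  induction hz using Submodule.span_induction generalizing x with
  | mem z hz =>
    obtain ⟨j, rfl⟩ := hz
    simpa using hf j x
  | zero => simp
  | add a b _ _ ha hb => rw [← add_assoc, hb, ha]
  | smul m a _ ha =>
    have hneg : ∀ x, f (x - a) = f x := fun x => by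
      rw [← ha (x - a), sub_add_cancel]
    induction m using Int.induction_on generalizing x with
    | zero => simp
    | succ i ih => rw [add_smul, one_smul, ← add_assoc, ha, ih]
    | pred i ih => rw [sub_smul, one_smul, add_sub_assoc', hneg, ih]

open scoped Pointwise in
theorem lintegral_fd_per {n : ℕ} (f : Euc n → ℝ≥0∞) (hf : IsPer f) (c : Euc n) :
    ∫⁻ y in ZSpan.fundamentalDomain (EuclideanSpace.basisFun (Fin n) ℝ).toBasis, f (c + y) =
    ∫⁻ y in ZSpan.fundamentalDomain (EuclideanSpace.basisFun (Fin n) ℝ).toBasis, f y := by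
  set b := (EuclideanSpace.basisFun (Fin n) ℝ).toBasis
  have h1 := ZSpan.isAddFundamentalDomain b (volume : Measure (Euc n))
  have : VAddInvariantMeasure (Submodule.span ℤ (range b)) (Euc n) volume :=
    ⟨fun g s _ => measure_preimage_add volume (g : Euc n) s⟩
  have h2 : IsAddFundamentalDomain (Submodule.span ℤ (range b)) (c +ᵥ ZSpan.fundamentalDomain b)
    (volume : Measure (Euc n)) := h1.vadd_of_comm c
  have hper : ∀ (g : Submodule.span ℤ (range b)) (x : Euc n), f (g +ᵥ x) = f x := by
    intro g x
    rw [Submodule.vadd_def, vadd_eq_add, add_comm]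
    exact hf.span g.2 x
  rw [← h2.setLIntegral_eq h1 f hper]
  have := (measurePreserving_add_left (volume : Measure (Euc n)) c).setLIntegral_comp_preimage_emb
    (MeasurableEquiv.addLeft c).measurableEmbedding f (c +ᵥ ZSpan.fundamentalDomain b)
  rw [← this]
  congr 2
  ext x
  simp [Set.mem_vadd_set]

/-- The integral of a periodic function over a translated unit cube does not depend on the
translation. -/
theorem lintegral_unitCube_per {n : ℕ} (f : Euc n → ℝ≥0∞) (hf : IsPer f) (c : Euc n) :
    ∫⁻ y in unitCube n, f (c + y) = ∫⁻ y in unitCube n, f y := by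
  set b := (EuclideanSpace.basisFun (Fin n) ℝ).toBasis
  set h : Euc n := WithLp.toLp 2 (fun _ => (1/2 : ℝ))
  have key : ∀ g : Euc n → ℝ≥0∞, ∫⁻ y in unitCube n, g y =
      ∫⁻ y in ZSpan.fundamentalDomain b, g (-h + y) := by
    intro g
    have := (measurePreserving_add_left (volume : Measure (Euc n)) (-h)).setLIntegral_comp_preimage_emb
      (MeasurableEquiv.addLeft (-h)).measurableEmbedding g
        {x : Euc n | ∀ j, -(1/2) ≤ x j ∧ x j < 1/2}
    have e : (fun x => -h + x) ⁻¹' {x : Euc n | ∀ j, -(1/2) ≤ x j ∧ x j < 1/2} =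
        ZSpan.fundamentalDomain b := by
      ext x
      simp only [mem_preimage, mem_ofPred_eq, ZSpan.mem_fundamentalDomain, b, h]
      refine forall_congr' fun j => ?_
      simp only [PiLp.add_apply, PiLp.neg_apply, OrthonormalBasis.coe_toBasis_repr_apply,
        EuclideanSpace.basisFun_repr, mem_Ico]
      constructor <;> rintro ⟨h1, h2⟩ <;> constructor <;> linarith
    rw [e] at this
    rw [this]
    apply setLIntegral_congr
    filter_upwards [ae_coord_ne n] with x hx
    apply propext
    constructor
    · exact fun hh j => ⟨(abs_lt.1 (hh j)).1.le, (abs_lt.1 (hh j)).2⟩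
    · exact fun hh j => abs_lt.2 ⟨lt_of_le_of_ne (hh j).1 (hx j).2.symm, (hh j).2⟩
  rw [key, key]
  simp_rw [← add_assoc]
  rw [lintegral_fd_per f hf, lintegral_fd_per f hf]

theorem volume_unitCube (n : ℕ) : volume (unitCube n) = 1 := by
  have h := (PiLp.volume_preserving_ofLp (Fin n)).measure_preimage
    (s := Set.univ.pi fun _ => Ioo (-(1/2):ℝ) (1/2))
    (MeasurableSet.univ_pi fun _ => measurableSet_Ioo).nullMeasurableSet
  have e : (@WithLp.ofLp 2 (Fin n → ℝ)) ⁻¹' (Set.univ.pi fun _ => Ioo (-(1/2):ℝ) (1/2)) =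
    unitCube n := by
    ext x; simp [unitCube, abs_lt]
  rw [e] at h
  rw [h, volume_pi_pi]
  simp [Real.volume_Ioo]
  norm_num

/-! ### The thin domain and the planar projection -/

@[simp] theorem projα_zero (x : Euc 3) : projα x 0 = x 0 := rfl
@[simp] theorem projα_one (x : Euc 3) : projα x 1 = x 1 := rfl

theorem embed3_projα (ε : ℝ) (x : Euc 3) : embed3 (projα x) (ε * x 2) = scaleX ε x := by
  ext i
  fin_cases i <;> simp [embed3, scaleX, updCoord, projα]

theorem scaleX_apply (ε : ℝ) (x : Euc 3) :
    scaleX ε x 0 = x 0 ∧ scaleX ε x 1 = x 1 ∧ scaleX ε x 2 = ε * x 2 := by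
  refine ⟨?_, ?_, ?_⟩ <;> simp [scaleX, updCoord]

theorem scaleX_mem {ω : Set (Euc 2)} {ε : ℝ} (h0 : 0 < ε) (h1 : ε ≤ 1) {x : Euc 3}
    (hx : x ∈ thinDomain ω) : scaleX ε x ∈ thinDomain ω := by
  obtain ⟨a, b, c⟩ := scaleX_apply ε x
  refine ⟨?_, ?_⟩
  · have : projα (scaleX ε x) = projα x := by
      ext i; fin_cases i <;> simp [a, b]
    rw [this]; exact hx.1
  · rw [c]
    have := hx.2
    simp only [mem_Ioo] at this ⊢
    constructor <;> nlinarith [this.1, this.2]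

/-- The planar projection `x ↦ x_α` as a continuous linear map. -/
def projL : Euc 3 →L[ℝ] Euc 2 :=
  LinearMap.toContinuousLinearMap
    { toFun := projα
      map_add' := fun x y => by ext i; fin_cases i <;> simp
      map_smul' := fun c x => by ext i; fin_cases i <;> simp }

theorem projL_apply (x : Euc 3) : projL x = projα x := rfl

theorem continuous_projα : Continuous projα := projL.continuous

theorem continuous_scaleX (ε : ℝ) : Continuous (scaleX ε) := by
  have : scaleX ε = fun x => embed3 (projα x) (ε * x 2) := by
    ext1 x; rw [embed3_projα]
  rw [this]
  unfold embed3
  refine (PiLp.continuous_toLp 2 _).comp ?_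
  refine continuous_pi fun i => ?_
  fin_cases i <;> simp <;> fun_prop

theorem isOpen_thinDomain {ω : Set (Euc 2)} (h : IsOpen ω) : IsOpen (thinDomain ω) := by
  apply IsOpen.inter (h.preimage continuous_projα)
  exact isOpen_Ioo.preimage (f := fun x : Euc 3 => x 2) (by fun_prop)

theorem measurePreserving_projα {ω : Set (Euc 2)} (hω : MeasurableSet ω) :
    MeasurePreserving projα (volume.restrict (thinDomain ω)) (volume.restrict ω) := by
  have h1 := PiLp.volume_preserving_ofLp (Fin 3)
  have h2 := volume_preserving_piFinSuccAbove (fun _ : Fin 3 => ℝ) 2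
  have h3 := h2.comp h1
  have h4 := PiLp.volume_preserving_toLp (Fin 2)
  set ω' : Set (Fin 2 → ℝ) := (WithLp.toLp 2) ⁻¹' ω with hω'
  have h4' := h4.restrict_preimage hω
  have h5 := h3.restrict_preimage (s := Ioo (-(1/2):ℝ) (1/2) ×ˢ ω')
    (measurableSet_Ioo.prod (h4.measurable hω))
  have hp : IsProbabilityMeasure (volume.restrict (Ioo (-(1/2):ℝ) (1/2))) := ⟨by
    simp [Real.volume_Ioo]; norm_num⟩
  rw [Measure.volume_eq_prod, ← Measure.prod_restrict] at h5
  have h6 : MeasurePreserving (Prod.snd : ℝ × (Fin 2 → ℝ) → _)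
    ((volume.restrict (Ioo (-(1/2):ℝ) (1/2))).prod (volume.restrict ω')) (volume.restrict ω') :=
    measurePreserving_snd
  have h7 := (h4'.comp h6).comp h5
  have e1 : (WithLp.toLp 2 ∘ Prod.snd) ∘ (MeasurableEquiv.piFinSuccAbove (fun _ : Fin 3 => ℝ) 2) ∘
      WithLp.ofLp = projα := by
    ext x i
    fin_cases i <;> rfl
  have e2 : (MeasurableEquiv.piFinSuccAbove (fun _ : Fin 3 => ℝ) 2) ∘ (@WithLp.ofLp 2 (Fin 3 → ℝ)) ⁻¹'
      (Ioo (-(1/2):ℝ) (1/2) ×ˢ ω') = thinDomain ω := by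
    have : ∀ x : Euc 3, (projα x) = WithLp.toLp 2 ((MeasurableEquiv.piFinSuccAbove (fun _ : Fin 3 => ℝ) 2
      (WithLp.ofLp x)).2) := fun x => by rw [← e1]; rfl
    ext x
    simp only [thinDomain, this]
    exact and_comm
  rw [e1] at h7
  rw [← e2]
  exact h7

/-! ### The cell formula -/

/-- The nearest integer point, coordinatewise. -/
def roundE {n : ℕ} (x : Euc n) : Euc n := WithLp.toLp 2 fun j => (round (x j) : ℝ)

/-- The `ℤⁿ`-periodic extension of the restriction of `φ` to the unit cube. -/
def perExt {n : ℕ} {E : Type*} (φ : Euc n → E) (x : Euc n) : E := φ (x - roundE x)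

theorem round_eq_of_abs_lt {x : ℝ} {m : ℤ} (h : |x - m| < 1/2) : round x = m := by
  have : round (x - m) = 0 := by
    rw [round_eq_zero_iff]
    exact ⟨(abs_lt.1 h).1.le, (abs_lt.1 h).2⟩
  rw [round_sub_intCast] at this
  omega

theorem roundE_eq_zero {n : ℕ} {x : Euc n} (hx : x ∈ unitCube n) : roundE x = 0 := by
  ext j
  have : round (x j) = 0 := round_eq_of_abs_lt (by simpa using hx j)
  simp [roundE, this]

theorem isPer_perExt {n : ℕ} {E : Type*} (φ : Euc n → E) : IsPer (perExt φ) := by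
  intro j x
  unfold perExt
  congr 1
  ext i
  by_cases h : i = j
  · subst h; simp [roundE]
  · simp [roundE, h]

theorem perExt_of_mem {n : ℕ} {E : Type*} (φ : Euc n → E) {x : Euc n} (hx : x ∈ unitCube n) :
    perExt φ x = φ x := by
  simp [perExt, roundE_eq_zero hx]

theorem perExt_eventuallyEq {n : ℕ} {E : Type*} (φ : Euc n → E) {x : Euc n}
    (hx : x ∈ unitCube n) : perExt φ =ᶠ[𝓝 x] φ := by
  filter_upwards [(isOpen_unitCube n).mem_nhds hx] with y hy using perExt_of_mem φ hy

/-- A closed subset of the open cube keeps a positive distance from its boundary. -/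
theorem exists_margin {n : ℕ} {K : Set (Euc n)} (hK : IsClosed K) (hKc : K ⊆ unitCube n) :
    ∃ s < (1/2 : ℝ), ∀ y ∈ K, ∀ j, |y j| ≤ s := by
  have hc : IsCompact K := (isCompact_closedCube n).of_isClosed_subset hK
    (hKc.trans (unitCube_subset_closedCube n))
  have : ∀ j, ∃ s < (1/2 : ℝ), ∀ y ∈ K, |y j| ≤ s := by
    intro j
    rcases K.eq_empty_or_nonempty with h | h
    · exact ⟨0, by norm_num, by simp [h]⟩
    · obtain ⟨z, hz, hm⟩ := hc.exists_isMaxOn h (f := fun y : Euc n => |y j|) (by fun_prop)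
      exact ⟨|z j|, hKc hz j, fun y hy => hm hy⟩
  choose s hs1 hs2 using this
  rcases isEmpty_or_nonempty (Fin n) with h | h
  · exact ⟨0, by norm_num, fun y _ j => h.elim j⟩
  · refine ⟨Finset.univ.sup' Finset.univ_nonempty s, ?_, ?_⟩
    · rw [Finset.sup'_lt_iff]; exact fun j _ => hs1 j
    · exact fun y hy j => (hs2 j y hy).trans (Finset.le_sup' s (Finset.mem_univ j))

/-- Extending periodically a smooth function supported inside the open cube keeps smoothness: at a
point whose translate lies on the boundary of the cube the extension vanishes locally. -/
theorem contDiff_perExt {n : ℕ} {E : Type*} [NormedAddCommGroup E] [NormedSpace ℝ E]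
    {φ : Euc n → E} (hφ : ContDiff ℝ (⊤ : ℕ∞) φ) (hs : tsupport φ ⊆ unitCube n) :
    ContDiff ℝ (⊤ : ℕ∞) (perExt φ) := by
  obtain ⟨s, hs1, hs2⟩ := exists_margin (isClosed_tsupport φ) hs
  rw [contDiff_iff_contDiffAt]
  intro x₀
  by_cases hx : ∀ j, |x₀ j - round (x₀ j)| < 1/2
  · have hev : perExt φ =ᶠ[𝓝 x₀] fun x => φ (x - roundE x₀) := by
      have : ∀ᶠ x in 𝓝 x₀, ∀ j, |x j - (round (x₀ j) : ℝ)| < 1/2 := by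
        rw [eventually_all]
        intro j
        have : Continuous fun x : Euc n => |x j - (round (x₀ j) : ℝ)| := by fun_prop
        exact (this.tendsto x₀).eventually (gt_mem_nhds (hx j))
      filter_upwards [this] with x hx'
      have : roundE x = roundE x₀ := by
        ext j
        simp [roundE, round_eq_of_abs_lt (hx' j)]
      simp [perExt, this]
    refine ContDiffAt.congr_of_eventuallyEq ?_ hev
    exact (hφ.comp (contDiff_id.sub contDiff_const)).contDiffAt
  · push Not at hx
    obtain ⟨j, hj⟩ := hx
    have hev : perExt φ =ᶠ[𝓝 x₀] fun _ => 0 := by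
      have h1 : Continuous fun x : Euc n => |x j - x₀ j| := by fun_prop
      have h2 : ∀ᶠ x in 𝓝 x₀, |x j - x₀ j| < 1/2 - s :=
        (h1.tendsto x₀).eventually (gt_mem_nhds (by simpa using hs1))
      filter_upwards [h2] with x hx'
      by_contra hne
      have h3 := hs2 _ (subset_tsupport φ hne) j
      simp only [roundE, PiLp.sub_apply] at h3
      have h4 : |x₀ j - round (x j)| < 1/2 := by
        calc |x₀ j - round (x j)| = |(x j - round (x j)) - (x j - x₀ j)| := by ring_nf
          _ ≤ |x j - round (x j)| + |x j - x₀ j| := abs_sub _ _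
          _ < 1/2 := by linarith
      rw [round_eq_of_abs_lt h4] at hj
      linarith
    exact contDiffAt_const.congr_of_eventuallyEq hev

theorem continuous_gradMat {n d : ℕ} {φ : Euc n → Euc d} (hφ : ContDiff ℝ (⊤ : ℕ∞) φ) :
    Continuous (gradMat φ) := by
  refine continuous_pi fun i => continuous_pi fun j => ?_
  have h : Continuous fun x => fderiv ℝ φ x (EuclideanSpace.single j 1) :=
    (hφ.continuous_fderiv (by simp)).clm_apply continuous_const
  exact (PiLp.continuous_apply 2 _ i).comp h

theorem gradMat_congr {n d : ℕ} {φ ψ : Euc n → Euc d} {x : Euc n} (h : φ =ᶠ[𝓝 x] ψ) :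
    gradMat φ x = gradMat ψ x := by
  unfold gradMat; rw [h.fderiv_eq]

theorem gradMat_add_const {n d : ℕ} (φ : Euc n → Euc d) (x c : Euc n) :
    gradMat (fun y => φ (y + c)) x = gradMat φ (x + c) := by
  unfold gradMat; rw [fderiv_comp_add_right]

theorem IsPer.gradMat {n d : ℕ} {φ : Euc n → Euc d} (h : IsPer φ) : IsPer (gradMat φ) := by
  intro j x
  rw [← gradMat_add_const]
  congr 1
  ext1 y; exact h j y

theorem continuous_joinCols :
    Continuous fun p : Mat 3 2 × (Fin 3 → ℝ) => joinCols p.1 p.2 := by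
  refine continuous_pi fun i => continuous_pi fun j => ?_
  unfold joinCols
  split_ifs <;> fun_prop

theorem Continuous.joinCols {X : Type*} [TopologicalSpace X] {f : X → Mat 3 2} {g : X → Fin 3 → ℝ}
    (hf : Continuous f) (hg : Continuous g) : Continuous fun x => joinCols (f x) (g x) :=
  continuous_joinCols.comp (hf.prodMk hg)

theorem norm_joinCols_le {ξ : Mat 3 2} {b : Fin 3 → ℝ} {R : ℝ} (h1 : ‖ξ‖ ≤ R) (h2 : ‖b‖ ≤ R) :
    ‖joinCols ξ b‖ ≤ R := by
  have hR : 0 ≤ R := (norm_nonneg _).trans h1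
  refine (pi_norm_le_iff_of_nonneg hR).2 fun i => (pi_norm_le_iff_of_nonneg hR).2 fun j => ?_
  unfold joinCols
  split_ifs with h
  · exact ((norm_le_pi_norm (ξ i) _).trans (norm_le_pi_norm ξ i)).trans h1
  · exact (norm_le_pi_norm b i).trans h2

theorem joinCols_sub (ξ ξ' : Mat 3 2) (b b' : Fin 3 → ℝ) :
    joinCols ξ b - joinCols ξ' b' = joinCols (ξ - ξ') (b - b') := by
  ext i j
  simp only [Pi.sub_apply, joinCols]
  split_ifs <;> rfl

theorem norm_ofLp_le {n : ℕ} (x : Euc n) : ‖WithLp.ofLp x‖ ≤ ‖x‖ :=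
  (pi_norm_le_iff_of_nonneg (norm_nonneg _)).2 fun i => PiLp.norm_apply_le x i

/-- Admissible pairs in the cell problem: a periodic planar oscillation `φ` and a periodic
transverse column `β`, both smooth, with `φ`, `∇φ`, `β` bounded. -/
structure IsComp (φ β : Euc 2 → Euc 3) : Prop where
  smooth_φ : ContDiff ℝ (⊤ : ℕ∞) φ
  smooth_β : ContDiff ℝ (⊤ : ℕ∞) β
  per_φ : IsPer φ
  per_β : IsPer β
  bdd : ∃ M : ℝ, ∀ x, ‖φ x‖ ≤ M ∧ ‖gradMat φ x‖ ≤ M ∧ ‖β x‖ ≤ M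

/-- The cell energy `∫_Q W(ξ + ∇φ, β)^q dy`. The exponent is replaced by `max q 1`, which changes
nothing for the exponents in use and makes the energy continuous in `(q, ξ)` everywhere. -/
def cellE (W : Mat 3 3 → ℝ) (φ β : Euc 2 → Euc 3) (q : ℝ) (ξ : Mat 3 2) : ℝ :=
  ∫ y in closedCube 2, W (joinCols (ξ + gradMat φ y) (β y)) ^ (max q 1)

/-- The pairs admissible in the cell problem, as a type. -/
abbrev Comp := {C : (Euc 2 → Euc 3) × (Euc 2 → Euc 3) // IsComp C.1 C.2}

/-- The cell formula `inf_{φ,β} ∫_Q W(ξ + ∇φ, β)^q dy`, a quasiconvex minorant of `W₀^q` when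
`q ≥ 1`. -/
def cellZ (W : Mat 3 3 → ℝ) (q : ℝ) (ξ : Mat 3 2) : ℝ :=
  ⨅ C : Comp, cellE W C.1.1 C.1.2 q ξ

theorem isComp_const (b : Euc 3) : IsComp (fun _ => 0) (fun _ => b) where
  smooth_φ := contDiff_const
  smooth_β := contDiff_const
  per_φ := fun _ _ => rfl
  per_β := fun _ _ => rfl
  bdd := ⟨‖b‖, fun x => by
    have : gradMat (fun _ : Euc 2 => (0 : Euc 3)) x = 0 := by
      ext i j; simp [gradMat]
    simp [this]⟩

instance : Nonempty Comp := ⟨⟨(fun _ => 0, fun _ => 0), isComp_const 0⟩⟩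

theorem continuous_Wpow {W : Mat 3 3 → ℝ} (hW : Continuous W) {X : Type*} [TopologicalSpace X]
    {q : X → ℝ} {F : X → Mat 3 3} (hq : Continuous q) (hF : Continuous F) :
    Continuous fun x => W (F x) ^ (max (q x) 1) :=
  (hW.comp hF).rpow (hq.max continuous_const) fun _ => Or.inr (by positivity)

theorem continuous_cellE {W : Mat 3 3 → ℝ} (hW : Continuous W) {φ β : Euc 2 → Euc 3}
    (hC : IsComp φ β) : Continuous fun p : ℝ × Mat 3 2 => cellE W φ β p.1 p.2 := by
  unfold cellE
  apply continuous_parametric_integral_of_continuous _ (isCompact_closedCube 2)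
  have h1 := continuous_gradMat hC.smooth_φ
  have h2 := hC.smooth_β.continuous
  refine continuous_Wpow hW (by fun_prop) (Continuous.joinCols (by fun_prop) ?_)
  exact (PiLp.continuous_ofLp 2 _).comp (h2.comp continuous_snd)

theorem cellE_nonneg {W : Mat 3 3 → ℝ} (hW : ∀ ξ, 0 ≤ W ξ) (φ β : Euc 2 → Euc 3) (q : ℝ)
    (ξ : Mat 3 2) : 0 ≤ cellE W φ β q ξ :=
  integral_nonneg fun _ => Real.rpow_nonneg (hW _) _

theorem cellZ_nonneg {W : Mat 3 3 → ℝ} (hW : ∀ ξ, 0 ≤ W ξ) (q : ℝ) (ξ : Mat 3 2) :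
    0 ≤ cellZ W q ξ := Real.iInf_nonneg fun _ => cellE_nonneg hW _ _ _ _

theorem cellZ_le {W : Mat 3 3 → ℝ} (hW : ∀ ξ, 0 ≤ W ξ) {φ β : Euc 2 → Euc 3}
    (hC : IsComp φ β) (q : ℝ) (ξ : Mat 3 2) : cellZ W q ξ ≤ cellE W φ β q ξ :=
  ciInf_le ⟨0, by rintro _ ⟨C, rfl⟩; exact cellE_nonneg hW _ _ _ _⟩ (⟨(φ, β), hC⟩ : Comp)

theorem ofReal_cellE {W : Mat 3 3 → ℝ} (hW : Continuous W) (hWnn : ∀ ξ, 0 ≤ W ξ)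
    {φ β : Euc 2 → Euc 3} (hC : IsComp φ β) (q : ℝ) (ξ : Mat 3 2) :
    ENNReal.ofReal (cellE W φ β q ξ) =
      ∫⁻ y in unitCube 2, ENNReal.ofReal (W (joinCols (ξ + gradMat φ y) (β y)) ^ (max q 1)) := by
  have h1 := continuous_gradMat hC.smooth_φ
  have h2 := hC.smooth_β.continuous
  have hc : Continuous fun y => W (joinCols (ξ + gradMat φ y) (β y)) ^ (max q 1) :=
    continuous_Wpow hW continuous_const
      (Continuous.joinCols (by fun_prop) ((PiLp.continuous_ofLp 2 _).comp h2))
  rw [cellE, ofReal_integral_eq_lintegral_ofReal]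
  · exact (setLIntegral_congr (unitCube_ae_eq_closedCube 2)).symm
  · exact hc.continuousOn.integrableOn_compact (isCompact_closedCube 2)
  · exact Eventually.of_forall fun _ => Real.rpow_nonneg (hWnn _) _

theorem cellZ_le_const {W : Mat 3 3 → ℝ} (hW : ∀ ξ, 0 ≤ W ξ) (q : ℝ)
    (ξ : Mat 3 2) (b : Fin 3 → ℝ) : cellZ W q ξ ≤ W (joinCols ξ b) ^ (max q 1) := by
  refine (cellZ_le hW (isComp_const (WithLp.toLp 2 b)) q ξ).trans (le_of_eq ?_)
  have : ∀ x, gradMat (fun _ : Euc 2 => (0 : Euc 3)) x = 0 := fun x => by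
    ext i j; simp [gradMat]
  have hv : volume.real (closedCube 2) = 1 := by
    rw [Measure.real, ← measure_congr (unitCube_ae_eq_closedCube 2), volume_unitCube]; rfl
  simp [cellE, this, hv]

/-- By the Lindelöf property the infimum in the cell formula is approached, for all `(q, ξ)`
simultaneously, along one sequence of admissible pairs. -/
theorem exists_seq_cellZ {W : Mat 3 3 → ℝ} (hW : Continuous W) :
    ∃ C : ℕ → Comp, ∀ q ξ, ∀ τ > 0, ∃ n,
      cellE W (C n).1.1 (C n).1.2 q ξ < cellZ W q ξ + τ := by
  have key : ∀ t : ℚ, ∃ T : Set Comp, T.Countable ∧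
      ⋃ C ∈ T, {p : ℝ × Mat 3 2 | cellE W C.1.1 C.1.2 p.1 p.2 < t} =
      ⋃ C : Comp, {p : ℝ × Mat 3 2 | cellE W C.1.1 C.1.2 p.1 p.2 < t} := fun t =>
    TopologicalSpace.isOpen_iUnion_countable _ fun C =>
      isOpen_lt (continuous_cellE hW C.2) continuous_const
  choose T hT hT2 using key
  set S : Set Comp := insert (Classical.arbitrary Comp) (⋃ t, T t) with hS
  have hSc : S.Countable := (countable_iUnion hT).insert _
  obtain ⟨C, hC⟩ := hSc.exists_eq_range ⟨_, mem_insert _ _⟩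
  refine ⟨C, fun q ξ τ hτ => ?_⟩
  obtain ⟨t, ht1, ht2⟩ := exists_rat_btwn (show cellZ W q ξ < cellZ W q ξ + τ by linarith)
  obtain ⟨D, hD⟩ := exists_lt_of_ciInf_lt ht1
  have : (q, ξ) ∈ ⋃ C ∈ T t, {p : ℝ × Mat 3 2 | cellE W C.1.1 C.1.2 p.1 p.2 < t} := by
    rw [hT2]; exact mem_iUnion.2 ⟨D, hD⟩
  simp only [mem_iUnion] at this
  obtain ⟨D', hD', hlt⟩ := this
  have : D' ∈ range C := hC ▸ mem_insert_of_mem _ (mem_iUnion.2 ⟨t, hD'⟩)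
  obtain ⟨n, rfl⟩ := this
  exact ⟨n, lt_trans hlt ht2⟩

theorem upperSemicontinuous_cellZ {W : Mat 3 3 → ℝ} (hW : Continuous W) (hWnn : ∀ ξ, 0 ≤ W ξ) :
    UpperSemicontinuous fun p : ℝ × Mat 3 2 => cellZ W p.1 p.2 := by
  intro p t ht
  obtain ⟨C, hC⟩ := exists_lt_of_ciInf_lt ht
  filter_upwards [((continuous_cellE hW C.2).tendsto p).eventually (gt_mem_nhds hC)] with p' hp'
  exact (cellZ_le hWnn C.2 _ _).trans_lt hp'

theorem measurable_cellZ {W : Mat 3 3 → ℝ} (hW : Continuous W) (hWnn : ∀ ξ, 0 ≤ W ξ) :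
    Measurable fun p : ℝ × Mat 3 2 => cellZ W p.1 p.2 :=
  (upperSemicontinuous_cellZ hW hWnn).measurable

/-! ### Cutoffs, averaging over translations, and oscillating fields -/

/-- Smooth compactly supported Urysohn function. -/
theorem exists_smooth_cutoff {n : ℕ} {K V : Set (Euc n)} (hK : IsCompact K) (hV : IsOpen V)
    (hKV : K ⊆ V) : ∃ θ : Euc n → ℝ, ContDiff ℝ (⊤ : ℕ∞) θ ∧ HasCompactSupport θ ∧ tsupport θ ⊆ V ∧
      (∀ x, 0 ≤ θ x ∧ θ x ≤ 1) ∧ (∀ x ∈ K, θ x = 1) := by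
  obtain ⟨L, hL, hKL, hLV⟩ := exists_compact_between hK hV hKV
  obtain ⟨f, hf0, hf1, hf⟩ := exists_contMDiffMap_zero_one_of_isClosed (n := (⊤ : ℕ∞))
    (modelWithCornersSelf ℝ (Euc n)) (isOpen_interior (s := L)).isClosed_compl hK.isClosed
    (Set.disjoint_left.2 fun x hx hxK => hx (hKL hxK))
  have hsupp : tsupport f ⊆ L := by
    apply closure_minimal _ hL.isClosed
    intro x hx
    by_contra h
    exact hx (hf0 (fun h' => h (interior_subset h')))
  refine ⟨f, f.contMDiff.contDiff, hL.of_isClosed_subset (isClosed_tsupport _) hsupp,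
    hsupp.trans hLV, fun x => ⟨(hf x).1, (hf x).2⟩, fun x hx => hf1 hx⟩

/-- Measurable subsets of an open set are smooth cutoffs up to sets of small measure. -/
theorem exists_smooth_indicator {n : ℕ} {U E : Set (Euc n)} (hU : IsOpen U) (hUf : volume U ≠ ⊤)
    (hE : MeasurableSet E) (hEU : E ⊆ U) {δ : ℝ≥0∞} (hδ : δ ≠ 0) :
    ∃ θ : Euc n → ℝ, ContDiff ℝ (⊤ : ℕ∞) θ ∧ HasCompactSupport θ ∧ tsupport θ ⊆ U ∧
      (∀ x, 0 ≤ θ x ∧ θ x ≤ 1) ∧ volume {x | θ x ≠ E.indicator (fun _ => (1:ℝ)) x} ≤ δ := by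
  have hEf : volume E ≠ ⊤ := ne_top_of_le_ne_top hUf (measure_mono hEU)
  have hδ2 : δ / 2 ≠ 0 := (ENNReal.half_pos hδ).ne'
  obtain ⟨K, hKE, hK, hKm⟩ := hE.exists_isCompact_sdiff_lt hEf hδ2
  obtain ⟨V, hEV, hV, -, hVm⟩ := hE.exists_isOpen_sdiff_lt hEf hδ2
  obtain ⟨θ, h1, h2, h3, h4, h5⟩ := exists_smooth_cutoff hK (hV.inter hU)
    (subset_inter (hKE.trans hEV) (hKE.trans hEU))
  refine ⟨θ, h1, h2, h3.trans inter_subset_right, h4, ?_⟩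
  have hsub : {x | θ x ≠ E.indicator (fun _ => (1:ℝ)) x} ⊆ (E \ K) ∪ (V \ E) := by
    intro x hx
    by_cases hxE : x ∈ E
    · left
      refine ⟨hxE, fun hxK => hx ?_⟩
      rw [h5 x hxK, indicator_of_mem hxE]
    · right
      refine ⟨?_, hxE⟩
      by_contra hxV
      apply hx
      rw [indicator_of_notMem hxE]
      exact image_eq_zero_of_notMem_tsupport fun h => hxV (h3 h).1
  calc _ ≤ _ := measure_mono hsub
    _ ≤ _ := measure_union_le _ _
    _ ≤ δ/2 + δ/2 := add_le_add hKm.le hVm.le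
    _ = δ := ENNReal.add_halves δ

theorem exists_small_mul (K : ℝ) {η : ℝ} (hη : 0 < η) :
    ∃ δ : ℝ, 0 < δ ∧ ∀ m : ℝ≥0∞, m ≤ ENNReal.ofReal δ → ENNReal.ofReal K * m ≤ ENNReal.ofReal η := by
  refine ⟨η / (|K| + 1), by positivity, fun m hm => ?_⟩
  calc ENNReal.ofReal K * m ≤ ENNReal.ofReal |K| * ENNReal.ofReal (η / (|K| + 1)) :=
        mul_le_mul' (ENNReal.ofReal_le_ofReal (le_abs_self K)) hm
    _ = ENNReal.ofReal (|K| * (η / (|K| + 1))) := (ENNReal.ofReal_mul (abs_nonneg K)).symm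
    _ ≤ ENNReal.ofReal η := by
        apply ENNReal.ofReal_le_ofReal
        rw [mul_div_assoc', div_le_iff₀ (by positivity)]
        nlinarith [abs_nonneg K]

/-- Averaging over translations: some translate of a rapidly oscillating periodic integrand has
integral at most its cell average. -/
theorem exists_translate {n : ℕ} {U : Set (Euc n)} {G : Euc n → Euc n → ℝ≥0∞}
    (hG : Measurable (Function.uncurry G)) (hper : ∀ x, IsPer (G x)) {c : Euc n → Euc n}
    (hc : Measurable c) :
    ∃ y, ∫⁻ x in U, G x (c x + y) ≤ ∫⁻ x in U, ∫⁻ z in unitCube n, G x z := by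
  have : IsProbabilityMeasure (volume.restrict (unitCube n)) := ⟨by simp [volume_unitCube]⟩
  have hm : Measurable (Function.uncurry fun (y x : Euc n) => G x (c x + y)) :=
    hG.comp (measurable_snd.prodMk ((hc.comp measurable_snd).add measurable_fst))
  obtain ⟨y, hy⟩ := exists_le_lintegral (μ := volume.restrict (unitCube n))
    (f := fun y => ∫⁻ x in U, G x (c x + y)) (hm.lintegral_prod_right').aemeasurable
  refine ⟨y, hy.trans (le_of_eq ?_)⟩
  rw [lintegral_lintegral_swap hm.aemeasurable]
  exact lintegral_congr fun x => lintegral_unitCube_per (G x) (hper x) (c x)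

/-- Uniform continuity of `(q, F) ↦ W(F)^q` on bounded sets. -/
theorem exists_modulus {W : Mat 3 3 → ℝ} (hW : Continuous W) (P R : ℝ) {τ : ℝ} (hτ : 0 < τ) :
    ∃ r > 0, ∀ q ≤ P, ∀ F F' : Mat 3 3, ‖F‖ ≤ R → ‖F' - F‖ ≤ r →
      W F' ^ (max q 1) ≤ W F ^ (max q 1) + τ := by
  have hcomp : IsCompact ((Icc 1 (max P 1)) ×ˢ Metric.closedBall (0 : Mat 3 3) (R + 1)) :=
    isCompact_Icc.prod (isCompact_closedBall _ _)
  have hcont : Continuous fun p : ℝ × Mat 3 3 => W p.2 ^ (max p.1 1) :=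
    continuous_Wpow hW continuous_fst continuous_snd
  have huc := hcomp.uniformContinuousOn_of_continuous hcont.continuousOn
  obtain ⟨r, hr, h⟩ := Metric.uniformContinuousOn_iff.1 huc τ hτ
  refine ⟨min (r/2) 1, by positivity, fun q hq F F' hF hF' => ?_⟩
  have hR : ‖F'‖ ≤ R + 1 := by
    calc ‖F'‖ = ‖F + (F' - F)‖ := by congr 1; abel
      _ ≤ ‖F‖ + ‖F' - F‖ := norm_add_le _ _
      _ ≤ R + 1 := add_le_add hF (hF'.trans (min_le_right _ _))
  have hq' : max q 1 ∈ Icc 1 (max P 1) := ⟨le_max_right _ _, max_le_max hq le_rfl⟩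
  have := h (max q 1, F') ⟨hq', mem_closedBall_zero_iff.2 hR⟩ (max q 1, F)
    ⟨hq', mem_closedBall_zero_iff.2 (by linarith)⟩ (by
      rw [Prod.dist_eq]
      simp only [dist_self, dist_eq_norm]
      rw [max_lt_iff]
      exact ⟨hr, lt_of_le_of_lt (hF'.trans (min_le_left _ _)) (by linarith)⟩)
  simp only [max_assoc, max_self, Real.dist_eq] at this
  linarith [(abs_lt.1 this).2]

theorem exists_Wpow_bound {W : Mat 3 3 → ℝ} (hW : Continuous W) (P R : ℝ) :
    ∃ B : ℝ, 0 ≤ B ∧ ∀ q ≤ P, ∀ F : Mat 3 3, ‖F‖ ≤ R → W F ^ (max q 1) ≤ B := by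
  have hcomp : IsCompact ((Icc 1 (max P 1)) ×ˢ Metric.closedBall (0 : Mat 3 3) R) :=
    isCompact_Icc.prod (isCompact_closedBall _ _)
  have hcont : Continuous fun p : ℝ × Mat 3 3 => W p.2 ^ (max p.1 1) :=
    continuous_Wpow hW continuous_fst continuous_snd
  obtain ⟨B, hB⟩ := hcomp.bddAbove_image hcont.continuousOn
  refine ⟨max B 0, le_max_right _ _, fun q hq F hF => ?_⟩
  have := hB (mem_image_of_mem _ (show (max q 1, F) ∈ _ from
    ⟨⟨le_max_right _ _, max_le_max hq le_rfl⟩, mem_closedBall_zero_iff.2 hF⟩))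
  simp only [max_assoc, max_self] at this
  exact this.trans (le_max_left _ _)

section Field

variable (v : Euc 2 → Euc 3) (θ : ℕ → Euc 2 → ℝ) (C : ℕ → Comp) (N : ℕ)

/-- The oscillating map `v + h ∑ θₙ φₙ(x/h + y)`. -/
def oscU (h : ℝ) (y x : Euc 2) : Euc 3 :=
  v x + ∑ n ∈ Finset.range N, (h * θ n x) • (C n).1.1 (h⁻¹ • x + y)

/-- The oscillating transverse column `∑ θₙ βₙ(x/h + y)`. -/
def oscB (h : ℝ) (y x : Euc 2) : Euc 3 :=
  ∑ n ∈ Finset.range N, θ n x • (C n).1.2 (h⁻¹ • x + y)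

/-- Leading part of the planar gradient of `oscU`, with the slow and fast variables separated. -/
def oscA (ξ : Mat 3 2) (x z : Euc 2) : Mat 3 2 :=
  ξ + gradMat v x + ∑ n ∈ Finset.range N, θ n x • gradMat (C n).1.1 z

/-- The part of the gradient of `oscU` carrying a factor `h`. -/
def oscErr (x z : Euc 2) : Mat 3 2 :=
  fun i j => ∑ n ∈ Finset.range N, fderiv ℝ (θ n) x (EuclideanSpace.single j 1) * (C n).1.1 z i

variable {v θ}

/-- The gradient of the oscillating map: leading part plus an error of order `h`. -/
theorem gradMat_oscU (hv : ContDiff ℝ (⊤ : ℕ∞) v) (hθ : ∀ n, ContDiff ℝ (⊤ : ℕ∞) (θ n))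
    (ξ : Mat 3 2) {h : ℝ} (hh : h ≠ 0) (y x : Euc 2) :
    ξ + gradMat (oscU v θ C N h y) x =
      oscA v θ C N ξ x (h⁻¹ • x + y) + h • oscErr θ C N x (h⁻¹ • x + y) := by
  have h1 : HasFDerivAt v (fderiv ℝ v x) x := (hv.differentiable (by simp) x).hasFDerivAt
  have h2 : ∀ n, HasFDerivAt (θ n) (fderiv ℝ (θ n) x) x := fun n =>
    ((hθ n).differentiable (by simp) x).hasFDerivAt
  have h3 : ∀ n, HasFDerivAt (C n).1.1 (fderiv ℝ (C n).1.1 (h⁻¹ • x + y)) (h⁻¹ • x + y) := fun n =>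
    ((C n).2.smooth_φ.differentiable (by simp) _).hasFDerivAt
  have h4 : HasFDerivAt (fun x : Euc 2 => h⁻¹ • x + y) (h⁻¹ • ContinuousLinearMap.id ℝ (Euc 2)) x :=
    ((hasFDerivAt_id x).const_smul h⁻¹).add_const y
  have h5 : HasFDerivAt (oscU v θ C N h y) _ x :=
    h1.add (HasFDerivAt.fun_sum fun n (_ : n ∈ Finset.range N) =>
      ((h2 n).const_mul h).smul ((h3 n).comp x h4))
  ext i j
  simp only [gradMat, h5.fderiv, oscA, oscErr, Pi.add_apply, Pi.smul_apply, Finset.sum_apply,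
    _root_.add_apply, _root_.sum_apply, PiLp.add_apply, smul_eq_mul,
    _root_.smul_apply, ContinuousLinearMap.smulRight_apply,
    ContinuousLinearMap.comp_apply, ContinuousLinearMap.id_apply, map_smul]
  have hs : ∀ g : ℕ → Euc 3, (∑ n ∈ Finset.range N, g n) i = ∑ n ∈ Finset.range N, (g n) i :=
    fun g => by simp
  rw [hs, add_assoc, add_assoc, Finset.mul_sum, ← Finset.sum_add_distrib]
  congr 2
  refine Finset.sum_congr rfl fun n _ => ?_
  simp only [PiLp.add_apply, PiLp.smul_apply, smul_eq_mul]
  field_simp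

end Field

/-! ### Insertion of nearly optimal oscillations -/

theorem exists_norm_bound_of_hcs {n : ℕ} {E : Type*} [NormedAddCommGroup E] {f : Euc n → E}
    (hf : Continuous f) (hs : HasCompactSupport f) : ∃ R : ℝ, 0 ≤ R ∧ ∀ x, ‖f x‖ ≤ R := by
  obtain ⟨R, hR⟩ := hs.exists_bound_of_continuous hf
  exact ⟨R, (norm_nonneg _).trans (hR 0), hR⟩

theorem tsupport_gradMat_subset {n d : ℕ} (φ : Euc n → Euc d) :
    tsupport (gradMat φ) ⊆ tsupport φ := by
  refine closure_minimal (fun x hx => ?_) (isClosed_tsupport φ)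
  by_contra h
  apply hx
  have := gradMat_congr (notMem_tsupport_iff_eventuallyEq.1 h)
  rw [this]
  ext i j; simp [gradMat]

theorem hcs_gradMat {n d : ℕ} {φ : Euc n → Euc d} (h : HasCompactSupport φ) :
    HasCompactSupport (gradMat φ) :=
  h.of_isClosed_subset (isClosed_tsupport _) (tsupport_gradMat_subset φ)

/-- Pointwise bound of the cell average of the oscillating field where the cutoffs agree with the
exact selection indicators: near-optimality of the selected pair `m` if it is among the `N` pairs in
use, and the crude bound `M * B` otherwise. -/
theorem cell_avg_le {W : Mat 3 3 → ℝ} (hW : Continuous W) (hWnn : ∀ ξ, 0 ≤ W ξ)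
    {C : ℕ → Comp} {N : ℕ} {A : Mat 3 2} {a q M P τ B R : ℝ} (ha : 0 ≤ a) (haM : a ≤ M) (hqP : q ≤ P)
    {t : ℕ → ℝ} {m : ℕ}
    (ht : ∀ n < N, t n = if m = n then 1 else 0)
    (hm : cellE W (C m).1.1 (C m).1.2 q A ≤ cellZ W q A + τ)
    (hA : ‖A‖ ≤ R)
    (hB : ∀ q ≤ P, ∀ F : Mat 3 3, ‖F‖ ≤ R → W F ^ (max q 1) ≤ B) :
    ∫⁻ z in unitCube 2, ENNReal.ofReal (a * W (joinCols
      (A + ∑ n ∈ Finset.range N, t n • gradMat (C n).1.1 z)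
      (∑ n ∈ Finset.range N, t n • (C n).1.2 z : Euc 3)) ^ (max q 1)) ≤
    ENNReal.ofReal (a * cellZ W q A) + ENNReal.ofReal (M * τ) +
      (if N ≤ m then ENNReal.ofReal (M * B) else 0) := by
  have hM : 0 ≤ M := ha.trans haM
  by_cases hmN : m < N
  · have key : ∀ (E : Type) [AddCommGroup E] [Module ℝ E] (f : ℕ → E),
        ∑ n ∈ Finset.range N, t n • f n = f m := by
      intro E _ _ f
      rw [Finset.sum_eq_single_of_mem m (Finset.mem_range.2 hmN)]
      · rw [ht m hmN]; simp
      · intro n hn hne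
        rw [ht n (Finset.mem_range.1 hn), if_neg hne.symm, zero_smul]
    have h1 : ∀ z, ∑ n ∈ Finset.range N, t n • gradMat (C n).1.1 z = gradMat (C m).1.1 z :=
      fun z => key _ _
    have h2 : ∀ z, ∑ n ∈ Finset.range N, t n • (C n).1.2 z = (C m).1.2 z := fun z => key _ _
    simp only [h1, h2, ENNReal.ofReal_mul ha, if_neg (not_le.2 hmN), add_zero]
    rw [lintegral_const_mul' _ _ ENNReal.ofReal_ne_top, ← ofReal_cellE hW hWnn (C m).2]
    calc _ ≤ ENNReal.ofReal a * (ENNReal.ofReal (cellZ W q A) + ENNReal.ofReal τ) := by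
          gcongr
          exact (ENNReal.ofReal_le_ofReal hm).trans ENNReal.ofReal_add_le
      _ = ENNReal.ofReal a * ENNReal.ofReal (cellZ W q A) + ENNReal.ofReal a * ENNReal.ofReal τ :=
          mul_add _ _ _
      _ ≤ _ := by
          rw [ENNReal.ofReal_mul hM]
          gcongr
  · have h0 : ∀ n ∈ Finset.range N, t n = 0 := fun n hn => by
      rw [ht n (Finset.mem_range.1 hn), if_neg]
      rintro rfl
      exact hmN (Finset.mem_range.1 hn)
    have h1 : ∀ z, ∑ n ∈ Finset.range N, t n • gradMat (C n).1.1 z = 0 := fun z =>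
      Finset.sum_eq_zero fun n hn => by rw [h0 n hn, zero_smul]
    have h2 : ∀ z, ∑ n ∈ Finset.range N, t n • (C n).1.2 z = 0 := fun z =>
      Finset.sum_eq_zero fun n hn => by rw [h0 n hn, zero_smul]
    simp only [h1, h2, if_pos (not_lt.1 hmN)]
    rw [lintegral_const, Measure.restrict_apply_univ, volume_unitCube, mul_one]
    refine le_trans (ENNReal.ofReal_le_ofReal ?_) le_add_self
    have hR := (norm_nonneg A).trans hA
    rw [add_zero]
    refine mul_le_mul haM ?_ (Real.rpow_nonneg (hWnn _) _) hM
    refine hB q hqP _ (norm_joinCols_le hA ?_)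
    change ‖(0 : Fin 3 → ℝ)‖ ≤ R
    rw [norm_zero]; exact hR

/-- Insertion of nearly optimal oscillations, for measurable coefficients bounded everywhere: the
energy of the resulting pair exceeds the energy with density `a * cellZ` by at most `η`. -/
theorem core_pointwise {W : Mat 3 3 → ℝ} (hW : Continuous W) (hWnn : ∀ ξ, 0 ≤ W ξ)
    {U : Set (Euc 2)} (hU : IsOpen U) (hUf : volume U ≠ ⊤)
    {v : Euc 2 → Euc 3} (hv : ContDiff ℝ (⊤ : ℕ∞) v) (hvc : HasCompactSupport v)
    (hvU : tsupport v ⊆ U) (ξ : Mat 3 2) {a q : Euc 2 → ℝ} (ham : Measurable a) (hqm : Measurable q)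
    {M P : ℝ} (ha : ∀ x, 0 ≤ a x ∧ a x ≤ M) (hqP : ∀ x, q x ≤ P) {η : ℝ} (hη : 0 < η) :
    ∃ u b : Euc 2 → Euc 3, ContDiff ℝ (⊤ : ℕ∞) u ∧ ContDiff ℝ (⊤ : ℕ∞) b ∧
      HasCompactSupport u ∧ HasCompactSupport b ∧ tsupport u ⊆ U ∧ tsupport b ⊆ U ∧
      (∀ x, ‖u x - v x‖ ≤ η) ∧
      ∫⁻ x in U, ENNReal.ofReal (a x * W (joinCols (ξ + gradMat u x) (b x)) ^ (max (q x) 1)) ≤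
        (∫⁻ x in U, ENNReal.ofReal (a x * cellZ W (q x) (ξ + gradMat v x))) + ENNReal.ofReal η := by
  have hM : 0 ≤ M := (ha 0).1.trans (ha 0).2
  have hgv := continuous_gradMat hv
  obtain ⟨R₀, hR₀, hgb⟩ := exists_norm_bound_of_hcs hgv (hcs_gradMat hvc)
  set A : Euc 2 → Mat 3 2 := fun x => ξ + gradMat v x with hAdef
  have hAc : Continuous A := continuous_const.add hgv
  set R := ‖ξ‖ + R₀ with hR
  have hR0 : 0 ≤ R := by positivity
  have hAR : ∀ x, ‖A x‖ ≤ R := fun x => (norm_add_le _ _).trans (add_le_add le_rfl (hgb x))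
  -- tolerance for near-minimality and for the modulus of continuity
  obtain ⟨τ, hτ, hτ'⟩ : ∃ τ > 0, ENNReal.ofReal (M * τ) * volume U ≤ ENNReal.ofReal (η / 8) := by
    obtain ⟨δ, hδ, h⟩ := exists_small_mul (M * (volume U).toReal) (show 0 < η / 8 by linarith)
    refine ⟨δ, hδ, le_trans (le_of_eq ?_) (h _ le_rfl)⟩
    rw [ENNReal.ofReal_mul hM, ENNReal.ofReal_mul hM, ENNReal.ofReal_toReal hUf]
    ring
  obtain ⟨C, hC⟩ := exists_seq_cellZ hW
  classical
  have hCx : ∀ x, ∃ n, cellE W (C n).1.1 (C n).1.2 (q x) (A x) < cellZ W (q x) (A x) + τ :=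
    fun x => hC _ _ τ hτ
  set idx : Euc 2 → ℕ := fun x => Nat.find (hCx x) with hidx
  have hqA : Measurable fun x => (q x, A x) := hqm.prodMk hAc.measurable
  have hidxm : Measurable idx := by
    refine measurable_find hCx fun n => ?_
    exact measurableSet_lt (((continuous_cellE hW (C n).2).measurable).comp hqA)
      (((measurable_cellZ hW hWnn).comp hqA).add_const τ)
  have hidxs : ∀ x, cellE W (C (idx x)).1.1 (C (idx x)).1.2 (q x) (A x) ≤
      cellZ W (q x) (A x) + τ := fun x => (Nat.find_spec (hCx x)).le
  obtain ⟨B, hB0, hB⟩ := exists_Wpow_bound hW P R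
  -- only finitely many pairs are used, off a set of small measure
  obtain ⟨N, hN⟩ : ∃ N, ENNReal.ofReal (M * B) * volume (U ∩ {x | N ≤ idx x}) ≤
      ENNReal.ofReal (η / 4) := by
    obtain ⟨δ, hδ, h⟩ := exists_small_mul (M * B) (show 0 < η / 4 by linarith)
    have hanti : Antitone fun N => U ∩ {x | N ≤ idx x} := fun N N' hNN x hx =>
      ⟨hx.1, le_trans hNN hx.2⟩
    have hms : ∀ N : ℕ, MeasurableSet (U ∩ {x | N ≤ idx x}) := fun N =>
      hU.measurableSet.inter (hidxm measurableSet_Ici)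
    have ht := tendsto_measure_iInter_atTop (μ := (volume : Measure (Euc 2)))
      (fun N => (hms N).nullMeasurableSet) hanti
      ⟨0, ne_top_of_le_ne_top hUf (measure_mono inter_subset_left)⟩
    have : ⋂ N, U ∩ {x | N ≤ idx x} = ∅ := by
      refine eq_empty_iff_forall_notMem.2 fun x hx => ?_
      have := (mem_iInter.1 hx (idx x + 1)).2
      exact absurd this (by simp)
    rw [this, measure_empty] at ht
    obtain ⟨N, hN⟩ := (ht.eventually (gt_mem_nhds (ENNReal.ofReal_pos.2 hδ))).exists
    exact ⟨N, h _ hN.le⟩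
  choose m hm using fun n => (C n).2.bdd
  have hm0 : ∀ n, 0 ≤ m n := fun n => (norm_nonneg _).trans (hm n 0).1
  set R₁ := R + ∑ n ∈ Finset.range N, m n with hR₁
  have hS0 : 0 ≤ ∑ n ∈ Finset.range N, m n := Finset.sum_nonneg fun n _ => hm0 n
  obtain ⟨B', hB'0, hB'⟩ := exists_Wpow_bound hW P R₁
  obtain ⟨r, hr, hmod⟩ := exists_modulus hW P R₁ hτ
  obtain ⟨δ, hδ, hδ'⟩ := exists_small_mul (M * B') (show 0 < η / 4 by linarith)
  set E : ℕ → Set (Euc 2) := fun n => U ∩ {x | idx x = n} with hE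
  have hEm : ∀ n, MeasurableSet (E n) := fun n =>
    hU.measurableSet.inter (hidxm (measurableSet_singleton n))
  have hδN : ENNReal.ofReal (δ / (N + 1)) ≠ 0 := (ENNReal.ofReal_pos.2 (by positivity)).ne'
  choose θ hθs hθc hθU hθ01 hθm using fun n =>
    exists_smooth_indicator hU hUf (hEm n) inter_subset_left hδN
  -- the set where some cutoff differs from its selection indicator
  set bad : Set (Euc 2) := ⋃ n ∈ Finset.range N, {x | θ n x ≠ (E n).indicator (fun _ => (1:ℝ)) x}
    with hbad
  have hbadm : MeasurableSet bad := by
    refine Finset.measurableSet_biUnion _ fun n _ => ?_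
    exact (measurableSet_eq_fun (hθs n).continuous.measurable
      (measurable_const.indicator (hEm n))).compl
  have hbad_le : volume bad ≤ ENNReal.ofReal δ := by
    calc volume bad ≤ ∑ n ∈ Finset.range N, volume {x | θ n x ≠ (E n).indicator (fun _ => (1:ℝ)) x} :=
          measure_biUnion_finset_le _ _
      _ ≤ ∑ n ∈ Finset.range N, ENNReal.ofReal (δ / (N + 1)) := Finset.sum_le_sum fun n _ => hθm n
      _ = ENNReal.ofReal (N * (δ / (N + 1))) := by
          rw [Finset.sum_const, Finset.card_range, nsmul_eq_mul, ENNReal.ofReal_mul (by positivity),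
            ENNReal.ofReal_natCast]
      _ ≤ ENNReal.ofReal δ := by
          apply ENNReal.ofReal_le_ofReal
          rw [mul_div_assoc', div_le_iff₀ (by positivity)]
          nlinarith
  choose D hD0 hD using fun n => exists_norm_bound_of_hcs
    ((hθs n).continuous_fderiv (by simp)) ((hθc n).fderiv ℝ)
  set S := ∑ n ∈ Finset.range N, D n * m n with hS
  have hSnn : 0 ≤ S := Finset.sum_nonneg fun n _ => mul_nonneg (hD0 n) (hm0 n)
  have hErr : ∀ x z, ‖oscErr θ C N x z‖ ≤ S := fun x z => by
    refine (pi_norm_le_iff_of_nonneg hSnn).2 fun i => (pi_norm_le_iff_of_nonneg hSnn).2 fun j => ?_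
    refine (norm_sum_le _ _).trans (Finset.sum_le_sum fun n _ => ?_)
    rw [norm_mul]
    gcongr
    · exact hD0 n
    · refine ((fderiv ℝ (θ n) x).le_opNorm _).trans ?_
      simpa using hD n x
    · exact (PiLp.norm_apply_le _ i).trans (hm n z).1
  have hAbd : ∀ x z, ‖oscA v θ C N ξ x z‖ ≤ R₁ := fun x z => by
    refine (norm_add_le _ _).trans (add_le_add (hAR x) ((norm_sum_le _ _).trans
      (Finset.sum_le_sum fun n _ => ?_)))
    rw [norm_smul, Real.norm_eq_abs, abs_of_nonneg (hθ01 n x).1]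
    exact (mul_le_mul (hθ01 n x).2 (hm n z).2.1 (norm_nonneg _) zero_le_one).trans (by simp)
  have hBbd : ∀ x z, ‖∑ n ∈ Finset.range N, θ n x • (C n).1.2 z‖ ≤ R₁ := fun x z => by
    refine ((norm_sum_le _ _).trans (Finset.sum_le_sum fun n _ => ?_)).trans
      (show ∑ n ∈ Finset.range N, m n ≤ R₁ by linarith)
    rw [norm_smul, Real.norm_eq_abs, abs_of_nonneg (hθ01 n x).1]
    exact (mul_le_mul (hθ01 n x).2 (hm n z).2.2 (norm_nonneg _) zero_le_one).trans (by simp)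
  -- the scale `h` makes the gradient error at most `r` and the displacement at most `η`
  obtain ⟨h, hh, hhr, hhη⟩ : ∃ h : ℝ, 0 < h ∧ h * S ≤ r ∧ h * ∑ n ∈ Finset.range N, m n ≤ η := by
    refine ⟨min (r / (S + 1)) (η / ((∑ n ∈ Finset.range N, m n) + 1)), by positivity, ?_, ?_⟩
    · calc _ ≤ r / (S + 1) * S := by gcongr; exact min_le_left _ _
        _ ≤ r := by
          rw [div_mul_eq_mul_div, div_le_iff₀ (by positivity)]; nlinarith
    · calc _ ≤ η / ((∑ n ∈ Finset.range N, m n) + 1) * ∑ n ∈ Finset.range N, m n := by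
            gcongr; exact min_le_right _ _
        _ ≤ η := by
          rw [div_mul_eq_mul_div, div_le_iff₀ (by positivity)]; nlinarith
  -- the energy density with slow variable `x` and fast variable `z`, without the error of order `h`
  set G : Euc 2 → Euc 2 → ℝ≥0∞ := fun x z => ENNReal.ofReal (a x * W (joinCols
      (oscA v θ C N ξ x z) (∑ n ∈ Finset.range N, θ n x • (C n).1.2 z : Euc 3)) ^ (max (q x) 1))
    with hG
  have hcA : Continuous fun p : Euc 2 × Euc 2 => oscA v θ C N ξ p.1 p.2 := by
    refine (hAc.comp continuous_fst).add (continuous_finsetSum _ fun n _ => ?_)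
    exact ((hθs n).continuous.comp continuous_fst).smul
      ((continuous_gradMat (C n).2.smooth_φ).comp continuous_snd)
  have hcB : Continuous fun p : Euc 2 × Euc 2 =>
      (∑ n ∈ Finset.range N, θ n p.1 • (C n).1.2 p.2 : Euc 3) := by
    refine continuous_finsetSum _ fun n _ => ?_
    exact ((hθs n).continuous.comp continuous_fst).smul
      ((C n).2.smooth_β.continuous.comp continuous_snd)
  have hGm : Measurable (Function.uncurry G) := by
    have h1 : Measurable fun p : Euc 2 × Euc 2 => W (joinCols (oscA v θ C N ξ p.1 p.2)
        (∑ n ∈ Finset.range N, θ n p.1 • (C n).1.2 p.2 : Euc 3)) :=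
      (hW.comp (Continuous.joinCols hcA ((PiLp.continuous_ofLp 2 _).comp hcB))).measurable
    exact ((ham.comp measurable_fst).mul (h1.pow ((hqm.comp measurable_fst).max
      measurable_const))).ennreal_ofReal
  have hper : ∀ x, IsPer (G x) := fun x j z => by
    have h1 : ∀ n, gradMat (C n).1.1 (z + EuclideanSpace.single j 1) = gradMat (C n).1.1 z :=
      fun n => (C n).2.per_φ.gradMat j z
    have h2 : ∀ n, (C n).1.2 (z + EuclideanSpace.single j 1) = (C n).1.2 z :=
      fun n => (C n).2.per_β j z
    simp only [hG, oscA, h1, h2]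
  obtain ⟨y, hy⟩ := exists_translate (U := U) hGm hper
    (c := fun x => h⁻¹ • x) (measurable_const_smul h⁻¹)
  have hsu : ∀ g : ℕ → Euc 2 → Euc 3, ∀ t : ℕ → Euc 2 → ℝ, (∀ n, tsupport (t n) ⊆ tsupport (θ n)) →
      tsupport (fun x => ∑ n ∈ Finset.range N, t n x • g n x) ⊆
        ⋃ n ∈ Finset.range N, tsupport (θ n) := by
    intro g t ht
    refine closure_minimal (fun x hx => ?_)
      ((Finset.range N).finite_toSet.isClosed_biUnion fun n _ => isClosed_tsupport _)
    obtain ⟨n, hn, hne⟩ := Finset.exists_ne_zero_of_sum_ne_zero hx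
    exact mem_biUnion hn (ht n (subset_tsupport _ fun h0 => hne (by rw [h0, zero_smul])))
  have hKc : IsCompact (⋃ n ∈ Finset.range N, tsupport (θ n)) :=
    (Finset.range N).isCompact_biUnion fun n _ => hθc n
  have hKU : (⋃ n ∈ Finset.range N, tsupport (θ n)) ⊆ U := iUnion₂_subset fun n _ => hθU n
  have hsb : tsupport (oscB θ C N h y) ⊆ ⋃ n ∈ Finset.range N, tsupport (θ n) :=
    hsu _ _ fun n => le_rfl
  have hsuu : tsupport (oscU v θ C N h y) ⊆ tsupport v ∪ ⋃ n ∈ Finset.range N, tsupport (θ n) := by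
    refine (tsupport_add (f := v) (g := fun x => ∑ n ∈ Finset.range N, (h * θ n x) •
      (C n).1.1 (h⁻¹ • x + y))).trans (union_subset_union le_rfl (hsu _ _ fun n => ?_))
    exact closure_mono fun x hx h0 => hx (by simp [h0])
  have haff : ContDiff ℝ (⊤ : ℕ∞) fun x : Euc 2 => h⁻¹ • x + y :=
    (contDiff_id.const_smul h⁻¹).add contDiff_const
  refine ⟨oscU v θ C N h y, oscB θ C N h y, ?_, ?_,
    (hvc.isCompact.union hKc).of_isClosed_subset (isClosed_tsupport _) hsuu,
    hKc.of_isClosed_subset (isClosed_tsupport _) hsb, hsuu.trans (union_subset hvU hKU),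
    hsb.trans hKU, ?_, ?_⟩
  · exact hv.add (ContDiff.sum fun n _ => (contDiff_const.mul (hθs n)).smul
      ((C n).2.smooth_φ.comp haff))
  · exact ContDiff.sum fun n _ => (hθs n).smul ((C n).2.smooth_β.comp haff)
  · intro x
    refine le_trans ?_ hhη
    rw [oscU, add_sub_cancel_left, Finset.mul_sum]
    refine (norm_sum_le _ _).trans (Finset.sum_le_sum fun n _ => ?_)
    rw [norm_smul, norm_mul, Real.norm_eq_abs, Real.norm_eq_abs, abs_of_pos hh,
      abs_of_nonneg (hθ01 n x).1]
    gcongr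
    · exact mul_le_of_le_one_right hh.le (hθ01 n x).2
    · exact (hm n _).1
  -- `step1` drops the error of order `h`; `step2` bounds the cell averages
  · have step1 : ∀ x, ENNReal.ofReal (a x * W (joinCols (ξ + gradMat (oscU v θ C N h y) x)
        (oscB θ C N h y x)) ^ (max (q x) 1)) ≤
        G x (h⁻¹ • x + y) + ENNReal.ofReal (M * τ) := by
      intro x
      rw [gradMat_oscU C N hv hθs ξ hh.ne']
      have hF := hmod (q x) (hqP x) (joinCols (oscA v θ C N ξ x (h⁻¹ • x + y)) (oscB θ C N h y x))
        (joinCols (oscA v θ C N ξ x (h⁻¹ • x + y) + h • oscErr θ C N x (h⁻¹ • x + y))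
          (oscB θ C N h y x)) (norm_joinCols_le (hAbd _ _) ((norm_ofLp_le _).trans (hBbd _ _))) (by
          rw [joinCols_sub]
          refine norm_joinCols_le ?_ (by simpa using hr.le)
          rw [add_sub_cancel_left, norm_smul, Real.norm_eq_abs, abs_of_pos hh]
          exact (mul_le_mul_of_nonneg_left (hErr _ _) hh.le).trans hhr)
      refine le_trans (ENNReal.ofReal_le_ofReal ?_) ENNReal.ofReal_add_le
      calc _ ≤ a x * (_ + τ) := mul_le_mul_of_nonneg_left hF (ha x).1
        _ ≤ _ := by
          rw [mul_add]
          exact add_le_add le_rfl (mul_le_mul_of_nonneg_right (ha x).2 hτ.le)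
    have step2 : ∀ x ∈ U, ∫⁻ z in unitCube 2, G x z ≤
        ENNReal.ofReal (a x * cellZ W (q x) (A x)) + ENNReal.ofReal (M * τ) +
          ({x | N ≤ idx x}.indicator (fun _ => ENNReal.ofReal (M * B)) x) +
          bad.indicator (fun _ => ENNReal.ofReal (M * B')) x := by
      intro x hxU
      by_cases hxb : x ∈ bad
      · rw [indicator_of_mem hxb]
        refine le_trans ?_ le_add_self
        calc ∫⁻ z in unitCube 2, G x z ≤ ∫⁻ z in unitCube 2, ENNReal.ofReal (M * B') := by
              refine lintegral_mono fun z => ENNReal.ofReal_le_ofReal ?_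
              exact mul_le_mul (ha x).2 (hB' _ (hqP x) _ (norm_joinCols_le (hAbd x z)
                ((norm_ofLp_le _).trans (hBbd x z)))) (Real.rpow_nonneg (hWnn _) _) hM
          _ = _ := by
              rw [lintegral_const, Measure.restrict_apply_univ, volume_unitCube, mul_one]
      · rw [indicator_of_notMem hxb, add_zero]
        have ht : ∀ n < N, θ n x = if idx x = n then 1 else 0 := by
          intro n hn
          have : θ n x = (E n).indicator (fun _ => (1:ℝ)) x := by
            by_contra h'
            exact hxb (mem_biUnion (Finset.mem_coe.2 (Finset.mem_range.2 hn)) h')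
          rw [this, indicator_apply]
          simp [hE, hxU]
        rw [indicator_apply]
        exact cell_avg_le hW hWnn (ha x).1 (ha x).2 (hqP x) ht (hidxs x) (hAR x) hB
    have hms : MeasurableSet {x | N ≤ idx x} := hidxm measurableSet_Ici
    have hmZ : Measurable fun x => ENNReal.ofReal (a x * cellZ W (q x) (A x)) :=
      (ham.mul ((measurable_cellZ hW hWnn).comp hqA)).ennreal_ofReal
    calc _ ≤ ∫⁻ x in U, (G x (h⁻¹ • x + y) + ENNReal.ofReal (M * τ)) := lintegral_mono step1
      _ = (∫⁻ x in U, G x (h⁻¹ • x + y)) + ENNReal.ofReal (M * τ) * volume U := by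
          rw [lintegral_add_right _ measurable_const, setLIntegral_const]
      _ ≤ (∫⁻ x in U, ∫⁻ z in unitCube 2, G x z) + ENNReal.ofReal (η / 8) := add_le_add hy hτ'
      _ ≤ (∫⁻ x in U, (ENNReal.ofReal (a x * cellZ W (q x) (A x)) + ENNReal.ofReal (M * τ) +
          ({x | N ≤ idx x}.indicator (fun _ => ENNReal.ofReal (M * B)) x) +
          bad.indicator (fun _ => ENNReal.ofReal (M * B')) x)) + ENNReal.ofReal (η / 8) :=
          add_le_add (setLIntegral_mono' hU.measurableSet step2) le_rfl
      _ = (∫⁻ x in U, ENNReal.ofReal (a x * cellZ W (q x) (A x))) + ENNReal.ofReal (M * τ) * volume U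
          + ENNReal.ofReal (M * B) * volume (U ∩ {x | N ≤ idx x}) +
          ENNReal.ofReal (M * B') * volume (bad ∩ U) + ENNReal.ofReal (η / 8) := by
          rw [lintegral_add_right _ (measurable_const.indicator hbadm),
            lintegral_add_right _ (measurable_const.indicator hms),
            lintegral_add_right _ measurable_const, setLIntegral_const,
            lintegral_indicator_const hbadm, lintegral_indicator_const hms,
            Measure.restrict_apply hbadm, Measure.restrict_apply hms, inter_comm U]
      _ ≤ (∫⁻ x in U, ENNReal.ofReal (a x * cellZ W (q x) (A x))) + ENNReal.ofReal (η / 8)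
          + ENNReal.ofReal (η / 4) + ENNReal.ofReal (η / 4) + ENNReal.ofReal (η / 8) := by
          gcongr
          exact hδ' _ ((measure_mono inter_subset_left).trans hbad_le)
      _ ≤ _ := by
          rw [add_assoc, add_assoc, add_assoc, ← ENNReal.ofReal_add (by positivity) (by positivity),
            ← ENNReal.ofReal_add (by positivity) (by positivity),
            ← ENNReal.ofReal_add (by positivity) (by positivity)]
          gcongr
          linarith

/-! ### The cell formula is below the quasiconvex envelope -/

theorem IsPer.exists_bound {n : ℕ} {E : Type*} [NormedAddCommGroup E] {f : Euc n → E}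
    (hf : IsPer f) (hc : Continuous f) : ∃ M : ℝ, ∀ x, ‖f x‖ ≤ M := by
  obtain ⟨M, hM⟩ := (isCompact_closedCube n).exists_bound_of_continuousOn hc.continuousOn
  refine ⟨M, fun x => ?_⟩
  have hmem : roundE x ∈ Submodule.span ℤ
      (range (EuclideanSpace.basisFun (Fin n) ℝ).toBasis) := by
    have : roundE x = ∑ j, round (x j) • (EuclideanSpace.basisFun (Fin n) ℝ).toBasis j := by
      ext i
      simp [roundE, Pi.single_apply]
    rw [this]
    exact Submodule.sum_mem _ fun j _ => Submodule.smul_mem _ _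
      (Submodule.subset_span (mem_range_self j))
  have h := hf.span hmem (x - roundE x)
  rw [sub_add_cancel] at h
  rw [h]
  exact hM _ fun j => by simpa [roundE] using abs_sub_round (x j)

theorem isComp_perExt {u b : Euc 2 → Euc 3} (hu : ContDiff ℝ (⊤ : ℕ∞) u)
    (hb : ContDiff ℝ (⊤ : ℕ∞) b) (hus : tsupport u ⊆ unitCube 2) (hbs : tsupport b ⊆ unitCube 2) :
    IsComp (perExt u) (perExt b) := by
  have h1 := contDiff_perExt hu hus
  have h2 := contDiff_perExt hb hbs
  obtain ⟨M₁, hM₁⟩ := (isPer_perExt u).exists_bound h1.continuous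
  obtain ⟨M₂, hM₂⟩ := (isPer_perExt u).gradMat.exists_bound (continuous_gradMat h1)
  obtain ⟨M₃, hM₃⟩ := (isPer_perExt b).exists_bound h2.continuous
  exact ⟨h1, h2, isPer_perExt u, isPer_perExt b, max M₁ (max M₂ M₃), fun x =>
    ⟨(hM₁ x).trans (le_max_left _ _), (hM₂ x).trans ((le_max_left _ _).trans (le_max_right _ _)),
      (hM₃ x).trans ((le_max_right _ _).trans (le_max_right _ _))⟩⟩

theorem measurable_cellZ_comp {W : Mat 3 3 → ℝ} (hW : Continuous W) (hWnn : ∀ ξ, 0 ≤ W ξ)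
    {X : Type*} [MeasurableSpace X] {q : X → ℝ} {A : X → Mat 3 2} (hq : Measurable q)
    (hA : Measurable A) : Measurable fun x => cellZ W (q x) (A x) := by
  have := (measurable_cellZ hW hWnn).comp (hq.prodMk hA)
  exact this

/-- Inserting nearly optimal oscillations into `φ` and extending periodically gives a pair admissible
in the cell problem at `ξ`. -/
theorem cellZ_le_integral {W : Mat 3 3 → ℝ} (hW : Continuous W) (hWnn : ∀ ξ, 0 ≤ W ξ) (q : ℝ)
    (ξ : Mat 3 2) {φ : Euc 2 → Euc 3} (hφ : ContDiff ℝ (⊤ : ℕ∞) φ) (hφs : tsupport φ ⊆ unitCube 2) :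
    cellZ W q ξ ≤ ∫ x in unitCube 2, cellZ W q (ξ + gradMat φ x) := by
  have hφc : HasCompactSupport φ := (isCompact_closedCube 2).of_isClosed_subset
    (isClosed_tsupport _) (hφs.trans (unitCube_subset_closedCube 2))
  have hgc : Continuous fun x => ξ + gradMat φ x := continuous_const.add (continuous_gradMat hφ)
  have hmeas : Measurable fun x => cellZ W q (ξ + gradMat φ x) :=
    measurable_cellZ_comp hW hWnn measurable_const hgc.measurable
  obtain ⟨R, hR, hgb⟩ := exists_norm_bound_of_hcs (continuous_gradMat hφ) (hcs_gradMat hφc)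
  obtain ⟨B, hB0, hB⟩ := exists_Wpow_bound hW q (‖ξ‖ + R)
  have hinteg : IntegrableOn (fun x => cellZ W q (ξ + gradMat φ x)) (unitCube 2) := by
    refine Measure.integrableOn_of_bounded (M := B) (by simp [volume_unitCube])
      hmeas.aestronglyMeasurable (Eventually.of_forall fun x => ?_)
    rw [Real.norm_eq_abs, abs_of_nonneg (cellZ_nonneg hWnn _ _)]
    refine (cellZ_le_const hWnn q _ 0).trans (hB q le_rfl _ (norm_joinCols_le ?_ ?_))
    · exact (norm_add_le _ _).trans (add_le_add le_rfl (hgb x))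
    · rw [norm_zero]; positivity
  refine le_of_forall_pos_le_add fun η hη => ?_
  obtain ⟨u, b, hu, hb, -, -, hus, hbs, -, hE⟩ := core_pointwise hW hWnn (isOpen_unitCube 2)
    (by simp [volume_unitCube]) hφ hφc hφs ξ (a := fun _ => 1) (q := fun _ => q) measurable_const
    measurable_const (M := 1) (P := q) (fun _ => ⟨zero_le_one, le_rfl⟩) (fun _ => le_rfl) hη
  have hC := isComp_perExt hu hb hus hbs
  have h0 : 0 ≤ ∫ x in unitCube 2, cellZ W q (ξ + gradMat φ x) :=
    integral_nonneg fun _ => cellZ_nonneg hWnn _ _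
  refine (cellZ_le hWnn hC q ξ).trans ?_
  rw [← ENNReal.ofReal_le_ofReal_iff (add_nonneg h0 hη.le), ofReal_cellE hW hWnn hC]
  rw [ENNReal.ofReal_add h0 hη.le, ofReal_integral_eq_lintegral_ofReal hinteg
    (Eventually.of_forall fun _ => cellZ_nonneg hWnn _ _)]
  simp only [one_mul] at hE
  refine le_trans (le_of_eq ?_) hE
  refine setLIntegral_congr_fun (isOpen_unitCube 2).measurableSet fun y hy => ?_
  simp only
  rw [perExt_of_mem b hy, gradMat_congr (perExt_eventuallyEq u hy)]

/-- The cell formula is quasiconvex: a smooth competitor with nearly optimal oscillations inserted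
in the cube becomes, after periodic extension, admissible in the cell problem. -/
theorem quasiconvexFn_cellZ {W : Mat 3 3 → ℝ} (hW : Continuous W) (hWnn : ∀ ξ, 0 ≤ W ξ) (q : ℝ) :
    QuasiconvexFn (cellZ W q) :=
  fun ξ _ hφ hφs => cellZ_le_integral hW hWnn q ξ hφ hφs

/-- Testing with `φ = 0` and constant columns gives `cellZ ≤ W^q`; the infimum over the column is
taken after extracting the `q`-th root. -/
theorem cellZ_le_W₀ {W : Mat 3 3 → ℝ} (hWnn : ∀ ξ, 0 ≤ W ξ) {q : ℝ} (hq : 1 ≤ q) (ξ : Mat 3 2) :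
    cellZ W q ξ ≤ (⨅ ξ₃ : Fin 3 → ℝ, W (joinCols ξ ξ₃)) ^ q := by
  have hq0 : 0 < q := by linarith
  have hZ := cellZ_nonneg hWnn q ξ
  have h : cellZ W q ξ ^ q⁻¹ ≤ ⨅ ξ₃ : Fin 3 → ℝ, W (joinCols ξ ξ₃) := le_ciInf fun b => by
    have := cellZ_le_const hWnn q ξ b
    rw [max_eq_left hq] at this
    calc _ ≤ (W (joinCols ξ b) ^ q) ^ q⁻¹ := Real.rpow_le_rpow hZ this (by positivity)
      _ = _ := Real.rpow_rpow_inv (hWnn _) hq0.ne'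
  calc cellZ W q ξ = (cellZ W q ξ ^ q⁻¹) ^ q := (Real.rpow_inv_rpow hZ hq0.ne').symm
    _ ≤ _ := Real.rpow_le_rpow (Real.rpow_nonneg hZ _) h hq0.le

/-- The only property of the envelope that is needed: it dominates quasiconvex minorants. -/
theorem cellZ_le_qcEnvelope {W : Mat 3 3 → ℝ} (hW : Continuous W) (hWnn : ∀ ξ, 0 ≤ W ξ) {q : ℝ}
    (hq : 1 ≤ q) (ξ : Mat 3 2) :
    cellZ W q ξ ≤ qcEnvelope (fun η : Mat 3 2 => (⨅ ξ₃ : Fin 3 → ℝ, W (joinCols η ξ₃)) ^ q) ξ := by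
  refine le_csSup ⟨(⨅ ξ₃ : Fin 3 → ℝ, W (joinCols ξ ξ₃)) ^ q, ?_⟩
    ⟨cellZ W q, quasiconvexFn_cellZ hW hWnn q, fun η => cellZ_le_W₀ hWnn hq η, rfl⟩
  rintro t ⟨h, -, hle, rfl⟩
  exact hle ξ

/-- Insertion of nearly optimal oscillations, for coefficients controlled almost everywhere. -/
theorem core {W : Mat 3 3 → ℝ} (hW : Continuous W) (hWnn : ∀ ξ, 0 ≤ W ξ)
    {U : Set (Euc 2)} (hU : IsOpen U) (hUf : volume U ≠ ⊤)
    {v : Euc 2 → Euc 3} (hv : ContDiff ℝ (⊤ : ℕ∞) v) (hvc : HasCompactSupport v)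
    (hvU : tsupport v ⊆ U) {a q : Euc 2 → ℝ} (ham : Measurable a) (hqm : Measurable q)
    {M P : ℝ} (ha : ∀ᵐ x ∂(volume.restrict U), 0 ≤ a x ∧ a x ≤ M)
    (hqP : ∀ᵐ x ∂(volume.restrict U), 1 ≤ q x ∧ q x ≤ P) {η : ℝ} (hη : 0 < η) :
    ∃ u b : Euc 2 → Euc 3, ContDiff ℝ (⊤ : ℕ∞) u ∧ ContDiff ℝ (⊤ : ℕ∞) b ∧
      HasCompactSupport u ∧ HasCompactSupport b ∧ tsupport u ⊆ U ∧ tsupport b ⊆ U ∧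
      (∀ x, ‖u x - v x‖ ≤ η) ∧
      ∫⁻ x in U, ENNReal.ofReal (a x * W (joinCols (gradMat u x) (b x)) ^ q x) ≤
        (∫⁻ x in U, ENNReal.ofReal (a x * cellZ W (q x) (gradMat v x))) + ENNReal.ofReal η := by
  obtain ⟨u, b, h1, h2, h3, h4, h5, h6, h7, h8⟩ := core_pointwise hW hWnn hU hUf hv hvc hvU 0
    (a := fun x => max 0 (min (a x) (max M 0))) (q := fun x => min (q x) P)
    (measurable_const.max (ham.min measurable_const)) (hqm.min measurable_const)
    (M := max M 0) (P := P) (fun x => ⟨le_max_left _ _, max_le (le_max_right _ _) (min_le_right _ _)⟩)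
    (fun x => min_le_right _ _) hη
  refine ⟨u, b, h1, h2, h3, h4, h5, h6, h7, ?_⟩
  simp only [zero_add] at h8
  refine le_trans (le_of_eq ?_) (h8.trans (le_of_eq ?_))
  · refine lintegral_congr_ae ?_
    filter_upwards [ha, hqP] with x hx hqx
    rw [min_eq_left (hx.2.trans (le_max_left _ _)), max_eq_right hx.1, min_eq_left hqx.2,
      max_eq_left hqx.1]
  · congr 1
    refine lintegral_congr_ae ?_
    filter_upwards [ha, hqP] with x hx hqx
    rw [min_eq_left (hx.2.trans (le_max_left _ _)), max_eq_right hx.1, min_eq_left hqx.2]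

/-! ### Jensen's inequality and modular boundedness of averages -/

/-- Jensen's inequality for a measure of total mass at most `1` with density `k`. -/
theorem lintegral_weight_rpow_le {α : Type*} [MeasurableSpace α] {μ : Measure α}
    {k g : α → ℝ≥0∞} (hk : Measurable k) (hg : Measurable g) (hk1 : ∫⁻ y, k y ∂μ ≤ 1)
    {q : ℝ} (hq : 1 ≤ q) :
    (∫⁻ y, k y * g y ∂μ) ^ q ≤ ∫⁻ y, k y * g y ^ q ∂μ := by
  have hq0 : 0 < q := by linarith
  have h := eLpNorm'_le_eLpNorm'_mul_rpow_measure_univ (μ := μ.withDensity k) (f := g)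
    one_pos hq hg.aestronglyMeasurable
  have hm : (μ.withDensity k) univ ≤ 1 := by
    rw [withDensity_apply _ MeasurableSet.univ]; simpa using hk1
  have hm' : (μ.withDensity k) univ ^ (1 / (1:ℝ) - 1 / q) ≤ 1 := by
    apply ENNReal.rpow_le_one hm
    rw [sub_nonneg]; exact one_div_le_one_div_of_le one_pos hq
  have h2 := h.trans (mul_le_mul' le_rfl hm')
  rw [mul_one] at h2
  simp only [eLpNorm'_eq_lintegral_enorm, enorm_eq_self, ENNReal.rpow_one, div_one] at h2
  rw [lintegral_withDensity_eq_lintegral_mul _ hk hg,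
    lintegral_withDensity_eq_lintegral_mul _ hk (hg.pow_const q)] at h2
  simp only [Pi.mul_apply] at h2
  calc (∫⁻ y, k y * g y ∂μ) ^ q ≤ ((∫⁻ y, k y * g y ^ q ∂μ) ^ (1 / q)) ^ q :=
        ENNReal.rpow_le_rpow h2 hq0.le
    _ = _ := by rw [← ENNReal.rpow_mul, one_div_mul_cancel hq0.ne', ENNReal.rpow_one]

/-- With exponent `γ / log δ⁻¹` the power of `4 * δ⁻²` is bounded independently of `δ`. -/
theorem rpow_log_bound {γ δ : ℝ} (hγ : 0 < γ) (hδ : 0 < δ) (hδ2 : δ < 1 / 2) :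
    0 < Real.log δ⁻¹ ∧ 1 ≤ 4 * (δ⁻¹) ^ 2 ∧
      (4 * (δ⁻¹) ^ 2) ^ (γ / Real.log δ⁻¹) ≤ Real.exp (4 * γ) := by
  have h2 : 2 < δ⁻¹ := by
    rw [lt_inv_comm₀ two_pos hδ]; linarith
  have hL2 : Real.log 2 ≤ Real.log δ⁻¹ := Real.log_le_log two_pos h2.le
  have hL : 0 < Real.log δ⁻¹ := (Real.log_pos one_lt_two).trans_le hL2
  refine ⟨hL, by nlinarith, ?_⟩
  have hpos : (0:ℝ) < 4 * (δ⁻¹) ^ 2 := by positivity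
  rw [Real.rpow_def_of_pos hpos]
  apply Real.exp_le_exp.2
  have : Real.log (4 * (δ⁻¹) ^ 2) = 2 * Real.log 2 + 2 * Real.log δ⁻¹ := by
    rw [Real.log_mul (by norm_num) (by positivity), Real.log_pow,
      show (4:ℝ) = 2 ^ 2 by norm_num, Real.log_pow]; norm_num
  rw [this]
  calc (2 * Real.log 2 + 2 * Real.log δ⁻¹) * (γ / Real.log δ⁻¹)
      ≤ (4 * Real.log δ⁻¹) * (γ / Real.log δ⁻¹) :=
        mul_le_mul_of_nonneg_right (by linarith) (by positivity)
    _ = 4 * γ := by rw [mul_div_assoc', div_eq_iff hL.ne']; ring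

/-- Modular bound for averages at scale `δ` of a function with values in `{0} ∪ [1,∞]`. The
log-Hölder condition is exactly what keeps `(4δ⁻²)^{|p x - p y|}` bounded when `|x - y| < δ`. -/
theorem moll_modular {ω : Set (Euc 2)} (hω : MeasurableSet ω) {p : Euc 2 → ℝ} (hp : Measurable p)
    {γ δ : ℝ} (hγ : 0 < γ)
    (hlog : ∀ x ∈ ω, ∀ y ∈ ω, 0 < dist x y → dist x y < 1/2 →
      |p x - p y| ≤ γ / |Real.log (dist x y)|)
    (hp1 : ∀ᵐ x ∂(volume.restrict ω), 1 ≤ p x) {g : Euc 2 → ℝ≥0∞} (hg : Measurable g)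
    (hg1 : ∀ y, g y = 0 ∨ 1 ≤ g y) (hI : ∫⁻ y in ω, g y ^ p y ≤ 1)
    {k : Euc 2 → ℝ≥0∞} (hk : Measurable k) (hk0 : ∀ z, δ ≤ ‖z‖ → k z = 0)
    (hk1 : ∫⁻ z, k z ≤ 1) (hkB : ∀ z, k z ≤ ENNReal.ofReal (4 * (δ⁻¹) ^ 2))
    (hδ : 0 < δ) (hδ2 : δ < 1 / 2) :
    ∫⁻ x in ω, (∫⁻ y in ω, k (x - y) * g y) ^ p x ≤
      ENNReal.ofReal (Real.exp (4 * γ)) * ∫⁻ y in ω, g y ^ p y := by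
  obtain ⟨hL, hB1, hBe⟩ := rpow_log_bound hγ hδ hδ2
  set L := Real.log δ⁻¹ with hLdef
  have hkx : ∀ x, Measurable fun y => k (x - y) := fun x => hk.comp (measurable_const.sub measurable_id)
  have hgp : Measurable fun y => g y ^ p y := hg.pow hp
  have hB1' : 1 ≤ ENNReal.ofReal (4 * (δ⁻¹) ^ 2) := by
    rw [ENNReal.one_le_ofReal]; exact hB1
  have hpt : ∀ x ∈ ω, 1 ≤ p x → (∫⁻ y in ω, k (x - y) * g y) ^ p x ≤
      ENNReal.ofReal (Real.exp (4 * γ)) * ∫⁻ y in ω, k (x - y) * g y ^ p y := by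
    intro x hx hpx
    -- `q` is below `p` on the ball of radius `δ` around `x`, so Jensen applies with a fixed exponent
    set q := max 1 (p x - γ / L) with hq
    have hq1 : 1 ≤ q := le_max_left _ _
    have hγL : 0 < γ / L := by positivity
    have hqp : q ≤ p x := max_le hpx (by linarith)
    have hpq : p x - q ≤ γ / L := by
      have := le_max_right 1 (p x - γ / L); rw [← hq] at this; linarith
    have hmass : ∫⁻ y in ω, k (x - y) ≤ 1 := by
      refine (setLIntegral_le_lintegral _ _).trans ?_
      rw [lintegral_sub_left_eq_self]; exact hk1
    have hJ := lintegral_weight_rpow_le (μ := volume.restrict ω) (hkx x) hg hmass hq1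
    set I := ∫⁻ y in ω, k (x - y) * g y ^ p y with hIdef
    have hqI : ∫⁻ y in ω, k (x - y) * g y ^ q ≤ I := by
      apply lintegral_mono_ae
      filter_upwards [hp1, ae_restrict_mem hω] with y hy1 hyω
      by_cases hd : δ ≤ ‖x - y‖
      · simp [hk0 _ hd]
      push Not at hd
      apply mul_le_mul' le_rfl
      rcases hg1 y with h0 | h1
      · rw [h0, ENNReal.zero_rpow_of_pos (by linarith), ENNReal.zero_rpow_of_pos (by linarith)]
      · apply ENNReal.rpow_le_rpow_of_exponent_le h1
        apply max_le hy1
        rcases eq_or_ne x y with rfl | hne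
        · linarith
        have hd0 : 0 < dist x y := dist_pos.2 hne
        rw [← dist_eq_norm] at hd
        have h3 := hlog x hx y hyω hd0 (hd.trans hδ2)
        have h4 : L ≤ |Real.log (dist x y)| := by
          rw [hLdef, Real.log_inv]
          refine le_trans ?_ (neg_le_abs _)
          exact neg_le_neg (Real.log_le_log hd0 hd.le)
        have h5 : γ / |Real.log (dist x y)| ≤ γ / L := div_le_div_of_nonneg_left hγ.le hL h4
        have := abs_le.1 (h3.trans h5)
        linarith [this.2]
    have hIB : I ≤ ENNReal.ofReal (4 * (δ⁻¹) ^ 2) := by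
      calc I ≤ ∫⁻ y in ω, ENNReal.ofReal (4 * (δ⁻¹) ^ 2) * g y ^ p y :=
            lintegral_mono fun y => mul_le_mul' (hkB _) le_rfl
        _ = ENNReal.ofReal (4 * (δ⁻¹) ^ 2) * ∫⁻ y in ω, g y ^ p y := lintegral_const_mul _ hgp
        _ ≤ ENNReal.ofReal (4 * (δ⁻¹) ^ 2) * 1 := mul_le_mul' le_rfl hI
        _ = _ := mul_one _
    set e := p x / q - 1 with he
    have hq0 : 0 < q := by linarith
    have he0 : 0 ≤ e := by rw [he, sub_nonneg, le_div_iff₀ hq0]; linarith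
    have heL : e ≤ γ / L := by
      rw [he, div_sub_one hq0.ne']
      exact (div_le_self (by linarith) hq1).trans hpq
    calc (∫⁻ y in ω, k (x - y) * g y) ^ p x
        = ((∫⁻ y in ω, k (x - y) * g y) ^ q) ^ (1 + e) := by
          rw [← ENNReal.rpow_mul]; congr 1; rw [he]; field_simp; ring
      _ ≤ I ^ (1 + e) := ENNReal.rpow_le_rpow (hJ.trans hqI) (by linarith)
      _ = I * I ^ e := by rw [ENNReal.rpow_add_of_nonneg _ _ zero_le_one he0, ENNReal.rpow_one]
      _ ≤ I * ENNReal.ofReal (Real.exp (4 * γ)) := by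
          apply mul_le_mul' le_rfl
          calc I ^ e ≤ ENNReal.ofReal (4 * (δ⁻¹) ^ 2) ^ e := ENNReal.rpow_le_rpow hIB he0
            _ ≤ ENNReal.ofReal (4 * (δ⁻¹) ^ 2) ^ (γ / L) :=
              ENNReal.rpow_le_rpow_of_exponent_le hB1' heL
            _ = ENNReal.ofReal ((4 * (δ⁻¹) ^ 2) ^ (γ / L)) :=
              ENNReal.ofReal_rpow_of_pos (by positivity)
            _ ≤ _ := ENNReal.ofReal_le_ofReal hBe
      _ = _ := mul_comm _ _
  have hmeas2 : Measurable (Function.uncurry fun x y : Euc 2 => k (x - y) * g y ^ p y) :=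
    (hk.comp (measurable_fst.sub measurable_snd)).mul (hgp.comp measurable_snd)
  calc ∫⁻ x in ω, (∫⁻ y in ω, k (x - y) * g y) ^ p x
      ≤ ∫⁻ x in ω, ENNReal.ofReal (Real.exp (4 * γ)) * ∫⁻ y in ω, k (x - y) * g y ^ p y := by
        apply lintegral_mono_ae
        filter_upwards [hp1, ae_restrict_mem hω] with x hx1 hx using hpt x hx hx1
    _ = ENNReal.ofReal (Real.exp (4 * γ)) * ∫⁻ x in ω, ∫⁻ y in ω, k (x - y) * g y ^ p y := by
        rw [lintegral_const_mul]
        exact hmeas2.lintegral_prod_right'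
    _ ≤ _ := by
        apply mul_le_mul' le_rfl
        rw [lintegral_lintegral_swap hmeas2.aemeasurable]
        apply lintegral_mono fun y => ?_
        dsimp only
        have hky : Measurable fun x => k (x - y) := hk.comp (measurable_id.sub measurable_const)
        rw [lintegral_mul_const _ hky]
        have : ∫⁻ x in ω, k (x - y) ≤ 1 := by
          refine (setLIntegral_le_lintegral _ _).trans ?_
          rw [lintegral_sub_right_eq_self (fun x => k x)]; exact hk1
        calc _ ≤ 1 * g y ^ p y := mul_le_mul' this le_rfl
          _ = _ := one_mul _

/-! ### Mollification -/

/-- A smooth bump at the origin of the plane supported in the ball of radius `1/(k+3)`. -/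
def bump (k : ℕ) : ContDiffBump (0 : Euc 2) :=
  { rIn := 1 / (2 * ((k:ℝ) + 3)), rOut := 1 / ((k:ℝ) + 3)
    rIn_pos := by positivity
    rIn_lt_rOut := by
      apply one_div_lt_one_div_of_lt (by positivity)
      have : (0:ℝ) ≤ k := k.cast_nonneg
      linarith }

/-- The mollifying kernel. -/
def rho (k : ℕ) : Euc 2 → ℝ := (bump k).normed volume

section
variable {E : Type*} [NormedAddCommGroup E] [NormedSpace ℝ E]

/-- Mollification of `f` at scale `1/(k+3)`. -/
def moll (k : ℕ) (f : Euc 2 → E) : Euc 2 → E :=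
  convolution (rho k) f (ContinuousLinearMap.lsmul ℝ ℝ) volume

theorem moll_apply (k : ℕ) (f : Euc 2 → E) (x : Euc 2) :
    moll k f x = ∫ y, rho k (x - y) • f y := by
  unfold moll
  rw [convolution_eq_swap]; rfl

theorem rOut_pos (k : ℕ) : 0 < (bump k).rOut := (bump k).rOut_pos

theorem rOut_lt_half (k : ℕ) : (bump k).rOut < 1 / 2 := by
  change 1 / ((k:ℝ) + 3) < 1 / 2
  apply one_div_lt_one_div_of_lt (by norm_num)
  have : (0:ℝ) ≤ k := k.cast_nonneg
  linarith

theorem tendsto_rOut : Tendsto (fun k => (bump k).rOut) atTop (𝓝 0) := by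
  change Tendsto (fun k : ℕ => 1 / ((k:ℝ) + 3)) atTop (𝓝 0)
  have := (tendsto_one_div_add_atTop_nhds_zero_nat (𝕜 := ℝ)).comp (tendsto_add_atTop_nat 2)
  refine this.congr fun k => ?_
  simp only [Function.comp]; push_cast; ring_nf

theorem contDiff_rho (k : ℕ) : ContDiff ℝ (⊤ : ℕ∞) (rho k) := (bump k).contDiff_normed

theorem hcs_rho (k : ℕ) : HasCompactSupport (rho k) := (bump k).hasCompactSupport_normed

theorem rho_nonneg (k : ℕ) (x) : 0 ≤ rho k x := (bump k).nonneg_normed x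

theorem rho_eq_zero (k : ℕ) {z : Euc 2} (hz : (bump k).rOut ≤ ‖z‖) : rho k z = 0 := by
  have := (bump k).support_normed_eq (μ := volume)
  by_contra h
  have h2 : z ∈ Function.support (rho k) := h
  unfold rho at h2
  rw [this] at h2
  simp at h2
  linarith

theorem lintegral_rho (k : ℕ) : ∫⁻ z, ENNReal.ofReal (rho k z) = 1 := by
  have h := ofReal_integral_eq_lintegral_ofReal (f := rho k) (μ := volume)
    (bump k).integrable_normed (Eventually.of_forall (rho_nonneg k))
  rw [← h]
  unfold rho
  rw [(bump k).integral_normed]; simp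

theorem rho_le (k : ℕ) (z) : rho k z ≤ 4 * ((bump k).rOut⁻¹) ^ 2 := by
  have h := (bump k).normed_le_div_measure_closedBall_rIn volume z
  refine h.trans ?_
  have h0 := (bump k).rIn_pos
  have hr : (bump k).rIn = (bump k).rOut / 2 := by
    change 1 / (2 * ((k:ℝ) + 3)) = 1 / ((k:ℝ) + 3) / 2
    rw [div_div, mul_comm]
  rw [Measure.real, EuclideanSpace.volume_closedBall_fin_two, ENNReal.toReal_mul, ENNReal.toReal_pow,
    ENNReal.toReal_ofReal h0.le, ENNReal.toReal_ofReal Real.pi_pos.le, hr]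
  have := rOut_pos k
  rw [show 4 * ((bump k).rOut⁻¹) ^ 2 = 1 / (((bump k).rOut / 2) ^ 2 * 1) by field_simp; norm_num]
  apply one_div_le_one_div_of_le (by positivity)
  apply mul_le_mul_of_nonneg_left _ (by positivity)
  linarith [Real.pi_gt_three]

theorem enorm_moll_le (k : ℕ) (f : Euc 2 → E) (x : Euc 2) :
    ‖moll k f x‖ₑ ≤ ∫⁻ y, ENNReal.ofReal (rho k (x - y)) * ‖f y‖ₑ := by
  rw [moll_apply]
  refine (enorm_integral_le_lintegral_enorm _).trans (lintegral_mono fun y => ?_)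
  dsimp only
  rw [enorm_smul, ← ofReal_norm, Real.norm_of_nonneg (rho_nonneg k _)]

theorem enorm_moll_le_of_le (k : ℕ) {f : Euc 2 → E} {N : ℝ≥0∞} (hN : ∀ y, ‖f y‖ₑ ≤ N) (x : Euc 2) :
    ‖moll k f x‖ₑ ≤ N := by
  refine (enorm_moll_le k f x).trans ?_
  calc _ ≤ ∫⁻ y, ENNReal.ofReal (rho k (x - y)) * N :=
        lintegral_mono fun y => mul_le_mul' le_rfl (hN y)
    _ = (∫⁻ y, ENNReal.ofReal (rho k (x - y))) * N := by
        rw [lintegral_mul_const]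
        exact ((contDiff_rho k).continuous.comp (continuous_const.sub continuous_id)).measurable.ennreal_ofReal
    _ = N := by
        rw [lintegral_sub_left_eq_self (fun z => ENNReal.ofReal (rho k z)), lintegral_rho, one_mul]

theorem continuous_moll (k : ℕ) {f : Euc 2 → E} (hf : LocallyIntegrable f volume) :
    Continuous (moll k f) :=
  ((hcs_rho k).contDiff_convolution_left (n := (⊤:ℕ∞)) _ (contDiff_rho k) hf).continuous

theorem contDiff_moll (k : ℕ) {f : Euc 2 → E} (hf : LocallyIntegrable f volume) :
    ContDiff ℝ (⊤ : ℕ∞) (moll k f) :=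
  (hcs_rho k).contDiff_convolution_left (n := (⊤:ℕ∞)) _ (contDiff_rho k) hf

theorem moll_add (k : ℕ) {f g : Euc 2 → E} (hf : LocallyIntegrable f volume)
    (hg : LocallyIntegrable g volume) (x) : moll k (f + g) x = moll k f x + moll k g x := by
  unfold moll
  have h1 := (hcs_rho k).convolutionExists_left (ContinuousLinearMap.lsmul ℝ ℝ)
    (contDiff_rho k).continuous hf
  have h2 := (hcs_rho k).convolutionExists_left (ContinuousLinearMap.lsmul ℝ ℝ)
    (contDiff_rho k).continuous hg
  exact (h1 x).distrib_add (h2 x)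

theorem ae_tendsto_moll [CompleteSpace E] {f : Euc 2 → E} (hf : LocallyIntegrable f volume) :
    ∀ᵐ x, Tendsto (fun k => moll k f x) atTop (𝓝 (f x)) := by
  refine ContDiffBump.ae_convolution_tendsto_right_of_locallyIntegrable (K := 2)
    (φ := fun k => bump k) tendsto_rOut (Eventually.of_forall fun k => ?_) hf
  change 1 / ((k:ℝ) + 3) ≤ 2 * (1 / (2 * ((k:ℝ) + 3)))
  apply le_of_eq; field_simp
end

theorem add3_rpow_le (x y z : ℝ≥0∞) {p P : ℝ} (hp : 0 ≤ p) (hpP : p ≤ P) :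
    (x + y + z) ^ p ≤ 3 ^ P * (x ^ p + y ^ p + z ^ p) := by
  have h1 : x + y + z ≤ 3 * max x (max y z) := by
    calc x + y + z ≤ max x (max y z) + max x (max y z) + max x (max y z) := by
          gcongr <;> simp
      _ = _ := by ring
  calc (x + y + z) ^ p ≤ (3 * max x (max y z)) ^ p := ENNReal.rpow_le_rpow h1 hp
    _ = 3 ^ p * (max x (max y z)) ^ p := ENNReal.mul_rpow_of_nonneg _ _ hp
    _ ≤ 3 ^ P * (x ^ p + y ^ p + z ^ p) := by
        apply mul_le_mul' (ENNReal.rpow_le_rpow_of_exponent_le (by norm_num) hpP)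
        rcases max_choice x (max y z) with h | h
        · rw [h]; exact le_add_right le_self_add
        rw [h]
        rcases max_choice y z with h | h <;> rw [h]
        · exact le_add_right le_add_self
        · exact le_add_self

/-- Integrability from a finite modular with exponents at least one on a set of finite measure. -/
theorem lintegral_enorm_lt_top {n : ℕ} {E : Type*} [NormedAddCommGroup E]
    {ω : Set (Euc n)} (hωf : volume ω ≠ ⊤) {p : Euc n → ℝ}
    (hp1 : ∀ᵐ x ∂(volume.restrict ω), 1 ≤ p x) {f : Euc n → E}
    (hI : ∫⁻ y in ω, ‖f y‖ₑ ^ p y ≠ ⊤) : ∫⁻ y in ω, ‖f y‖ₑ < ⊤ := by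
  calc ∫⁻ y in ω, ‖f y‖ₑ ≤ ∫⁻ y in ω, (1 + ‖f y‖ₑ ^ p y) := by
        apply lintegral_mono_ae
        filter_upwards [hp1] with y hy
        rcases le_total (‖f y‖ₑ) 1 with h | h
        · exact le_add_right h
        · refine le_add_left ?_
          calc ‖f y‖ₑ = ‖f y‖ₑ ^ (1:ℝ) := (ENNReal.rpow_one _).symm
            _ ≤ _ := ENNReal.rpow_le_rpow_of_exponent_le h hy
    _ = volume ω + ∫⁻ y in ω, ‖f y‖ₑ ^ p y := by
        rw [lintegral_add_left measurable_const]; simp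
    _ < ⊤ := by
        rw [ENNReal.add_lt_top]; exact ⟨hωf.lt_top, hI.lt_top⟩

/-- Mollifications converge in modular. Bounded functions are handled by dominated convergence; the
part of `f` where `‖f‖` is large is controlled through `moll_modular`. -/
theorem tendsto_moll_modular {E : Type*} [NormedAddCommGroup E] [NormedSpace ℝ E] [CompleteSpace E]
    {ω : Set (Euc 2)} (hω : MeasurableSet ω) (hωf : volume ω ≠ ⊤)
    {p : Euc 2 → ℝ} (hp : Measurable p) {γ P : ℝ} (hγ : 0 < γ)
    (hlog : ∀ x ∈ ω, ∀ y ∈ ω, 0 < dist x y → dist x y < 1/2 →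
      |p x - p y| ≤ γ / |Real.log (dist x y)|)
    (hp1 : ∀ᵐ x ∂(volume.restrict ω), 1 ≤ p x ∧ p x ≤ P)
    {f : Euc 2 → E} (hf : StronglyMeasurable f) (hf0 : ∀ x, x ∉ ω → f x = 0)
    (hI : ∫⁻ y in ω, ‖f y‖ₑ ^ p y ≠ ⊤) :
    Tendsto (fun k => ∫⁻ x in ω, ‖moll k f x - f x‖ₑ ^ p x) atTop (𝓝 0) := by
  have hp1' : ∀ᵐ x ∂(volume.restrict ω), 1 ≤ p x := hp1.mono fun _ h => h.1
  have hfi : Integrable f volume := by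
    refine ⟨hf.aestronglyMeasurable, ?_⟩
    have := lintegral_enorm_lt_top hωf hp1' hI
    have h2 : ∫⁻ y, ‖f y‖ₑ = ∫⁻ y in ω, ‖f y‖ₑ := by
      rw [setLIntegral_eq_of_support_subset]
      intro y hy
      by_contra h
      exact hy (by simp [hf0 y h])
    rw [HasFiniteIntegral, h2]; exact this
  -- `f` is split into its large part `r N` and its bounded part `t N`
  let S : ℕ → Set (Euc 2) := fun N => {y | ((N:ℝ≥0∞) + 1) < ‖f y‖ₑ}
  have hS : ∀ N, MeasurableSet (S N) := fun N => measurableSet_lt measurable_const hf.enorm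
  let r : ℕ → Euc 2 → E := fun N => (S N).indicator f
  let t : ℕ → Euc 2 → E := fun N => (S N)ᶜ.indicator f
  have hrt : ∀ N, t N + r N = f := fun N => Set.indicator_compl_add_self _ _
  have hri : ∀ N, LocallyIntegrable (r N) volume := fun N => (hfi.indicator (hS N)).locallyIntegrable
  have hti : ∀ N, LocallyIntegrable (t N) volume := fun N =>
    (hfi.indicator (hS N).compl).locallyIntegrable
  have hrm : ∀ N, Measurable fun y => ‖r N y‖ₑ := fun N => (hf.indicator (hS N)).enorm
  have htm : ∀ N, StronglyMeasurable (t N) := fun N => hf.indicator (hS N).compl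
  have htN : ∀ N y, ‖t N y‖ₑ ≤ (N:ℝ≥0∞) + 1 := by
    intro N y
    by_cases hy : y ∈ (S N)ᶜ
    · simp only [t, indicator_of_mem hy]
      exact not_lt.1 hy
    · simp [t, indicator_of_notMem hy]
  have hR : Tendsto (fun N => ∫⁻ y in ω, ‖r N y‖ₑ ^ p y) atTop (𝓝 0) := by
    have := tendsto_lintegral_of_dominated_convergence' (μ := volume.restrict ω)
      (F := fun N y => ‖r N y‖ₑ ^ p y) (f := fun _ => 0) (fun y => ‖f y‖ₑ ^ p y)
      (fun N => ((hrm N).pow hp).aemeasurable) ?_ hI ?_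
    · simpa using this
    · intro N
      filter_upwards [hp1'] with y hy
      apply ENNReal.rpow_le_rpow _ (by linarith)
      by_cases h : y ∈ S N
      · simp [r, h]
      · simp [r, h]
    · filter_upwards [hp1'] with y hy
      apply tendsto_const_nhds.congr'
      obtain ⟨N, hN⟩ := ENNReal.exists_nat_gt (enorm_ne_top (x := f y))
      filter_upwards [eventually_ge_atTop N] with M hM
      have : y ∉ S M := by
        intro h
        have h2 : (M:ℝ≥0∞) + 1 < ‖f y‖ₑ := h
        have h3 : (N:ℝ≥0∞) ≤ M := by exact_mod_cast hM
        exact absurd (h2.trans (hN.trans_le (h3.trans le_self_add))) (lt_irrefl _)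
      simp only [r, indicator_of_notMem this, enorm_zero]
      rw [ENNReal.zero_rpow_of_pos (by linarith)]
  have hX : ∀ N, Tendsto (fun k => ∫⁻ x in ω, ‖moll k (t N) x - t N x‖ₑ ^ p x) atTop (𝓝 0) := by
    intro N
    have := tendsto_lintegral_of_dominated_convergence' (μ := volume.restrict ω)
      (F := fun k y => ‖moll k (t N) y - t N y‖ₑ ^ p y) (f := fun _ => 0)
      (fun y => ((N:ℝ≥0∞) + 1 + (N + 1)) ^ P) ?_ ?_ ?_ ?_
    · simpa using this
    · intro k
      refine AEMeasurable.pow ?_ hp.aemeasurable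
      exact ((continuous_moll k (hti N)).stronglyMeasurable.sub (htm N)).enorm.aemeasurable
    · intro k
      filter_upwards [hp1] with y hy
      calc ‖moll k (t N) y - t N y‖ₑ ^ p y ≤ ((N:ℝ≥0∞) + 1 + (N + 1)) ^ p y := by
            apply ENNReal.rpow_le_rpow _ (by linarith)
            refine enorm_sub_le.trans (add_le_add ?_ (htN N y))
            exact enorm_moll_le_of_le k (htN N) y
        _ ≤ _ := ENNReal.rpow_le_rpow_of_exponent_le (by
            calc (1:ℝ≥0∞) ≤ N + 1 := le_add_self
              _ ≤ _ := le_self_add) hy.2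
    · rw [lintegral_const]
      apply ENNReal.mul_ne_top
      · have : ((N:ℝ≥0∞) + 1 + (N + 1)) = ((2 * N + 2 : ℝ≥0) : ℝ≥0∞) := by push_cast; ring
        rw [this]
        exact ENNReal.rpow_ne_top_of_ne_zero (by positivity) ENNReal.coe_ne_top
      · simpa using hωf
    · filter_upwards [hp1', ae_restrict_of_ae (ae_tendsto_moll (hti N))] with y hy hyt
      have h1 : Tendsto (fun k => ‖moll k (t N) y - t N y‖ₑ) atTop (𝓝 0) := by
        have := (hyt.sub_const (t N y)).enorm
        simpa using this
      have := h1.ennrpow_const (p y)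
      rwa [ENNReal.zero_rpow_of_pos (by linarith)] at this
  set C : ℝ≥0∞ := 3 ^ P with hC
  have hCt : C ≠ ⊤ := ENNReal.rpow_ne_top_of_ne_zero (by norm_num) (by norm_num)
  set Q : ℝ≥0∞ := ENNReal.ofReal (Real.exp (4 * γ)) with hQ
  have main : ∀ N, ∫⁻ y in ω, ‖r N y‖ₑ ^ p y ≤ 1 → ∀ k,
      ∫⁻ x in ω, ‖moll k f x - f x‖ₑ ^ p x ≤
        C * (∫⁻ x in ω, ‖moll k (t N) x - t N x‖ₑ ^ p x)
          + C * (Q + 1) * ∫⁻ y in ω, ‖r N y‖ₑ ^ p y := by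
    intro N hN k
    have hY : ∫⁻ x in ω, ‖moll k (r N) x‖ₑ ^ p x ≤ Q * ∫⁻ y in ω, ‖r N y‖ₑ ^ p y := by
      have hmm := moll_modular hω hp hγ hlog hp1' (hrm N) (g := fun y => ‖r N y‖ₑ) (fun y => by
          by_cases h : y ∈ S N
          · right
            simp only [r, indicator_of_mem h]
            have h2 : (N:ℝ≥0∞) + 1 < ‖f y‖ₑ := h
            exact le_add_self.trans h2.le
          · left; simp [r, h]) hN (k := fun z => ENNReal.ofReal (rho k z))
          (contDiff_rho k).continuous.measurable.ennreal_ofReal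
          (fun z hz => by rw [rho_eq_zero k hz]; simp) (lintegral_rho k).le
          (fun z => ENNReal.ofReal_le_ofReal (rho_le k z)) (rOut_pos k) (rOut_lt_half k)
      refine le_trans ?_ hmm
      apply lintegral_mono_ae
      filter_upwards [hp1'] with x hx
      apply ENNReal.rpow_le_rpow _ (by linarith)
      refine (enorm_moll_le k _ x).trans (le_of_eq ?_)
      rw [setLIntegral_eq_of_support_subset]
      intro y hy
      by_contra h
      apply hy
      have : r N y = 0 := by
        simp only [r, Set.indicator_apply_eq_zero]; exact fun _ => hf0 y h
      simp [this]
    have hmX : AEMeasurable (fun x => ‖moll k (t N) x - t N x‖ₑ ^ p x) (volume.restrict ω) :=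
      AEMeasurable.pow ((continuous_moll k (hti N)).stronglyMeasurable.sub (htm N)).enorm.aemeasurable
        hp.aemeasurable
    have hmZ : AEMeasurable (fun x => ‖r N x‖ₑ ^ p x) (volume.restrict ω) :=
      ((hrm N).pow hp).aemeasurable
    have hmY : AEMeasurable (fun x => ‖moll k (r N) x‖ₑ ^ p x) (volume.restrict ω) :=
      ((continuous_moll k (hri N)).stronglyMeasurable.enorm.pow hp).aemeasurable
    calc ∫⁻ x in ω, ‖moll k f x - f x‖ₑ ^ p x
        ≤ ∫⁻ x in ω, C * (‖moll k (t N) x - t N x‖ₑ ^ p x + ‖moll k (r N) x‖ₑ ^ p x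
            + ‖r N x‖ₑ ^ p x) := by
          apply lintegral_mono_ae
          filter_upwards [hp1] with x hx
          refine le_trans ?_ (add3_rpow_le _ _ _ (by linarith) hx.2)
          apply ENNReal.rpow_le_rpow _ (by linarith)
          have e1 : moll k f x - f x = (moll k (t N) x - t N x) + moll k (r N) x - r N x := by
            have h1 : moll k f x = moll k (t N) x + moll k (r N) x := by
              rw [← moll_add k (hti N) (hri N), hrt]
            have h2 : f x = t N x + r N x := by
              have := congrFun (hrt N) x
              rw [← this]; rfl
            rw [h1, h2]; abel
          rw [e1]
          exact enorm_sub_le.trans (add_le_add (enorm_add_le _ _) le_rfl)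
      _ = C * (∫⁻ x in ω, ‖moll k (t N) x - t N x‖ₑ ^ p x)
          + C * (∫⁻ x in ω, ‖moll k (r N) x‖ₑ ^ p x) + C * ∫⁻ y in ω, ‖r N y‖ₑ ^ p y := by
          rw [lintegral_const_mul' _ _ hCt, lintegral_add_right' _ hmZ, lintegral_add_left' hmX,
            mul_add, mul_add]
      _ ≤ C * (∫⁻ x in ω, ‖moll k (t N) x - t N x‖ₑ ^ p x)
          + C * (Q * ∫⁻ y in ω, ‖r N y‖ₑ ^ p y) + C * ∫⁻ y in ω, ‖r N y‖ₑ ^ p y :=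
          add_le_add (add_le_add le_rfl (mul_le_mul' le_rfl hY)) le_rfl
      _ = _ := by ring
  rw [ENNReal.tendsto_nhds_zero]
  intro ε hε
  have hK : C * (Q + 1) ≠ ⊤ := ENNReal.mul_ne_top hCt (by simp [hQ])
  have hR' : Tendsto (fun N => C * (Q + 1) * ∫⁻ y in ω, ‖r N y‖ₑ ^ p y) atTop (𝓝 0) := by
    simpa using ENNReal.Tendsto.const_mul hR (Or.inr hK)
  have hε2 : 0 < ε / 2 := ENNReal.half_pos hε.ne'
  obtain ⟨N, hN1, hN2⟩ := ((ENNReal.tendsto_nhds_zero.1 hR 1 one_pos).and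
    (ENNReal.tendsto_nhds_zero.1 hR' _ hε2)).exists
  have hX' : Tendsto (fun k => C * ∫⁻ x in ω, ‖moll k (t N) x - t N x‖ₑ ^ p x) atTop (𝓝 0) := by
    simpa using ENNReal.Tendsto.const_mul (hX N) (Or.inr hCt)
  filter_upwards [ENNReal.tendsto_nhds_zero.1 hX' _ hε2] with k hk
  calc _ ≤ _ := main N hN1 k
    _ ≤ ε / 2 + ε / 2 := add_le_add hk hN2
    _ = ε := ENNReal.add_halves ε

/-! ### Mollified Sobolev maps -/

theorem IsWeakGrad.congr_ae {n d : ℕ} {Ω : Set (Euc n)} {v v' : Euc n → Euc d} {G G' : Euc n → Mat d n}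
    (h : IsWeakGrad Ω v G) (hv : ∀ᵐ x ∂(volume.restrict Ω), v x = v' x)
    (hG : ∀ᵐ x ∂(volume.restrict Ω), G x = G' x) : IsWeakGrad Ω v' G' := by
  intro φ h1 h2 h3 i j
  have := h φ h1 h2 h3 i j
  have e1 : ∫ x in Ω, φ x * G x i j = ∫ x in Ω, φ x * G' x i j :=
    integral_congr_ae (hG.mono fun x hx => by simp only [hx])
  have e2 : ∫ x in Ω, (fderiv ℝ φ x (EuclideanSpace.single j 1)) * v x i =
      ∫ x in Ω, (fderiv ℝ φ x (EuclideanSpace.single j 1)) * v' x i :=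
    integral_congr_ae (hv.mono fun x hx => by simp only [hx])
  rwa [e1, e2] at this

/-- Outside the support of a map its weak gradient vanishes. -/
theorem weakGrad_zero_off {ω K : Set (Euc 2)} (hω : IsOpen ω) (hK : IsClosed K)
    {w : Euc 2 → Euc 3} (hw0 : ∀ x, x ∉ K → w x = 0) {G : Euc 2 → Mat 3 2}
    (hG : ∀ i j, IntegrableOn (fun x => G x i j) ω) (h : IsWeakGrad ω w G) :
    ∀ᵐ x ∂(volume.restrict ω), x ∉ K → G x = 0 := by
  rw [ae_restrict_iff' hω.measurableSet]
  have hU : IsOpen (ω \ K) := hω.sdiff hK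
  have key : ∀ i j, ∀ᵐ x, x ∈ ω \ K → G x i j = 0 := by
    intro i j
    apply hU.ae_eq_zero_of_integral_contDiff_smul_eq_zero
    · exact ((hG i j).mono_set sdiff_subset).locallyIntegrableOn
    · intro g hg hgs hgt
      have h1 := h g hg hgs (hgt.trans sdiff_subset) i j
      have h2 : ∫ x in ω, (fderiv ℝ g x (EuclideanSpace.single j 1)) * w x i = 0 := by
        apply integral_eq_zero_of_ae
        refine Eventually.of_forall fun x => ?_
        by_cases hx : x ∈ K
        · have : x ∉ tsupport (fderiv ℝ g) := fun hx2 =>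
            (hgt (tsupport_fderiv_subset ℝ hx2)).2 hx
          simp [image_eq_zero_of_notMem_tsupport this]
        · simp [hw0 x hx]
      rw [h2, neg_zero] at h1
      rw [← h1, setIntegral_eq_integral_of_forall_compl_eq_zero]
      · rfl
      · intro x hx
        have : x ∉ tsupport g := fun h3 => hx (hgt h3).1
        simp [image_eq_zero_of_notMem_tsupport this]
  have : ∀ᵐ x, ∀ i j, x ∈ ω \ K → G x i j = 0 := by
    rw [ae_all_iff]; intro i; rw [ae_all_iff]; exact key i
  filter_upwards [this] with x hx hxω hxK
  ext i j
  exact hx i j ⟨hxω, hxK⟩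

/-- Mollification commutes with weak differentiation for maps supported inside `ω`. -/
theorem gradMat_moll {ω K : Set (Euc 2)} (hω : IsOpen ω) (hK : IsCompact K) (hKω : K ⊆ ω)
    {w : Euc 2 → Euc 3} (hw : Integrable w) (hw0 : ∀ x, x ∉ K → w x = 0) {F : Euc 2 → Mat 3 2}
    (hF : Integrable F) (hF0 : ∀ x, x ∉ K → F x = 0) (h : IsWeakGrad ω w F) (k : ℕ) (x : Euc 2) :
    gradMat (moll k w) x = moll k F x := by
  obtain ⟨K', hK', hKK', hK'ω⟩ := exists_compact_between hK hω hKω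
  obtain ⟨θ, hθ, hθs, hθt, -, hθ1⟩ := exists_smooth_cutoff hK' hω hK'ω
  have hρ := contDiff_rho k
  ext i j
  set e : Euc 2 := EuclideanSpace.single j 1 with he
  -- the left side as an integral
  have hL : gradMat (moll k w) x i j = ∫ y, fderiv ℝ (rho k) (x - y) e * w y i := by
    have hd := (hcs_rho k).hasFDerivAt_convolution_left (ContinuousLinearMap.lsmul ℝ ℝ)
      (hρ.of_le (by simp)) hw.locallyIntegrable x
    have hce := ((hcs_rho k).fderiv (𝕜 := ℝ)).convolutionExists_left
      ((ContinuousLinearMap.lsmul ℝ ℝ : ℝ →L[ℝ] Euc 3 →L[ℝ] Euc 3).precompL (Euc 2))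
      (hρ.continuous_fderiv (by simp)) hw.locallyIntegrable x
    have hcs := hce.integrable_swap
    unfold gradMat moll
    rw [hd.fderiv, convolution_eq_swap]
    let Λ : (Euc 2 →L[ℝ] Euc 3) →L[ℝ] ℝ :=
      (EuclideanSpace.proj i : Euc 3 →L[ℝ] ℝ).comp (ContinuousLinearMap.apply ℝ (Euc 3) e)
    have := Λ.integral_comp_comm hcs
    refine Eq.trans ?_ (this.symm.trans ?_)
    · rfl
    · apply integral_congr_ae
      exact Eventually.of_forall fun y => by simp [Λ, ContinuousLinearMap.precompL_apply]
  have hR : moll k F x i j = ∫ y, rho k (x - y) * F y i j := by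
    have hce := ((hcs_rho k).convolutionExists_left (ContinuousLinearMap.lsmul ℝ ℝ)
      hρ.continuous hF.locallyIntegrable x).integrable_swap
    rw [moll_apply]
    let Λ : Mat 3 2 →L[ℝ] ℝ :=
      (ContinuousLinearMap.proj (R := ℝ) (φ := fun _ : Fin 2 => ℝ) j).comp
        (ContinuousLinearMap.proj (R := ℝ) (φ := fun _ : Fin 3 => (Fin 2 → ℝ)) i)
    exact (Λ.integral_comp_comm hce).symm
  rw [hL, hR]
  have hφ : ContDiff ℝ (⊤ : ℕ∞) fun y => θ y * rho k (x - y) :=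
    hθ.mul (hρ.comp (contDiff_const.sub contDiff_id))
  have ht := h (fun y => θ y * rho k (x - y)) hφ hθs.mul_right
    ((tsupport_mul_subset_left (f := θ)).trans hθt) i j
  rw [setIntegral_eq_integral_of_forall_compl_eq_zero
      (fun y hy => by simp [hF0 y (fun h => hy (hKω h))]),
    setIntegral_eq_integral_of_forall_compl_eq_zero
      (fun y hy => by simp [hw0 y (fun h => hy (hKω h))])] at ht
  have e1 : ∫ y, θ y * rho k (x - y) * F y i j = ∫ y, rho k (x - y) * F y i j := by
    congr 1; ext y
    by_cases hy : y ∈ K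
    · rw [hθ1 y (interior_subset (hKK' hy)), one_mul]
    · simp [hF0 y hy]
  have e2 : ∫ y, fderiv ℝ (fun y => θ y * rho k (x - y)) y e * w y i =
      -∫ y, fderiv ℝ (rho k) (x - y) e * w y i := by
    rw [← integral_neg]
    congr 1; ext y
    by_cases hy : y ∈ K
    · have hloc : (fun z => θ z * rho k (x - z)) =ᶠ[𝓝 y] fun z => rho k (x - z) := by
        filter_upwards [isOpen_interior.mem_nhds (hKK' hy)] with z hz
        rw [hθ1 z (interior_subset hz), one_mul]
      rw [hloc.fderiv_eq]
      have h1 : HasFDerivAt (rho k) (fderiv ℝ (rho k) (x - y)) (x - y) :=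
        (hρ.differentiable (by simp) _).hasFDerivAt
      have h2 := h1.comp y ((hasFDerivAt_id y).const_sub x)
      have h3 : fderiv ℝ (fun z => rho k (x - z)) y = _ := h2.fderiv
      rw [h3]; simp
    · simp [hw0 y hy]
  rw [e1, e2, neg_neg] at ht
  exact ht.symm

theorem tsupport_moll {ω K : Set (Euc 2)} (hω : IsOpen ω) (hK : IsCompact K) (hKω : K ⊆ ω)
    {w : Euc 2 → Euc 3} (hw0 : ∀ x, x ∉ K → w x = 0) :
    ∀ᶠ k in atTop, HasCompactSupport (moll k w) ∧ tsupport (moll k w) ⊆ ω := by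
  obtain ⟨δ, hδ, hδω⟩ := hK.exists_cthickening_subset_open hω hKω
  filter_upwards [(tendsto_order.1 tendsto_rOut).2 δ hδ] with k hk
  have h0 : ∀ x, x ∉ Metric.cthickening δ K → moll k w x = 0 := by
    intro x hx
    rw [moll_apply]
    apply integral_eq_zero_of_ae
    refine Eventually.of_forall fun y => ?_
    by_cases hy : y ∈ K
    · have : δ ≤ ‖x - y‖ := by
        by_contra hc
        push Not at hc
        rw [← dist_eq_norm] at hc
        exact hx (Metric.mem_cthickening_of_dist_le x y δ K hy hc.le)
      simp [rho_eq_zero k (hk.le.trans this)]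
    · simp [hw0 y hy]
  have hsub : tsupport (moll k w) ⊆ Metric.cthickening δ K := by
    apply closure_minimal _ Metric.isClosed_cthickening
    intro x hx
    by_contra hc
    exact hx (h0 x hc)
  exact ⟨HasCompactSupport.of_support_subset_isCompact hK.cthickening
    (subset_closure.trans hsub), hsub.trans hδω⟩

theorem aesm_of_entries {α : Type*} [MeasurableSpace α] {μ : Measure α} {d n : ℕ} {G : α → Mat d n}
    (h : ∀ i j, AEMeasurable (fun x => G x i j) μ) : AEStronglyMeasurable G μ :=
  (aemeasurable_pi_lambda _ fun i => aemeasurable_pi_lambda _ fun j => h i j).aestronglyMeasurable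

theorem ofReal_norm_rpow {E : Type*} [SeminormedAddCommGroup E] (z : E) {p : ℝ} (hp : 0 ≤ p) :
    ENNReal.ofReal (‖z‖ ^ p) = ‖z‖ₑ ^ p := by
  rw [← ENNReal.ofReal_rpow_of_nonneg (norm_nonneg _) hp, ofReal_norm]

theorem enorm_rpow_le_mnorm {d n : ℕ} (ξ : Mat d n) {p : ℝ} (hp : 0 ≤ p) :
    ‖ξ‖ₑ ^ p ≤ ENNReal.ofReal (mnorm ξ ^ p) := by
  rw [← ofReal_norm_rpow _ hp]
  exact ENNReal.ofReal_le_ofReal (Real.rpow_le_rpow (norm_nonneg _) (norm_le_mnorm ξ) hp)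

/-- The modular distance between two pairs (map, gradient). -/
def modDist (ω : Set (Euc 2)) (p : Euc 2 → ℝ) (u : Euc 2 → Euc 3) (A : Euc 2 → Mat 3 2)
    (v : Euc 2 → Euc 3) (B : Euc 2 → Mat 3 2) : ℝ≥0∞ :=
  ∫⁻ x in ω, (‖u x - v x‖ₑ ^ p x + ‖A x - B x‖ₑ ^ p x)

/-- Smooth approximation, in modular, of compactly supported Sobolev maps. -/
theorem smooth_approx {ω : Set (Euc 2)} (hω : IsOpen ω) (hωf : volume ω ≠ ⊤)
    {p : Euc 2 → ℝ} (hp : Measurable p) {P : ℝ} (hlog : LogHolder ω p)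
    (hp1 : ∀ᵐ x ∂(volume.restrict ω), 1 ≤ p x ∧ p x ≤ P)
    {w : Euc 2 → Euc 3} {G : Euc 2 → Mat 3 2} (hw : MemW1pPlanar ω p w G)
    (hwc : HasCompactSupport w) (hwt : tsupport w ⊆ ω) {τ : ℝ≥0∞} (hτ : 0 < τ) :
    ∃ u : Euc 2 → Euc 3, ContDiff ℝ (⊤ : ℕ∞) u ∧ HasCompactSupport u ∧ tsupport u ⊆ ω ∧
      modDist ω p u (gradMat u) w G ≤ τ := by
  obtain ⟨γ, hγ, hlog⟩ := hlog
  obtain ⟨hwm, hGm, hwg, hwI, hGI⟩ := hw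
  have hp1' : ∀ᵐ x ∂(volume.restrict ω), 1 ≤ p x := hp1.mono fun _ h => h.1
  set K := tsupport w with hKdef
  have hKc : IsCompact K := hwc
  have hKm : MeasurableSet K := hKc.measurableSet
  have hGsm := aesm_of_entries hGm
  have hwI' : ∫⁻ y in ω, ‖w y‖ₑ ^ p y ≠ ⊤ := by
    refine ne_top_of_le_ne_top hwI.ne ?_
    apply lintegral_mono_ae
    filter_upwards [hp1'] with x hx
    rw [ofReal_norm_rpow _ (by linarith)]
  have hGI' : ∫⁻ y in ω, ‖G y‖ₑ ^ p y ≠ ⊤ := by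
    refine ne_top_of_le_ne_top hGI.ne ?_
    apply lintegral_mono_ae
    filter_upwards [hp1'] with x hx
    exact enorm_rpow_le_mnorm _ (by linarith)
  have hGint : IntegrableOn G ω := ⟨hGsm, lintegral_enorm_lt_top hωf hp1' hGI'⟩
  have hGij : ∀ i j, IntegrableOn (fun x => G x i j) ω := fun i j => (hGint.eval i).eval j
  have hw00 : ∀ x, x ∉ K → w x = 0 := fun x hx => image_eq_zero_of_notMem_tsupport hx
  have hGz := weakGrad_zero_off hω hKc.isClosed hw00 hGij hwg
  let w' : Euc 2 → Euc 3 := K.indicator (hwm.mk w)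
  let F : Euc 2 → Mat 3 2 := K.indicator (hGsm.mk G)
  have hw'0 : ∀ x, x ∉ K → w' x = 0 := fun x hx => indicator_of_notMem hx _
  have hF0 : ∀ x, x ∉ K → F x = 0 := fun x hx => indicator_of_notMem hx _
  have hw'e : ∀ᵐ x ∂(volume.restrict ω), w x = w' x := by
    filter_upwards [hwm.ae_eq_mk] with x hx
    by_cases hxK : x ∈ K
    · simp only [w', indicator_of_mem hxK]; exact hx
    · rw [hw'0 x hxK, hw00 x hxK]
  have hFe : ∀ᵐ x ∂(volume.restrict ω), G x = F x := by
    filter_upwards [hGsm.ae_eq_mk, hGz] with x hx hz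
    by_cases hxK : x ∈ K
    · simp only [F, indicator_of_mem hxK]; exact hx
    · rw [hF0 x hxK, hz hxK]
  have hw's : StronglyMeasurable w' := hwm.stronglyMeasurable_mk.indicator hKm
  have hFs : StronglyMeasurable F := hGsm.stronglyMeasurable_mk.indicator hKm
  have hw'I : ∫⁻ y in ω, ‖w' y‖ₑ ^ p y ≠ ⊤ := by
    have e : ∫⁻ y in ω, ‖w y‖ₑ ^ p y = ∫⁻ y in ω, ‖w' y‖ₑ ^ p y :=
      lintegral_congr_ae (hw'e.mono fun x hx => by simp only [hx])
    rwa [← e]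
  have hFI : ∫⁻ y in ω, ‖F y‖ₑ ^ p y ≠ ⊤ := by
    have e : ∫⁻ y in ω, ‖G y‖ₑ ^ p y = ∫⁻ y in ω, ‖F y‖ₑ ^ p y :=
      lintegral_congr_ae (hFe.mono fun x hx => by simp only [hx])
    rwa [← e]
  have toInt : ∀ {E : Type} [NormedAddCommGroup E] {f : Euc 2 → E}, StronglyMeasurable f →
      (∀ x, x ∉ K → f x = 0) → ∫⁻ y in ω, ‖f y‖ₑ ^ p y ≠ ⊤ → Integrable f := by
    intro E _ f hf hf0 hI
    refine ⟨hf.aestronglyMeasurable, ?_⟩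
    have h2 : ∫⁻ y, ‖f y‖ₑ = ∫⁻ y in ω, ‖f y‖ₑ := by
      rw [setLIntegral_eq_of_support_subset]
      intro y hy
      by_contra h
      exact hy (by simp [hf0 y fun h3 => h (hwt h3)])
    rw [HasFiniteIntegral, h2]; exact lintegral_enorm_lt_top hωf hp1' hI
  have hgr := gradMat_moll hω hKc hwt (toInt hw's hw'0 hw'I) hw'0 (toInt hFs hF0 hFI) hF0
    (hwg.congr_ae hw'e hFe)
  have t1 := tendsto_moll_modular hω.measurableSet hωf hp hγ hlog hp1 hw's
    (fun x hx => hw'0 x fun h => hx (hwt h)) hw'I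
  have t2 := tendsto_moll_modular hω.measurableSet hωf hp hγ hlog hp1 hFs
    (fun x hx => hF0 x fun h => hx (hwt h)) hFI
  have hτ2 : 0 < τ / 2 := ENNReal.half_pos hτ.ne'
  obtain ⟨k, hk1, hk2, hk3, hk4⟩ := ((ENNReal.tendsto_nhds_zero.1 t1 _ hτ2).and
    ((ENNReal.tendsto_nhds_zero.1 t2 _ hτ2).and
      (tsupport_moll hω hKc hwt hw'0))).exists
  have hcd := contDiff_moll k (toInt hw's hw'0 hw'I).locallyIntegrable
  refine ⟨moll k w', hcd, hk3, hk4, ?_⟩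
  unfold modDist
  have hm : Measurable fun x => ‖moll k w' x - w' x‖ₑ ^ p x :=
    (hcd.continuous.stronglyMeasurable.sub hw's).enorm.pow hp
  calc _ = ∫⁻ x in ω, (‖moll k w' x - w' x‖ₑ ^ p x + ‖moll k F x - F x‖ₑ ^ p x) := by
        apply lintegral_congr_ae
        filter_upwards [hw'e, hFe] with x h1 h2
        rw [h1, h2, hgr]
    _ ≤ τ / 2 + τ / 2 := by
        rw [lintegral_add_left hm]; exact add_le_add hk1 hk2
    _ = τ := ENNReal.add_halves τ

/-! ### Smooth approximation in energy -/

theorem mnorm_le_norm33 (ξ : Mat 3 3) : mnorm ξ ≤ 9 * ‖ξ‖ := by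
  refine (mnorm_le_sum ξ).trans ?_
  calc ∑ i, ∑ j, |ξ i j| ≤ ∑ i : Fin 3, ∑ j : Fin 3, ‖ξ‖ :=
        Finset.sum_le_sum fun i _ => Finset.sum_le_sum fun j _ =>
          (norm_le_pi_norm (ξ i) j).trans (norm_le_pi_norm ξ i)
    _ = 9 * ‖ξ‖ := by simp; ring

theorem modDist_triangle {ω : Set (Euc 2)} {p : Euc 2 → ℝ} (hp : Measurable p) {P : ℝ}
    (hp1 : ∀ᵐ x ∂(volume.restrict ω), 1 ≤ p x ∧ p x ≤ P)
    {u v w : Euc 2 → Euc 3} {A B C : Euc 2 → Mat 3 2}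
    (hu : AEStronglyMeasurable u (volume.restrict ω)) (hw : AEStronglyMeasurable w (volume.restrict ω))
    (hA : AEStronglyMeasurable A (volume.restrict ω)) (hC : AEStronglyMeasurable C (volume.restrict ω)) :
    modDist ω p u A v B ≤ 3 ^ P * (modDist ω p u A w C + modDist ω p w C v B) := by
  unfold modDist
  have hm : AEMeasurable (fun x => ‖u x - w x‖ₑ ^ p x + ‖A x - C x‖ₑ ^ p x) (volume.restrict ω) :=
    ((hu.sub hw).enorm.pow hp.aemeasurable).add ((hA.sub hC).enorm.pow hp.aemeasurable)
  rw [← lintegral_add_left' hm, ← lintegral_const_mul' _ _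
    (ENNReal.rpow_ne_top_of_ne_zero (by norm_num) (by norm_num))]
  apply lintegral_mono_ae
  filter_upwards [hp1] with x hx
  have key : ∀ {E : Type} [NormedAddCommGroup E] (a b c : E),
      ‖a - b‖ₑ ^ p x ≤ 3 ^ P * (‖a - c‖ₑ ^ p x + ‖c - b‖ₑ ^ p x) := by
    intro E _ a b c
    have h := add3_rpow_le ‖a - c‖ₑ ‖c - b‖ₑ 0 (p := p x) (P := P) (by linarith) hx.2
    rw [ENNReal.zero_rpow_of_pos (by linarith), add_zero, add_zero] at h
    refine le_trans (ENNReal.rpow_le_rpow ?_ (by linarith)) h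
    rw [show a - b = (a - c) + (c - b) by abel]
    exact enorm_add_le _ _
  calc _ ≤ 3 ^ P * (‖u x - w x‖ₑ ^ p x + ‖w x - v x‖ₑ ^ p x)
        + 3 ^ P * (‖A x - C x‖ₑ ^ p x + ‖C x - B x‖ₑ ^ p x) := add_le_add (key _ _ _) (key _ _ _)
    _ = _ := by ring

/-- Density of smooth compactly supported maps in `W^{1,p(·)}_0`, in modular. -/
theorem smooth_approx_zero {ω : Set (Euc 2)} (hω : IsOpen ω) (hωf : volume ω ≠ ⊤)
    {p : Euc 2 → ℝ} (hp : Measurable p) {P : ℝ} (hlog : LogHolder ω p)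
    (hp1 : ∀ᵐ x ∂(volume.restrict ω), 1 ≤ p x ∧ p x ≤ P)
    {v : Euc 2 → Euc 3} {G : Euc 2 → Mat 3 2} (hv : MemW1p0Planar ω p v G)
    {τ : ℝ≥0∞} (hτ : 0 < τ) :
    ∃ u : Euc 2 → Euc 3, ContDiff ℝ (⊤ : ℕ∞) u ∧ HasCompactSupport u ∧ tsupport u ⊆ ω ∧
      modDist ω p u (gradMat u) v G ≤ τ := by
  obtain ⟨-, w, Gw, hw, ht⟩ := hv
  have hCt : (3:ℝ≥0∞) ^ P ≠ ⊤ := ENNReal.rpow_ne_top_of_ne_zero (by norm_num) (by norm_num)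
  have hC0 : (3:ℝ≥0∞) ^ P ≠ 0 := (ENNReal.rpow_pos (by norm_num) (by norm_num)).ne'
  set σ := τ / (2 * 3 ^ P) with hσ
  have hσ0 : 0 < σ := ENNReal.div_pos hτ.ne' (ENNReal.mul_ne_top (by norm_num) hCt)
  obtain ⟨j, hj⟩ := (ENNReal.tendsto_nhds_zero.1 ht σ hσ0).exists
  obtain ⟨hwj, hwc, hwt⟩ := hw j
  obtain ⟨u, h1, h2, h3, h4⟩ := smooth_approx hω hωf hp hlog hp1 hwj hwc hwt hσ0
  refine ⟨u, h1, h2, h3, ?_⟩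
  have h5 : modDist ω p (w j) (Gw j) v G ≤ σ := by
    refine le_trans ?_ hj
    apply lintegral_mono_ae
    filter_upwards [hp1] with x hx
    rw [ofReal_norm_rpow _ (by linarith)]
    exact add_le_add le_rfl (enorm_rpow_le_mnorm _ (by linarith))
  have h6 := modDist_triangle (v := v) (B := G) hp hp1 h1.continuous.aestronglyMeasurable hwj.1
    (continuous_gradMat h1).aestronglyMeasurable (aesm_of_entries hwj.2.1)
  calc _ ≤ _ := h6
    _ ≤ 3 ^ P * (σ + σ) := mul_le_mul' le_rfl (add_le_add h4 h5)
    _ = (2 * 3 ^ P) * σ := by ring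
    _ ≤ τ := ENNReal.mul_div_le

theorem tendsto_zero_of_rpow {f : ℕ → ℝ≥0∞} {p : ℝ} (hp : 0 < p)
    (h : Tendsto (fun k => f k ^ p) atTop (𝓝 0)) : Tendsto f atTop (𝓝 0) := by
  have := h.ennrpow_const p⁻¹
  rw [ENNReal.zero_rpow_of_pos (inv_pos.2 hp)] at this
  refine this.congr fun k => ?_
  rw [← ENNReal.rpow_mul, mul_inv_cancel₀ hp.ne', ENNReal.rpow_one]

/-- The cell formula inherits growth of order `q` from `W`, by testing with zero oscillations. -/
theorem ofReal_cellZ_growth {W : Mat 3 3 → ℝ} (hWnn : ∀ ξ, 0 ≤ W ξ) {C₂ : ℝ} (hC₂ : 1 ≤ C₂)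
    (hWg : ∀ ξ, W ξ ≤ C₂ * (mnorm ξ + 1)) {P M : ℝ} {q a : ℝ} (hq : 1 ≤ q) (hqP : q ≤ P)
    (ha : a ≤ M) (ξ : Mat 3 2) :
    ENNReal.ofReal (a * cellZ W q ξ) ≤
      ENNReal.ofReal M * ENNReal.ofReal (9 * C₂) ^ P * (‖ξ‖ₑ + 1) ^ q := by
  have hZ := cellZ_nonneg hWnn q ξ
  have h1 : cellZ W q ξ ≤ (9 * C₂ * (‖ξ‖ + 1)) ^ q := by
    refine (cellZ_le_const hWnn q ξ 0).trans ?_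
    rw [max_eq_left hq]
    apply Real.rpow_le_rpow (hWnn _) _ (by linarith)
    have h2 : ‖joinCols ξ 0‖ ≤ ‖ξ‖ := norm_joinCols_le le_rfl (by simp)
    have h3 := hWg (joinCols ξ 0)
    have h4 := mnorm_le_norm33 (joinCols ξ 0)
    have h5 : 0 ≤ ‖ξ‖ := norm_nonneg _
    calc _ ≤ C₂ * (mnorm (joinCols ξ 0) + 1) := h3
      _ ≤ C₂ * (9 * ‖ξ‖ + 9) := mul_le_mul_of_nonneg_left (by linarith) (by linarith)
      _ = _ := by ring
  have hq0 : 0 ≤ q := by linarith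
  calc ENNReal.ofReal (a * cellZ W q ξ) ≤ ENNReal.ofReal (M * cellZ W q ξ) :=
        ENNReal.ofReal_le_ofReal (mul_le_mul_of_nonneg_right ha hZ)
    _ = ENNReal.ofReal M * ENNReal.ofReal (cellZ W q ξ) := ENNReal.ofReal_mul' hZ
    _ ≤ ENNReal.ofReal M * (ENNReal.ofReal (9 * C₂) ^ P * (‖ξ‖ₑ + 1) ^ q) := by
        apply mul_le_mul' le_rfl
        refine (ENNReal.ofReal_le_ofReal h1).trans ?_
        rw [← ENNReal.ofReal_rpow_of_nonneg (by positivity) hq0, ENNReal.ofReal_mul (by positivity),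
          ENNReal.mul_rpow_of_nonneg _ _ hq0,
          ENNReal.ofReal_add (norm_nonneg _) zero_le_one, ofReal_norm, ENNReal.ofReal_one]
        apply mul_le_mul' _ le_rfl
        exact ENNReal.rpow_le_rpow_of_exponent_le (by rw [ENNReal.one_le_ofReal]; linarith) hqP
    _ = _ := by ring

/-- A Sobolev map in `W^{1,p(·)}_0` can be replaced by a smooth compactly supported one, at the cost
of an arbitrarily small `L¹` error and an arbitrarily small increase of the relaxed energy. -/
theorem approx_energy {W : Mat 3 3 → ℝ} (hW : Continuous W) (hWnn : ∀ ξ, 0 ≤ W ξ) {C₂ : ℝ}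
    (hC₂ : 1 ≤ C₂) (hWg : ∀ ξ, W ξ ≤ C₂ * (mnorm ξ + 1))
    {ω : Set (Euc 2)} (hω : IsOpen ω) (hωf : volume ω ≠ ⊤)
    {p : Euc 2 → ℝ} (hp : Measurable p) {P : ℝ} (hlog : LogHolder ω p)
    (hp1 : ∀ᵐ x ∂(volume.restrict ω), 1 ≤ p x ∧ p x ≤ P)
    {a : Euc 2 → ℝ} (ham : Measurable a) {M : ℝ}
    (ha : ∀ᵐ x ∂(volume.restrict ω), 0 ≤ a x ∧ a x ≤ M)
    {v : Euc 2 → Euc 3} {G : Euc 2 → Mat 3 2} (hv : MemW1p0Planar ω p v G)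
    {η : ℝ≥0∞} (hη : 0 < η) :
    ∃ u : Euc 2 → Euc 3, ContDiff ℝ (⊤ : ℕ∞) u ∧ HasCompactSupport u ∧ tsupport u ⊆ ω ∧
      ∫⁻ x in ω, ‖u x - v x‖ₑ ≤ η ∧
      ∫⁻ x in ω, ENNReal.ofReal (a x * cellZ W (p x) (gradMat u x)) ≤
        (∫⁻ x in ω, ENNReal.ofReal (a x * cellZ W (p x) (G x))) + η := by
  -- The modular distances are summable: their pointwise sum `S` is finite almost everywhere, which
  -- gives pointwise convergence, and it is the dominating function.
  have hτ : ∀ j : ℕ, (0:ℝ≥0∞) < 2⁻¹ ^ (j + 1) := fun j => ENNReal.pow_pos (by norm_num) _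
  choose u hu1 hu2 hu3 hu4 using fun j : ℕ => smooth_approx_zero hω hωf hp hlog hp1 hv (hτ j)
  obtain ⟨hvm, hGm, -, -, hGI⟩ := hv.1
  have hGs := aesm_of_entries hGm
  set T : ℕ → Euc 2 → ℝ≥0∞ := fun j x => ‖u j x - v x‖ₑ ^ p x + ‖gradMat (u j) x - G x‖ₑ ^ p x
  set S : Euc 2 → ℝ≥0∞ := fun x => ∑' j, T j x with hS
  have hTm : ∀ j, AEMeasurable (T j) (volume.restrict ω) := fun j =>
    (((hu1 j).continuous.aestronglyMeasurable.sub hvm).enorm.pow hp.aemeasurable).add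
      (((continuous_gradMat (hu1 j)).aestronglyMeasurable.sub hGs).enorm.pow hp.aemeasurable)
  have hSI : ∫⁻ x in ω, S x ≠ ⊤ := by
    rw [hS, lintegral_tsum hTm]
    refine ne_top_of_le_ne_top ?_ (ENNReal.tsum_le_tsum hu4)
    rw [ENNReal.tsum_geometric_add_one]
    apply ENNReal.mul_ne_top (by norm_num)
    rw [ENNReal.one_sub_inv_two, inv_inv]; norm_num
  have hSm : AEMeasurable S (volume.restrict ω) := by
    have := AEMeasurable.ennreal_tsum hTm
    exact this
  have hSf : ∀ᵐ x ∂(volume.restrict ω), S x < ⊤ := ae_lt_top' hSm hSI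
  have hTS : ∀ j x, T j x ≤ S x := fun j x => ENNReal.le_tsum j
  have hT0 : ∀ᵐ x ∂(volume.restrict ω), Tendsto (fun j => T j x) atTop (𝓝 0) := by
    filter_upwards [hSf] with x hx
    exact ENNReal.tendsto_atTop_zero_of_tsum_ne_top hx.ne
  have hu0 : ∀ᵐ x ∂(volume.restrict ω), Tendsto (fun j => ‖u j x - v x‖ₑ) atTop (𝓝 0) := by
    filter_upwards [hT0, hp1] with x hx hpx
    exact tendsto_zero_of_rpow (by linarith) (tendsto_of_tendsto_of_tendsto_of_le_of_le
      tendsto_const_nhds hx (fun _ => zero_le) fun j => le_self_add)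
  have hA0 : ∀ᵐ x ∂(volume.restrict ω), Tendsto (fun j => gradMat (u j) x) atTop (𝓝 (G x)) := by
    filter_upwards [hT0, hp1] with x hx hpx
    have h : Tendsto (fun j => ‖gradMat (u j) x - G x‖ₑ) atTop (𝓝 0) :=
      tendsto_zero_of_rpow (p := p x) (by linarith) (tendsto_of_tendsto_of_tendsto_of_le_of_le
        tendsto_const_nhds hx (fun _ => zero_le) fun j => le_add_self)
    rw [tendsto_iff_edist_tendsto_0]
    simpa only [edist_eq_enorm_sub] using h
  have hL1 : Tendsto (fun j => ∫⁻ x in ω, ‖u j x - v x‖ₑ) atTop (𝓝 0) := by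
    have := tendsto_lintegral_of_dominated_convergence' (μ := volume.restrict ω)
      (F := fun j x => ‖u j x - v x‖ₑ) (f := fun _ => 0) (fun x => 1 + S x)
      (fun j => ((hu1 j).continuous.aestronglyMeasurable.sub hvm).enorm) (fun j => ?_) ?_ hu0
    · simpa using this
    · filter_upwards [hp1] with x hx
      rcases le_total (‖u j x - v x‖ₑ) 1 with h | h
      · exact le_add_right h
      · refine le_add_left (le_trans ?_ (hTS j x))
        refine le_trans ?_ le_self_add
        calc ‖u j x - v x‖ₑ = ‖u j x - v x‖ₑ ^ (1:ℝ) := (ENNReal.rpow_one _).symm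
          _ ≤ _ := ENNReal.rpow_le_rpow_of_exponent_le h hx.1
    · rw [lintegral_add_left measurable_const]
      exact ENNReal.add_ne_top.2 ⟨by simpa using hωf, hSI⟩
  set R := ∫⁻ x in ω, ENNReal.ofReal (a x * cellZ W (p x) (G x)) with hR
  have hlim : limsup (fun j => ∫⁻ x in ω, ENNReal.ofReal (a x * cellZ W (p x) (gradMat (u j) x)))
      atTop ≤ R := by
    set D : ℝ≥0∞ := ENNReal.ofReal M * ENNReal.ofReal (9 * C₂) ^ P with hD
    have hDt : D ≠ ⊤ := ENNReal.mul_ne_top ENNReal.ofReal_ne_top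
      (ENNReal.rpow_ne_top_of_ne_zero (by
        rw [Ne, ENNReal.ofReal_eq_zero]; push Not; linarith) ENNReal.ofReal_ne_top)
    have hCt : (3:ℝ≥0∞) ^ P ≠ ⊤ := ENNReal.rpow_ne_top_of_ne_zero (by norm_num) (by norm_num)
    refine (limsup_lintegral_le (μ := volume.restrict ω)
      (fun x => D * (3 ^ P * (S x + ‖G x‖ₑ ^ p x + 1))) (fun j => ?_) (fun j => ?_) ?_).trans ?_
    · exact (ham.mul (measurable_cellZ_comp hW hWnn hp
        (continuous_gradMat (hu1 j)).measurable)).ennreal_ofReal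
    · filter_upwards [hp1, ha] with x hx hax
      refine (ofReal_cellZ_growth hWnn hC₂ hWg hx.1 hx.2 hax.2 _).trans ?_
      apply mul_le_mul' le_rfl
      have h3 := add3_rpow_le ‖gradMat (u j) x - G x‖ₑ ‖G x‖ₑ 1 (p := p x) (P := P)
        (by linarith) hx.2
      rw [ENNReal.one_rpow] at h3
      refine le_trans (ENNReal.rpow_le_rpow ?_ (by linarith)) (h3.trans ?_)
      · apply add_le_add _ le_rfl
        calc ‖gradMat (u j) x‖ₑ = ‖(gradMat (u j) x - G x) + G x‖ₑ := by rw [sub_add_cancel]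
          _ ≤ _ := enorm_add_le _ _
      · apply mul_le_mul' le_rfl (add_le_add (add_le_add _ le_rfl) le_rfl)
        exact le_trans le_add_self (hTS j x)
    · rw [lintegral_const_mul' _ _ hDt, lintegral_const_mul' _ _ hCt,
        lintegral_add_right _ measurable_const, lintegral_add_left' hSm]
      refine ENNReal.mul_ne_top hDt (ENNReal.mul_ne_top hCt (ENNReal.add_ne_top.2
        ⟨ENNReal.add_ne_top.2 ⟨hSI, ?_⟩, by simpa using hωf⟩))
      refine ne_top_of_le_ne_top hGI.ne ?_
      apply lintegral_mono_ae
      filter_upwards [hp1] with x hx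
      exact enorm_rpow_le_mnorm _ (by linarith)
    · apply lintegral_mono_ae
      filter_upwards [hA0, ha] with x hx hax
      have husc := upperSemicontinuous_cellZ hW hWnn (p x, G x)
      have hc : ∀ c, cellZ W (p x) (G x) < c →
          limsup (fun j => ENNReal.ofReal (a x * cellZ W (p x) (gradMat (u j) x))) atTop ≤
            ENNReal.ofReal (a x * c) := by
        intro c hc
        apply limsup_le_of_le
        · isBoundedDefault
        · have h1 : Tendsto (fun j => (p x, gradMat (u j) x)) atTop (𝓝 (p x, G x)) :=
            tendsto_const_nhds.prodMk_nhds hx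
          filter_upwards [h1.eventually (husc c hc)] with j hj
          exact ENNReal.ofReal_le_ofReal (mul_le_mul_of_nonneg_left hj.le hax.1)
      have hcont : Tendsto (fun c => ENNReal.ofReal (a x * c)) (𝓝[>] (cellZ W (p x) (G x)))
          (𝓝 (ENNReal.ofReal (a x * cellZ W (p x) (G x)))) := by
        apply (ENNReal.continuous_ofReal.comp (continuous_const.mul continuous_id)).continuousAt.mono_left
          nhdsWithin_le_nhds
      exact ge_of_tendsto hcont (eventually_nhdsWithin_of_forall hc)
  have hev : ∀ᶠ j in atTop,
      ∫⁻ x in ω, ENNReal.ofReal (a x * cellZ W (p x) (gradMat (u j) x)) ≤ R + η := by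
    by_cases hRt : R = ⊤
    · exact Eventually.of_forall fun j => by simp [hRt]
    · have : limsup (fun j => ∫⁻ x in ω, ENNReal.ofReal (a x * cellZ W (p x) (gradMat (u j) x)))
          atTop < R + η := hlim.trans_lt (ENNReal.lt_add_right hRt hη.ne')
      exact (eventually_lt_of_limsup_lt this).mono fun j hj => hj.le
  obtain ⟨j, h1, h2⟩ := ((ENNReal.tendsto_nhds_zero.1 hL1 η hη).and hev).exists
  exact ⟨u j, hu1 j, hu2 j, hu3 j, h1, h2⟩

/-! ### Lifting to three dimensions -/

/-- The classical gradient of a smooth map is its weak gradient on every set. -/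
theorem isWeakGrad_gradMat {n d : ℕ} (Ω : Set (Euc n)) {U : Euc n → Euc d}
    (hU : ContDiff ℝ (⊤ : ℕ∞) U) : IsWeakGrad Ω U (gradMat U) := by
  intro φ hφ hφc hφΩ i j
  have hUi : ContDiff ℝ (⊤ : ℕ∞) fun x => U x i := contDiff_euclidean.1 hU i
  have hfd : ∀ x, gradMat U x i j = fderiv ℝ (fun x => U x i) x (EuclideanSpace.single j 1) := by
    intro x
    have h1 := (hU.differentiable (by simp) x).hasFDerivAt
    have h2 := (EuclideanSpace.proj i : Euc d →L[ℝ] ℝ).hasFDerivAt.comp x h1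
    rw [show (fun x => U x i) = (EuclideanSpace.proj i : Euc d →L[ℝ] ℝ) ∘ U
      from rfl, h2.fderiv]
    rfl
  have hd0 : Continuous fun x => fderiv ℝ φ x (EuclideanSpace.single j 1) :=
    (hφ.continuous_fderiv (by simp)).clm_apply continuous_const
  have hd1 : Continuous fun x => fderiv ℝ (fun x => U x i) x (EuclideanSpace.single j 1) :=
    (hUi.continuous_fderiv (by simp)).clm_apply continuous_const
  have hdc : HasCompactSupport fun x => fderiv ℝ φ x (EuclideanSpace.single j 1) :=
    hφc.fderiv_apply ℝ _
  rw [setIntegral_eq_integral_of_forall_compl_eq_zero, setIntegral_eq_integral_of_forall_compl_eq_zero]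
  · simp_rw [hfd]
    refine integral_mul_fderiv_eq_neg_fderiv_mul_of_integrable ?_ ?_ ?_ ?_ ?_
    · exact (hd0.mul hUi.continuous).integrable_of_hasCompactSupport hdc.mul_right
    · exact (hφ.continuous.mul hd1).integrable_of_hasCompactSupport hφc.mul_right
    · exact (hφ.continuous.mul hUi.continuous).integrable_of_hasCompactSupport hφc.mul_right
    · exact fun x _ => hφ.differentiable (by simp) x
    · exact fun x _ => hUi.differentiable (by simp) x
  · intro x hx
    have : x ∉ tsupport (fun x => fderiv ℝ φ x (EuclideanSpace.single j 1)) := fun h =>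
      hx (hφΩ (tsupport_fderiv_apply_subset ℝ _ h))
    rw [image_eq_zero_of_notMem_tsupport this, zero_mul]
  · intro x hx
    rw [image_eq_zero_of_notMem_tsupport fun h => hx (hφΩ h), zero_mul]

/-- The three-dimensional competitor `u(x_α) + ε x₃ b(x_α)`. -/
def lift (u b : Euc 2 → Euc 3) (ε : ℝ) (x : Euc 3) : Euc 3 :=
  u (projα x) + (ε * x 2) • b (projα x)

theorem contDiff_lift {u b : Euc 2 → Euc 3} (hu : ContDiff ℝ (⊤ : ℕ∞) u)
    (hb : ContDiff ℝ (⊤ : ℕ∞) b) (ε : ℝ) : ContDiff ℝ (⊤ : ℕ∞) (lift u b ε) := by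
  have hp : ContDiff ℝ (⊤ : ℕ∞) projα := projL.contDiff
  have h2 : ContDiff ℝ (⊤ : ℕ∞) fun x : Euc 3 => x 2 := contDiff_euclidean.1 contDiff_id 2
  exact (hu.comp hp).add ((contDiff_const.mul h2).smul (hb.comp hp))

theorem projα_single_zero : projα (EuclideanSpace.single 0 1) = EuclideanSpace.single 0 1 := by
  ext i; fin_cases i <;> simp
theorem projα_single_one : projα (EuclideanSpace.single 1 1) = EuclideanSpace.single 1 1 := by
  ext i; fin_cases i <;> simp
theorem projα_single_two : projα (EuclideanSpace.single 2 1) = 0 := by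
  ext i; fin_cases i <;> simp

theorem gradMat_lift {u b : Euc 2 → Euc 3} (hu : ContDiff ℝ (⊤ : ℕ∞) u)
    (hb : ContDiff ℝ (⊤ : ℕ∞) b) (ε : ℝ) (x : Euc 3) :
    gradMat (lift u b ε) x = joinCols (gradMat u (projα x) + (ε * x 2) • gradMat b (projα x))
      (ε • (b (projα x)).ofLp) := by
  have hp : HasFDerivAt projα projL x := projL.hasFDerivAt
  have h1 := (hu.differentiable (by simp) (projα x)).hasFDerivAt.comp x hp
  have h2 := (hb.differentiable (by simp) (projα x)).hasFDerivAt.comp x hp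
  have h3 := ((EuclideanSpace.proj 2 : Euc 3 →L[ℝ] ℝ).hasFDerivAt
    (x := x)).const_mul ε
  have h4 := h1.add (h3.smul h2)
  have h5 : HasFDerivAt (lift u b ε) _ x := h4
  ext i j
  unfold gradMat
  rw [h5.fderiv]
  fin_cases j <;>
    simp [joinCols, projL_apply, projα_single_zero, projα_single_one, projα_single_two]

theorem scaleCol_gradMat_lift {u b : Euc 2 → Euc 3} (hu : ContDiff ℝ (⊤ : ℕ∞) u)
    (hb : ContDiff ℝ (⊤ : ℕ∞) b) {ε : ℝ} (hε : 0 < ε) (x : Euc 3) :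
    scaleCol ε (gradMat (lift u b ε) x) =
      joinCols (gradMat u (projα x) + (ε * x 2) • gradMat b (projα x)) (b (projα x)) := by
  rw [gradMat_lift hu hb]
  ext i j
  fin_cases j <;> simp [scaleCol, joinCols]
  field_simp

/-- The lifted map vanishes near the lateral boundary, so it is the constant sequence approximating
itself. -/
theorem memLatZero_lift {ω : Set (Euc 2)} (hω : IsOpen ω) {u b : Euc 2 → Euc 3}
    (hu : ContDiff ℝ (⊤ : ℕ∞) u) (hb : ContDiff ℝ (⊤ : ℕ∞) b) (huω : tsupport u ⊆ ω)
    (hbω : tsupport b ⊆ ω) (ε : ℝ) {r : ℝ} (hr : r ≠ 0) :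
    MemLatZero ω r (lift u b ε) (gradMat (lift u b ε)) := by
  have hl := contDiff_lift hu hb ε
  refine ⟨fun _ => lift u b ε, fun _ => gradMat (lift u b ε), fun _ => isWeakGrad_gradMat _ hl,
    fun _ => hl.continuous.locallyIntegrable, fun _ i l => ?_, fun _ => ?_, ?_⟩
  · exact Continuous.locallyIntegrable
      ((continuous_apply l).comp ((continuous_apply i).comp (continuous_gradMat hl)))
  · refine ⟨projα ⁻¹' (tsupport u ∪ tsupport b)ᶜ,
      ((isClosed_tsupport u).union (isClosed_tsupport b)).isOpen_compl.preimage continuous_projα,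
      fun x hx => ?_, fun x hx => ?_⟩
    · have h1 : projα x ∉ ω := fun h => by
        have := hx.1
        rw [hω.frontier_eq] at this
        exact this.2 h
      rintro (h | h)
      exacts [h1 (huω h), h1 (hbω h)]
    · have h1 : projα x ∉ tsupport u := fun h => hx (Or.inl h)
      have h2 : projα x ∉ tsupport b := fun h => hx (Or.inr h)
      simp [lift, image_eq_zero_of_notMem_tsupport h1, image_eq_zero_of_notMem_tsupport h2]
  · simp [mnorm, Real.zero_rpow hr]

/-- Bounds of the competitor and its gradients on the rescaled domain, uniform in `ε ≤ 1`. -/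
theorem lift_bounds {ω : Set (Euc 2)} {u b : Euc 2 → Euc 3} (hu : ContDiff ℝ (⊤ : ℕ∞) u)
    (hb : ContDiff ℝ (⊤ : ℕ∞) b) (huc : HasCompactSupport u) (hbc : HasCompactSupport b) :
    ∃ R : ℝ, 1 ≤ R ∧ ∀ x ∈ thinDomain ω, ∀ ε, 0 < ε → ε ≤ 1 → ‖lift u b ε x‖ ≤ R ∧
      mnorm (gradMat (lift u b ε) x) ≤ R ∧
      ‖joinCols (gradMat u (projα x) + (ε * x 2) • gradMat b (projα x)) (b (projα x))‖ ≤ R ∧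
      ‖b (projα x)‖ ≤ R := by
  obtain ⟨R₁, h1, H1⟩ := exists_norm_bound_of_hcs hu.continuous huc
  obtain ⟨R₂, h2, H2⟩ := exists_norm_bound_of_hcs hb.continuous hbc
  obtain ⟨R₃, h3, H3⟩ := exists_norm_bound_of_hcs (continuous_gradMat hu) (hcs_gradMat huc)
  obtain ⟨R₄, h4, H4⟩ := exists_norm_bound_of_hcs (continuous_gradMat hb) (hcs_gradMat hbc)
  set S := R₁ + R₂ + R₃ + R₄ + 1 with hS
  refine ⟨9 * S, by linarith, fun x hx ε h0 hε1 => ?_⟩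
  have hx2 := hx.2
  have he : |ε * x 2| ≤ 1 := by
    rw [abs_mul, abs_of_pos h0]
    have : |x 2| ≤ 1 := abs_le.2 ⟨by linarith [hx2.1], by linarith [hx2.2]⟩
    nlinarith [abs_nonneg (x 2)]
  have hA : ‖gradMat u (projα x) + (ε * x 2) • gradMat b (projα x)‖ ≤ S := by
    refine (norm_add_le _ _).trans ?_
    rw [norm_smul, Real.norm_eq_abs]
    have := H3 (projα x)
    have := mul_le_mul he (H4 (projα x)) (norm_nonneg _) zero_le_one
    linarith
  have hB : ‖b (projα x)‖ ≤ S := by have := H2 (projα x); linarith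
  refine ⟨?_, ?_, ?_, by linarith⟩
  · refine (norm_add_le _ _).trans ?_
    rw [norm_smul, Real.norm_eq_abs]
    have := H1 (projα x)
    have := mul_le_mul he (H2 (projα x)) (norm_nonneg _) zero_le_one
    linarith
  · refine (mnorm_le_norm33 _).trans ?_
    rw [gradMat_lift hu hb]
    have : ‖ε • (b (projα x)).ofLp‖ ≤ S := by
      rw [norm_smul, Real.norm_eq_abs, abs_of_pos h0]
      have := (norm_ofLp_le (b (projα x))).trans hB
      nlinarith [norm_nonneg (b (projα x)).ofLp]
    have := norm_joinCols_le hA this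
    linarith
  · have := norm_joinCols_le hA ((norm_ofLp_le (b (projα x))).trans hB)
    linarith

/-! ### Convergence of the lifted energies -/

theorem volume_thinDomain {ω : Set (Euc 2)} (hω : MeasurableSet ω) :
    volume (thinDomain ω) = volume ω := by
  have h := (measurePreserving_projα hω).measure_preimage MeasurableSet.univ.nullMeasurableSet
  simpa using h

/-- Along a sequence of thicknesses, `L^∞` convergence is a bound uniform in almost every `x`. -/
theorem exists_linf_rate {ω : Set (Euc 2)} {f : Euc 3 → ℝ} {f₀ : Euc 2 → ℝ}
    (h : ScaledTendstoLinf ω f f₀) {εs : ℕ → ℝ} (hpos : ∀ k, 0 < εs k)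
    (hlim : Tendsto εs atTop (𝓝 0)) :
    ∃ e : ℕ → ℝ≥0∞, Tendsto e atTop (𝓝 0) ∧ ∀ᵐ x ∂(volume.restrict (thinDomain ω)),
      ∀ k, ‖f (scaleX (εs k) x) - f₀ (projα x)‖ₑ ≤ e k := by
  refine ⟨_, h.comp (tendsto_nhdsWithin_iff.2 ⟨hlim, Eventually.of_forall hpos⟩), ?_⟩
  rw [ae_all_iff]
  intro k
  simp only [Function.comp_def, eLpNorm_exponent_top]
  exact ae_le_eLpNormEssSup (f := fun x => f (scaleX (εs k) x) - f₀ (projα x))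

theorem eventually_linf_close {ω : Set (Euc 2)} {f : Euc 3 → ℝ} {f₀ : Euc 2 → ℝ}
    (h : ScaledTendstoLinf ω f f₀) {εs : ℕ → ℝ} (hpos : ∀ k, 0 < εs k)
    (hlim : Tendsto εs atTop (𝓝 0)) {δ : ℝ} (hδ : 0 < δ) :
    ∀ᶠ k in atTop, ∀ᵐ x ∂(volume.restrict (thinDomain ω)),
      |f (scaleX (εs k) x) - f₀ (projα x)| ≤ δ := by
  obtain ⟨e, he, hx⟩ := exists_linf_rate h hpos hlim
  filter_upwards [he.eventually_le_const (ENNReal.ofReal_pos.2 hδ)] with k hk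
  filter_upwards [hx] with x hx
  have := (hx k).trans hk
  rwa [← ofReal_norm, ENNReal.ofReal_le_ofReal_iff hδ.le] at this

theorem ae_tendsto_linf {ω : Set (Euc 2)} {f : Euc 3 → ℝ} {f₀ : Euc 2 → ℝ}
    (h : ScaledTendstoLinf ω f f₀) {εs : ℕ → ℝ} (hpos : ∀ k, 0 < εs k)
    (hlim : Tendsto εs atTop (𝓝 0)) :
    ∀ᵐ x ∂(volume.restrict (thinDomain ω)),
      Tendsto (fun k => f (scaleX (εs k) x)) atTop (𝓝 (f₀ (projα x))) := by
  obtain ⟨e, he, hx⟩ := exists_linf_rate h hpos hlim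
  filter_upwards [hx] with x hx
  rw [tendsto_iff_edist_tendsto_0]
  refine tendsto_of_tendsto_of_tendsto_of_le_of_le tendsto_const_nhds he (fun _ => zero_le)
    fun k => ?_
  rw [edist_eq_enorm_sub]
  exact hx k

/-- A pointwise lower bound of `a` passes to the limit `a₀`. -/
theorem ae_lower_bound {ω : Set (Euc 2)} (hω : MeasurableSet ω) {a : Euc 3 → ℝ} {a₀ : Euc 2 → ℝ}
    (h : ScaledTendstoLinf ω a a₀) (ham : Measurable a₀) {am : ℝ}
    (ha : ∀ x ∈ thinDomain ω, am ≤ a x) : ∀ᵐ x ∂(volume.restrict ω), am ≤ a₀ x := by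
  have hs : MeasurableSet {x | am ≤ a₀ x} := measurableSet_le measurable_const ham
  have hp := measurePreserving_projα hω
  rw [← hp.map_eq, ae_map_iff hp.measurable.aemeasurable hs]
  have ht := ae_tendsto_linf h (εs := fun k : ℕ => 1 / ((k : ℝ) + 1)) (fun k => by positivity)
    tendsto_one_div_add_atTop_nhds_zero_nat
  have hT : MeasurableSet (thinDomain ω) := by
    have h1 : MeasurableSet {x : Euc 3 | x 2 ∈ Ioo (-(1/2) : ℝ) (1/2)} :=
      measurableSet_Ioo.preimage (f := fun x : Euc 3 => x 2) (by fun_prop)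
    exact (hp.measurable hω).inter h1
  filter_upwards [ht, ae_restrict_mem hT] with x hx hxT
  refine ge_of_tendsto' hx fun k => ha _ (scaleX_mem (by positivity) ?_ hxT)
  rw [div_le_one (by positivity)]
  have : (0:ℝ) ≤ k := k.cast_nonneg
  linarith

/-- The exponent `pminus` is an essential infimum over a set of positive measure; on a null set it
would take a default value. -/
theorem one_le_pminus {ω : Set (Euc 2)} (hne : volume (thinDomain ω) ≠ 0) {p : Euc 3 → ℝ}
    (hp : IsPb (thinDomain ω) p) : 1 ≤ pminus ω p := by
  obtain ⟨-, pm, pM, hpm, h⟩ := hp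
  have : NeBot (ae (volume.restrict (thinDomain ω))) := ae_neBot.2 (by
    rwa [Ne, Measure.restrict_eq_zero])
  refine hpm.le.trans (le_liminf_of_le ?_ (h.mono fun x hx => hx.1))
  exact IsBoundedUnder.isCoboundedUnder_ge ⟨pM, eventually_map.2 (h.mono fun x hx => hx.2)⟩

theorem emod_lt_top {ω : Set (Euc 2)} (hf : volume (thinDomain ω) ≠ ⊤)
    (hT : MeasurableSet (thinDomain ω)) {q g : Euc 3 → ℝ} {P R : ℝ} (hR : 1 ≤ R)
    (hq : ∀ᵐ x ∂(volume.restrict (thinDomain ω)), 0 ≤ q x ∧ q x ≤ P)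
    (hg : ∀ x ∈ thinDomain ω, 0 ≤ g x ∧ g x ≤ R) : emod (thinDomain ω) q g < ⊤ := by
  refine lt_of_le_of_lt (b := ∫⁻ x in thinDomain ω, ENNReal.ofReal (R ^ P)) ?_ ?_
  · apply lintegral_mono_ae
    filter_upwards [hq, ae_restrict_mem hT] with x hx hxT
    apply ENNReal.ofReal_le_ofReal
    exact (Real.rpow_le_rpow (hg x hxT).1 (hg x hxT).2 hx.1).trans
      (Real.rpow_le_rpow_of_exponent_le hR hx.2)
  · rw [setLIntegral_const]
    exact ENNReal.mul_lt_top ENNReal.ofReal_lt_top hf.lt_top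

/-- The lifted smooth map with its classical gradient is admissible in the rescaled functional. -/
theorem sobAdm_lift {ω : Set (Euc 2)} (hω : IsOpen ω) (hωf : volume ω ≠ ⊤) (hω0 : volume ω ≠ 0)
    {p : Euc 3 → ℝ} (hp : IsPb (thinDomain ω) p) {u b : Euc 2 → Euc 3}
    (hu : ContDiff ℝ (⊤ : ℕ∞) u) (hb : ContDiff ℝ (⊤ : ℕ∞) b) (huc : HasCompactSupport u)
    (hbc : HasCompactSupport b) (huω : tsupport u ⊆ ω) (hbω : tsupport b ⊆ ω) {ε P : ℝ}
    (hε : 0 < ε) (hε1 : ε ≤ 1)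
    (hq : ∀ᵐ x ∂(volume.restrict (thinDomain ω)), 0 ≤ p (scaleX ε x) ∧ p (scaleX ε x) ≤ P) :
    SobAdm ω p ε (lift u b ε) (gradMat (lift u b ε)) := by
  have hl := contDiff_lift hu hb ε
  have hV := volume_thinDomain hω.measurableSet
  have hT := (isOpen_thinDomain hω).measurableSet
  obtain ⟨R, hR, H⟩ := lift_bounds (ω := ω) hu hb huc hbc
  have h1 := one_le_pminus (hV ▸ hω0) hp
  refine ⟨hl.continuous.aestronglyMeasurable, fun i j => ?_, isWeakGrad_gradMat _ hl,
    memLatZero_lift hω hu hb huω hbω ε (by linarith), ?_, ?_⟩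
  · exact ((continuous_apply j).comp ((continuous_apply i).comp
      (continuous_gradMat hl))).measurable.aemeasurable
  · exact emod_lt_top (hV ▸ hωf) hT hR hq fun x hx => ⟨norm_nonneg _, (H x hx ε hε hε1).1⟩
  · exact emod_lt_top (hV ▸ hωf) hT hR hq fun x hx => ⟨mnorm_nonneg _, (H x hx ε hε hε1).2.1⟩

/-- The energies of the lifted maps converge, by dominated convergence: all gradients involved stay
in a fixed ball and the exponents converge uniformly. -/
theorem tendsto_energy_lift {W : Mat 3 3 → ℝ} (hW : Continuous W) (hWnn : ∀ ξ, 0 ≤ W ξ)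
    {ω : Set (Euc 2)} (hω : IsOpen ω) (hωf : volume ω ≠ ⊤)
    {a : Euc 3 → ℝ} (ham : Measurable a) {a₀ : Euc 2 → ℝ} (ha₀m : Measurable a₀)
    {M : ℝ} (ha₀ : ∀ᵐ x ∂(volume.restrict ω), 0 ≤ a₀ x ∧ a₀ x ≤ M)
    (haconv : ScaledTendstoLinf ω a a₀)
    {p : Euc 3 → ℝ} (hpm : Measurable p) {p₀ : Euc 2 → ℝ} (hp₀m : Measurable p₀) {pm P : ℝ}
    (hp1 : 1 < pm) (hp₀ : ∀ᵐ x ∂(volume.restrict ω), pm ≤ p₀ x ∧ p₀ x ≤ P)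
    (hpconv : ScaledTendstoLinf ω p p₀)
    {u b : Euc 2 → Euc 3}
    (hu : ContDiff ℝ (⊤ : ℕ∞) u) (hb : ContDiff ℝ (⊤ : ℕ∞) b) (huc : HasCompactSupport u)
    (hbc : HasCompactSupport b) {εs : ℕ → ℝ} (hpos : ∀ k, 0 < εs k)
    (hlim : Tendsto εs atTop (𝓝 0)) :
    Tendsto (fun k => ∫⁻ x in thinDomain ω, ENNReal.ofReal (a (scaleX (εs k) x) *
      W (scaleCol (εs k) (gradMat (lift u b (εs k)) x)) ^ p (scaleX (εs k) x))) atTop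
      (𝓝 (∫⁻ x in ω, ENNReal.ofReal (a₀ x * W (joinCols (gradMat u x) (b x)) ^ p₀ x))) := by
  have hT := (isOpen_thinDomain hω).measurableSet
  have hmp := measurePreserving_projα hω.measurableSet
  have hgu := continuous_gradMat hu
  have hgb := continuous_gradMat hb
  have hbo : Continuous fun x => (b x).ofLp := (PiLp.continuous_ofLp 2 _).comp hb.continuous
  simp_rw [scaleCol_gradMat_lift hu hb (hpos _)]
  have hF : Measurable fun x : Euc 2 =>
      ENNReal.ofReal (a₀ x * W (joinCols (gradMat u x) (b x)) ^ p₀ x) :=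
    (ha₀m.mul ((hW.comp (Continuous.joinCols hgu hbo)).measurable.pow hp₀m)).ennreal_ofReal
  rw [← hmp.lintegral_comp hF]
  obtain ⟨R, hR, H⟩ := lift_bounds (ω := ω) hu hb huc hbc
  obtain ⟨B, hB, HB⟩ := exists_Wpow_bound hW (P + 1) R
  have ha₀' := hmp.quasiMeasurePreserving.ae ha₀
  have hp₀' := hmp.quasiMeasurePreserving.ae hp₀
  refine tendsto_lintegral_filter_of_dominated_convergence
    (fun _ => ENNReal.ofReal ((M + 1) * B)) ?_ ?_ ?_ ?_
  · refine Eventually.of_forall fun k => ?_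
    have h2 : Continuous fun x : Euc 3 => εs k * x 2 := by fun_prop
    have hc : Continuous fun x : Euc 3 => W (joinCols
        (gradMat u (projα x) + (εs k * x 2) • gradMat b (projα x)) (b (projα x))) := by
      refine hW.comp (Continuous.joinCols ((hgu.comp continuous_projα).add
        (h2.smul (hgb.comp continuous_projα))) (hbo.comp continuous_projα))
    have hsc := (continuous_scaleX (εs k)).measurable
    exact ((ham.comp hsc).mul (hc.measurable.pow (hpm.comp hsc))).ennreal_ofReal
  · filter_upwards [eventually_linf_close haconv hpos hlim one_pos,
      eventually_linf_close hpconv hpos hlim (show 0 < min 1 (pm - 1) by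
        rw [lt_min_iff]; constructor <;> linarith),
      hlim.eventually_le_const one_pos] with k hk1 hk2 hk3
    filter_upwards [hk1, hk2, ha₀', hp₀', ae_restrict_mem hT] with x h1 h2 h3 h4 hx
    apply ENNReal.ofReal_le_ofReal
    have e1 := abs_le.1 h1
    have e2 := abs_le.1 h2
    have q1 : 1 ≤ p (scaleX (εs k) x) := by
      have := min_le_right 1 (pm - 1); linarith [e2.1, h4.1]
    have q2 : p (scaleX (εs k) x) ≤ P + 1 := by
      have := min_le_left 1 (pm - 1); linarith [e2.2, h4.2]
    have hb' := HB _ q2 _ (H x hx _ (hpos k) hk3).2.2.1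
    rw [max_eq_left q1] at hb'
    exact (mul_le_mul_of_nonneg_right (by linarith [e1.2, h3.2]) (Real.rpow_nonneg (hWnn _) _)).trans
      (mul_le_mul_of_nonneg_left hb' (by linarith [h3.1, h3.2]))
  · rw [setLIntegral_const, volume_thinDomain hω.measurableSet]
    exact ENNReal.mul_ne_top ENNReal.ofReal_ne_top hωf
  · filter_upwards [ae_tendsto_linf haconv hpos hlim, ae_tendsto_linf hpconv hpos hlim, hp₀']
      with x h1 h2 h3
    refine ENNReal.tendsto_ofReal (h1.mul (Tendsto.rpow ?_ h2 (Or.inr (by linarith [h3.1]))))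
    have hc : Continuous fun t : ℝ => W (joinCols
        (gradMat u (projα x) + (t * x 2) • gradMat b (projα x)) (b (projα x))) :=
      hW.comp (Continuous.joinCols (by fun_prop) continuous_const)
    have := (hc.tendsto 0).comp hlim
    simpa [Function.comp_def] using this

theorem tendsto_lift_L1 {ω : Set (Euc 2)} (hω : IsOpen ω) (hωf : volume ω ≠ ⊤)
    {u b : Euc 2 → Euc 3} (hu : ContDiff ℝ (⊤ : ℕ∞) u) (hb : ContDiff ℝ (⊤ : ℕ∞) b)
    (huc : HasCompactSupport u) (hbc : HasCompactSupport b) {εs : ℕ → ℝ} (hpos : ∀ k, 0 < εs k)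
    (hlim : Tendsto εs atTop (𝓝 0)) :
    Tendsto (fun k => ∫⁻ x in thinDomain ω, ‖lift u b (εs k) x - u (projα x)‖ₑ) atTop (𝓝 0) := by
  obtain ⟨R, hR, H⟩ := lift_bounds (ω := ω) hu hb huc hbc
  have hT := (isOpen_thinDomain hω).measurableSet
  have h0 : Tendsto (fun k => ENNReal.ofReal (εs k * R) * volume ω) atTop (𝓝 0) := by
    have h1 : Tendsto (fun k => ENNReal.ofReal (εs k * R)) atTop (𝓝 0) := by
      have := ENNReal.tendsto_ofReal (hlim.mul_const R)
      simpa using this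
    have := ENNReal.Tendsto.mul_const (b := volume ω) h1 (Or.inr hωf)
    simpa using this
  refine tendsto_of_tendsto_of_tendsto_of_le_of_le' tendsto_const_nhds h0
    (Eventually.of_forall fun _ => zero_le) ?_
  filter_upwards [hlim.eventually_le_const one_pos] with k hk
  rw [← volume_thinDomain hω.measurableSet, ← setLIntegral_const]
  apply lintegral_mono_ae
  filter_upwards [ae_restrict_mem hT] with x hx
  rw [lift, add_sub_cancel_left, ← ofReal_norm, norm_smul, Real.norm_eq_abs, abs_mul,
    abs_of_pos (hpos k)]
  apply ENNReal.ofReal_le_ofReal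
  have h2 : |x 2| ≤ 1 := abs_le.2 ⟨by linarith [hx.2.1], by linarith [hx.2.2]⟩
  have h3 := (H x hx _ (hpos k) hk).2.2.2
  have h4 : εs k * |x 2| ≤ εs k := by nlinarith [hpos k]
  exact mul_le_mul h4 h3 (norm_nonneg _) (hpos k).le

/-! ### Recovery sequences -/

/-- Diagonal selection of a recovery sequence from approximate recovery at every scale `δ`: choose
each term nearly optimal for `max (D w) (F k w - L)`. -/
theorem exists_diagonal {β : Type*} [Nonempty β] (D : β → ℝ≥0∞) (F : ℕ → β → ℝ≥0∞) {L : ℝ≥0∞}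
    (H : ∀ δ : ℝ, 0 < δ → ∀ᶠ k in atTop, ∃ w, D w ≤ ENNReal.ofReal δ ∧
      F k w ≤ L + ENNReal.ofReal δ) :
    ∃ ws : ℕ → β, Tendsto (fun k => D (ws k)) atTop (𝓝 0) ∧
      limsup (fun k => F k (ws k)) atTop ≤ L := by
  set Φ : ℕ → β → ℝ≥0∞ := fun k w => max (D w) (F k w - L) with hΦ
  have hI : Tendsto (fun k => ⨅ w, Φ k w) atTop (𝓝 0) := by
    rw [ENNReal.tendsto_nhds_zero]
    intro ε hε
    obtain ⟨r, hr0, hr⟩ := ENNReal.lt_iff_exists_nnreal_btwn.1 hε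
    have hr0' : (0:ℝ) < r := by exact_mod_cast hr0
    filter_upwards [H r hr0'] with k ⟨w, h1, h2⟩
    rw [ENNReal.ofReal_coe_nnreal] at h1 h2
    exact (iInf_le _ w).trans ((max_le h1 (tsub_le_iff_left.2 h2)).trans hr.le)
  have hsel : ∀ k : ℕ, ∃ w, Φ k w ≤ (⨅ w, Φ k w) + ((k : ℝ≥0∞) + 1)⁻¹ := by
    intro k
    by_cases ht : (⨅ w, Φ k w) = ⊤
    · exact ⟨Classical.arbitrary β, by simp [ht]⟩
    · have : (⨅ w, Φ k w) < (⨅ w, Φ k w) + ((k : ℝ≥0∞) + 1)⁻¹ :=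
        ENNReal.lt_add_right ht (by simp)
      obtain ⟨w, hw⟩ := iInf_lt_iff.1 this
      exact ⟨w, hw.le⟩
  choose ws hws using hsel
  have hinv : Tendsto (fun k : ℕ => ((k : ℝ≥0∞) + 1)⁻¹) atTop (𝓝 0) := by
    have := (tendsto_add_atTop_iff_nat 1).2 ENNReal.tendsto_inv_nat_nhds_zero
    simpa using this
  have hT : Tendsto (fun k => Φ k (ws k)) atTop (𝓝 0) := by
    refine tendsto_of_tendsto_of_tendsto_of_le_of_le tendsto_const_nhds ?_ (fun _ => zero_le) hws
    simpa using hI.add hinv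
  refine ⟨ws, tendsto_of_tendsto_of_tendsto_of_le_of_le tendsto_const_nhds hT (fun _ => zero_le)
    fun k => le_max_left _ _, ?_⟩
  have hT' : Tendsto (fun k => L + Φ k (ws k)) atTop (𝓝 L) := by
    simpa using tendsto_const_nhds.add hT
  rw [← hT'.limsup_eq]
  refine limsup_le_limsup (Eventually.of_forall fun k => ?_)
  exact tsub_le_iff_left.1 (le_max_right (D (ws k)) (F k (ws k) - L))

/-- Approximate recovery: up to an error `3 * δ`, the energy of a planar map in `W^{1,p₀(·)}_0` is
reached by lifted smooth maps for all small thicknesses. -/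
theorem approx_recovery {ω : Set (Euc 2)} (hω : IsOpen ω) (hωf : volume ω ≠ ⊤)
    (hω0 : volume ω ≠ 0) {W : Mat 3 3 → ℝ} (hW : Continuous W) (hWnn : ∀ ξ, 0 ≤ W ξ) {C₂ : ℝ}
    (hC₂ : 1 ≤ C₂) (hWg : ∀ ξ, W ξ ≤ C₂ * (mnorm ξ + 1))
    {a : Euc 3 → ℝ} (ham : Measurable a) {a₀ : Euc 2 → ℝ} (ha₀m : Measurable a₀)
    {M : ℝ} (ha₀ : ∀ᵐ x ∂(volume.restrict ω), 0 ≤ a₀ x ∧ a₀ x ≤ M)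
    (haconv : ScaledTendstoLinf ω a a₀)
    {p : Euc 3 → ℝ} (hp : IsPb (thinDomain ω) p) {p₀ : Euc 2 → ℝ} (hp₀ : IsPbLog ω p₀)
    (hpconv : ScaledTendstoLinf ω p p₀)
    {εs : ℕ → ℝ} (hpos : ∀ k, 0 < εs k) (hlim : Tendsto εs atTop (𝓝 0))
    {v : Euc 2 → Euc 3} {Gv : Euc 2 → Mat 3 2} (hv : MemW1p0Planar ω p₀ v Gv) {L : ℝ≥0∞}
    (hL : L ≠ ⊤) (hE : ∫⁻ x in ω, ENNReal.ofReal (a₀ x * cellZ W (p₀ x) (Gv x)) ≤ L)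
    {δ : ℝ} (hδ : 0 < δ) :
    ∀ᶠ k in atTop, ∃ w : Euc 3 → Euc 3,
      ∫⁻ x in thinDomain ω, ‖w x - v (projα x)‖ₑ ≤ 3 * ENNReal.ofReal δ ∧
      Feps ω p (fun xα y q ξ => a (embed3 xα y) * W ξ ^ q) (εs k) w ≤
        L + 3 * ENNReal.ofReal δ := by
  obtain ⟨⟨hp₀m, pm, P, hpm1, hp₀b⟩, hlog⟩ := hp₀
  have hp₀1 : ∀ᵐ x ∂(volume.restrict ω), 1 ≤ p₀ x ∧ p₀ x ≤ P :=
    hp₀b.mono fun x hx => ⟨hpm1.le.trans hx.1, hx.2⟩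
  have hδ' : 0 < ENNReal.ofReal δ := ENNReal.ofReal_pos.2 hδ
  obtain ⟨u₁, hu₁, hu₁c, hu₁ω, hu₁L, hu₁E⟩ :=
    approx_energy hW hWnn hC₂ hWg hω hωf hp₀m hlog hp₀1 ha₀m ha₀ hv hδ'
  set η : ℝ := δ / ((volume ω).toReal + 1) with hη
  have hV : 0 ≤ (volume ω).toReal := ENNReal.toReal_nonneg
  have hη0 : 0 < η := by positivity
  have hη1 : η ≤ δ := div_le_self hδ.le (by linarith)
  have hη2 : ENNReal.ofReal η * volume ω ≤ ENNReal.ofReal δ := by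
    rw [← ENNReal.ofReal_toReal hωf, ← ENNReal.ofReal_mul hη0.le]
    apply ENNReal.ofReal_le_ofReal
    rw [hη, div_mul_eq_mul_div, div_le_iff₀ (by linarith)]
    nlinarith
  obtain ⟨u, b, hu, hb, huc, hbc, huω, hbω, huu, huE⟩ :=
    core hW hWnn hω hωf hu₁ hu₁c hu₁ω ha₀m hp₀m ha₀ hp₀1 hη0
  have hmp := measurePreserving_projα hω.measurableSet
  have hlimE := tendsto_energy_lift hW hWnn hω hωf ham ha₀m ha₀ haconv hp.1 hp₀m hpm1 hp₀b hpconv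
    hu hb huc hbc hpos hlim
  have hbound : ∫⁻ x in ω, ENNReal.ofReal (a₀ x * W (joinCols (gradMat u x) (b x)) ^ p₀ x) <
      L + 3 * ENNReal.ofReal δ := by
    refine lt_of_le_of_lt (b := L + 2 * ENNReal.ofReal δ) ?_ ?_
    · refine huE.trans ((add_le_add (hu₁E.trans (add_le_add hE le_rfl))
        (ENNReal.ofReal_le_ofReal hη1)).trans (le_of_eq (by ring)))
    · refine (ENNReal.add_lt_add_iff_left hL).2 ?_
      exact (ENNReal.mul_lt_mul_iff_left hδ'.ne' ENNReal.ofReal_ne_top).2 (by norm_num)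
  have hp₀' := hmp.quasiMeasurePreserving.ae hp₀1
  filter_upwards [(tendsto_lift_L1 hω hωf hu hb huc hbc hpos hlim).eventually_le_const hδ',
    hlimE.eventually_le_const hbound, hlim.eventually_le_const one_pos,
    eventually_linf_close hpconv hpos hlim one_pos] with k h1 h2 h3 h4
  refine ⟨lift u b (εs k), ?_, ?_⟩
  · have e2 : ∫⁻ x in thinDomain ω, ‖u (projα x) - u₁ (projα x)‖ₑ ≤ ENNReal.ofReal δ := by
      refine le_trans ?_ hη2
      rw [← volume_thinDomain hω.measurableSet, ← setLIntegral_const]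
      refine lintegral_mono fun x => ?_
      rw [← ofReal_norm]
      exact ENNReal.ofReal_le_ofReal (huu _)
    have e3 : ∫⁻ x in thinDomain ω, ‖u₁ (projα x) - v (projα x)‖ₑ ≤ ENNReal.ofReal δ := by
      refine le_trans (le_of_eq ?_) hu₁L
      have hm : AEMeasurable (fun x => ‖u₁ x - v x‖ₑ) (volume.restrict ω) :=
        (hu₁.continuous.aestronglyMeasurable.sub hv.1.1).enorm
      rw [← hmp.map_eq] at hm ⊢
      exact (lintegral_map' hm hmp.measurable.aemeasurable).symm
    have c1 : Measurable fun x => ‖lift u b (εs k) x - u (projα x)‖ₑ :=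
      ((contDiff_lift hu hb _).continuous.sub (hu.continuous.comp continuous_projα)).enorm.measurable
    have c2 : Measurable fun x : Euc 3 => ‖u (projα x) - u₁ (projα x)‖ₑ :=
      ((hu.continuous.comp continuous_projα).sub
        (hu₁.continuous.comp continuous_projα)).enorm.measurable
    calc ∫⁻ x in thinDomain ω, ‖lift u b (εs k) x - v (projα x)‖ₑ
        ≤ ∫⁻ x in thinDomain ω, (‖lift u b (εs k) x - u (projα x)‖ₑ +
          (‖u (projα x) - u₁ (projα x)‖ₑ + ‖u₁ (projα x) - v (projα x)‖ₑ)) := by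
          refine lintegral_mono fun x => ?_
          rw [show lift u b (εs k) x - v (projα x) = (lift u b (εs k) x - u (projα x)) +
            ((u (projα x) - u₁ (projα x)) + (u₁ (projα x) - v (projα x))) by abel]
          exact (enorm_add_le _ _).trans (add_le_add le_rfl (enorm_add_le _ _))
      _ ≤ ENNReal.ofReal δ + (ENNReal.ofReal δ + ENNReal.ofReal δ) := by
          rw [lintegral_add_left c1, lintegral_add_left c2]
          exact add_le_add h1 (add_le_add e2 e3)
      _ = 3 * ENNReal.ofReal δ := by ring
  · have hadm : SobAdm ω p (εs k) (lift u b (εs k)) (gradMat (lift u b (εs k))) := by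
      refine sobAdm_lift hω hωf hω0 hp hu hb huc hbc huω hbω (hpos k) h3 (P := P + 1) ?_
      filter_upwards [h4, hp₀'] with x e1 e2
      have := abs_le.1 e1
      exact ⟨by linarith [e2.1], by linarith [e2.2]⟩
    refine (iInf₂_le _ hadm).trans (le_trans (le_of_eq ?_) h2)
    simp only [embed3_projα]

theorem exists_of_limFun_lt {ω : Set (Euc 2)} {q : Euc 2 → ℝ} {g : Euc 2 → Mat 3 2 → ℝ}
    {u : Euc 3 → Euc 3} {L : ℝ≥0∞} (h : limFun ω q g u < L) :
    ∃ v Gv, MemW1p0Planar ω q v Gv ∧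
      (∀ᵐ x ∂(volume.restrict (thinDomain ω)), u x = v (projα x)) ∧
      ∫⁻ x in ω, ENNReal.ofReal (g x (Gv x)) < L := by
  simp only [limFun, iInf_lt_iff] at h
  obtain ⟨v, Gv, ⟨h1, h2⟩, h3⟩ := h
  exact ⟨v, Gv, h1, h2, h3⟩

/-- Proposition `ubqcxdimredp`: `Γ(L¹)`-limsup inequality in the
product-type case: recovery sequences in `L¹(Ω;ℝ³)`. -/
theorem statement18 (ω : Set (Euc 2)) (hω : IsOpen ω) (hωb : Bornology.IsBounded ω)
    (hωc : IsConnected ω) (hωL : HasLipschitzBoundary ω)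
    (W : Mat 3 3 → ℝ) (hWnn : ∀ ξ, 0 ≤ W ξ)
    (hWuc : UniformContinuous W)
    (C₁ C₂ : ℝ) (hC₁ : 0 < C₁) (hC₂ : 1 ≤ C₂)
    (hWgrowth : ∀ ξ : Mat 3 3, C₁ * mnorm ξ - 1 / C₁ ≤ W ξ ∧ W ξ ≤ C₂ * (mnorm ξ + 1))
    (a : Euc 3 → ℝ) (ha : MemLinf (thinDomain ω) a)
    (haInf : ∃ am : ℝ, 0 < am ∧ ∀ x ∈ thinDomain ω, am ≤ a x)
    (a₀ : Euc 2 → ℝ) (ha₀ : MemLinf ω a₀)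
    (haconv : ScaledTendstoLinf ω a a₀)
    (p : Euc 3 → ℝ) (hp : IsPb (thinDomain ω) p)
    (p₀ : Euc 2 → ℝ) (hp₀ : IsPbLog ω p₀)
    (hpconv : ScaledTendstoLinf ω p p₀) :
    ∀ εs : ℕ → ℝ, (∀ k, 0 < εs k) → Tendsto εs atTop (nhds (0:ℝ)) →
      ∀ u : Euc 3 → Euc 3, ∃ us : ℕ → Euc 3 → Euc 3,
        TendstoL1V (thinDomain ω) us u ∧
        Filter.limsup
            (fun k => Feps ω p (fun xα y q ξ => a (embed3 xα y) * W ξ ^ q) (εs k) (us k))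
            atTop ≤
          limFun ω p₀ (fun xα ξα =>
            a₀ xα * qcEnvelope (fun η : Mat 3 2 =>
              (⨅ ξ₃ : Fin 3 → ℝ, W (joinCols η ξ₃)) ^ p₀ xα) ξα) u := by
  intro εs hpos hlim u
  set g : Euc 2 → Mat 3 2 → ℝ := fun xα ξα => a₀ xα * qcEnvelope (fun η : Mat 3 2 =>
    (⨅ ξ₃ : Fin 3 → ℝ, W (joinCols η ξ₃)) ^ p₀ xα) ξα with hg
  by_cases hL : limFun ω p₀ g u = ⊤
  · refine ⟨fun _ => u, ?_, by rw [hL]; exact le_top⟩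
    simp [TendstoL1V]
  have hωf : volume ω ≠ ⊤ := hωb.measure_lt_top.ne
  have hω0 : volume ω ≠ 0 := hω.measure_ne_zero _ hωc.nonempty
  obtain ⟨am, ham, haI⟩ := haInf
  have hlow := ae_lower_bound hω.measurableSet haconv ha₀.1 haI
  obtain ⟨M, hM⟩ := ha₀.2
  have ha₀' : ∀ᵐ x ∂(volume.restrict ω), 0 ≤ a₀ x ∧ a₀ x ≤ M := by
    filter_upwards [hlow, hM] with x h1 h2
    exact ⟨ham.le.trans h1, (le_abs_self _).trans h2⟩
  have hcW := hWuc.continuous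
  suffices H : ∀ δ : ℝ, 0 < δ → ∀ᶠ k in atTop, ∃ w : Euc 3 → Euc 3,
      ∫⁻ x in thinDomain ω, ENNReal.ofReal ‖w x - u x‖ ≤ ENNReal.ofReal δ ∧
      Feps ω p (fun xα y q ξ => a (embed3 xα y) * W ξ ^ q) (εs k) w ≤
        limFun ω p₀ g u + ENNReal.ofReal δ by
    obtain ⟨us, h1, h2⟩ := exists_diagonal
      (fun w : Euc 3 → Euc 3 => ∫⁻ x in thinDomain ω, ENNReal.ofReal ‖w x - u x‖)
      (fun k w => Feps ω p (fun xα y q ξ => a (embed3 xα y) * W ξ ^ q) (εs k) w) H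
    exact ⟨us, h1, h2⟩
  intro δ hδ
  have hδ4 : 0 < δ / 4 := by positivity
  have hlt : limFun ω p₀ g u < limFun ω p₀ g u + ENNReal.ofReal (δ / 4) :=
    ENNReal.lt_add_right hL (ENNReal.ofReal_pos.2 hδ4).ne'
  obtain ⟨v, Gv, hv, huv, h3⟩ := exists_of_limFun_lt hlt
  -- the envelope dominates the cell formula, so the lower density may be used from here on
  have hE : ∫⁻ x in ω, ENNReal.ofReal (a₀ x * cellZ W (p₀ x) (Gv x)) ≤
      limFun ω p₀ g u + ENNReal.ofReal (δ / 4) := by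
    refine le_trans (lintegral_mono_ae ?_) h3.le
    obtain ⟨pm, pM, hpm, hb⟩ := hp₀.1.2
    filter_upwards [ha₀', hb] with x h1 h2
    exact ENNReal.ofReal_le_ofReal (mul_le_mul_of_nonneg_left
      (cellZ_le_qcEnvelope hcW hWnn (hpm.le.trans h2.1) _) h1.1)
  have e4 : ENNReal.ofReal (δ / 4) + 3 * ENNReal.ofReal (δ / 4) = ENNReal.ofReal δ := by
    rw [show ENNReal.ofReal (δ / 4) + 3 * ENNReal.ofReal (δ / 4) =
      ENNReal.ofReal 4 * ENNReal.ofReal (δ / 4) by simp; ring,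
      ← ENNReal.ofReal_mul (by norm_num)]
    congr 1; ring
  filter_upwards [approx_recovery hω hωf hω0 hcW hWnn hC₂ (fun ξ => (hWgrowth ξ).2) ha.1 ha₀.1 ha₀'
    haconv hp hp₀ hpconv hpos hlim hv (ENNReal.add_ne_top.2 ⟨hL, ENNReal.ofReal_ne_top⟩) hE hδ4]
    with k ⟨w, hw1, hw2⟩
  refine ⟨w, ?_, hw2.trans (le_of_eq (by rw [add_assoc, e4]))⟩
  refine le_trans (le_of_eq ?_) (hw1.trans (e4 ▸ le_add_self))
  refine lintegral_congr_ae ?_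
  filter_upwards [huv] with x hx
  rw [hx, ofReal_norm]
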